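/- There is a constant C > 0 such that for every p ∈ (1, 2] and every f ∈ ℓ^p(ℤ), ‖ sup_{N ≥ 2} |ℳ_N f| ‖_{ℓ^p(ℤ)} ≤ C (p−1)^{−4} ‖f‖_{ℓ^p(ℤ)}. -/

import Mathlib

open scoped BigOperators

/-- The set of primes `p ≤ N`. -/
def primesUpTo (N : ℕ) : Finset ℕ := (Finset.range (N + 1)).filter Nat.Prime

/-- `ϑ(N) = Σ_{p ∈ ℙ_N} log p`. -/
noncomputable def theta (N : ℕ) : ℝ := ∑ p ∈ primesUpTo N, Real.log p

/-- The weighted average `ℳ_N f(x) = (1/ϑ(N)) Σ_{p ∈ ℙ_N} f(x + p) log p`. -/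
noncomputable def weightedPrimeAvg (f : ℤ → ℂ) (N : ℕ) (x : ℤ) : ℂ :=
  ((theta N : ℂ))⁻¹ * ∑ p ∈ primesUpTo N, f (x + p) * (Real.log p : ℂ)


namespace PM

open Finset

set_option maxHeartbeats 2000000 in
/-- Garsia type maximal inequality for the shift by `d` on the integers. -/
theorem hl_weak (F : ℤ → ℝ) (hF : ∀ x, 0 ≤ F x) (hfin : F.support.Finite) (d : ℤ) (K0 : ℕ)
    (lam : ℝ) (hl : 0 < lam) (E : Set ℤ)
    (hE : E = {x | ∃ K : ℕ, 1 ≤ K ∧ K ≤ K0 ∧ lam * K < ∑ k ∈ range K, F (x + k * d)}) :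
    E.Finite ∧ lam * E.ncard ≤ ∑' x, F x := by
  classical
  have hU : (⋃ k ∈ range (K0 + 1), (fun y : ℤ => y - (k : ℤ) * d) '' F.support).Finite := by
    apply Set.Finite.biUnion (Finset.finite_toSet _)
    intro k _
    exact hfin.image _
  have key : ∀ x, ∀ K : ℕ, K ≤ K0 → 0 < ∑ k ∈ range K, F (x + k * d) →
      x ∈ (⋃ k ∈ range (K0 + 1), (fun y : ℤ => y - (k : ℤ) * d) '' F.support) := by
    intro x K hK hpos
    obtain ⟨k, hk, hk2⟩ := Finset.exists_ne_zero_of_sum_ne_zero hpos.ne'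
    simp only [Set.mem_iUnion]
    refine ⟨k, ?_, x + k * d, hk2, by ring⟩
    simp only [Finset.mem_range] at hk ⊢
    omega
  have hEfin : E.Finite := by
    apply hU.subset
    intro x hx
    rw [hE] at hx
    obtain ⟨K, h1, h2, h3⟩ := hx
    refine key x K h2 (lt_of_le_of_lt (by positivity) h3)
  refine ⟨hEfin, ?_⟩
  set ind : ℤ → ℝ := fun x => if x ∈ E then lam else 0 with hind
  have hind0 : ∀ x, 0 ≤ ind x := by intro x; simp only [hind]; split_ifs <;> linarith
  have hindle : ∀ x, ind x ≤ lam := by intro x; simp only [hind]; split_ifs <;> linarith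
  set S : ℕ → ℤ → ℝ := fun K x => ∑ k ∈ range K, (F (x + k * d) - ind (x + k * d)) with hS
  set M : ℤ → ℝ := fun x => (range (K0 + 1)).sup' ⟨0, by simp⟩ (fun K => S K x) with hM
  have hMS : ∀ x K, K ≤ K0 → S K x ≤ M x := fun x K hK =>
    Finset.le_sup' (fun K => S K x) (by simp; omega)
  have hM0 : ∀ x, 0 ≤ M x := fun x => by
    have := hMS x 0 (by omega)
    simpa [hS] using this
  have hMfin : M.support.Finite := by
    apply hU.subset
    intro x hx
    have hx' : 0 < M x := lt_of_le_of_ne (hM0 x) (Ne.symm hx)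
    obtain ⟨K, hK, hK2⟩ := Finset.exists_mem_eq_sup' (s := range (K0 + 1)) ⟨0, by simp⟩
      (fun K => S K x)
    have hK3 : M x = S K x := hK2
    refine key x K (by simp at hK; omega) ?_
    calc 0 < S K x := by rw [← hK3]; exact hx'
      _ ≤ _ := by
        apply Finset.sum_le_sum
        intro k _
        linarith [hind0 (x + k * d)]
  have step : ∀ x, M x + ind x ≤ F x + M (x + d) := by
    intro x
    by_cases hxE : x ∈ E
    · have hpos : 0 < M x := by
        have hx := hxE
        rw [hE] at hx
        obtain ⟨K, h1, h2, h3⟩ := hx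
        refine lt_of_lt_of_le ?_ (hMS x K h2)
        simp only [hS, Finset.sum_sub_distrib]
        have : ∑ k ∈ range K, ind (x + k * d) ≤ lam * K := by
          calc _ ≤ ∑ k ∈ range K, lam := Finset.sum_le_sum (fun k _ => hindle _)
            _ = _ := by simp; ring
        linarith
      obtain ⟨K, hK, hK2⟩ := Finset.exists_mem_eq_sup' (s := range (K0 + 1)) ⟨0, by simp⟩
        (fun K => S K x)
      have hK3 : M x = S K x := hK2
      cases K with
      | zero => simp [hS] at hK3; linarith
      | succ K =>
        have h1 : S (K + 1) x = (F x - ind x) + S K (x + d) := by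
          simp only [hS]
          rw [Finset.sum_range_succ']
          simp only [Nat.cast_zero, zero_mul, add_zero]
          rw [add_comm]
          congr 1
          apply Finset.sum_congr rfl
          intro k _
          have : x + ((k + 1 : ℕ) : ℤ) * d = x + d + k * d := by push_cast; ring
          rw [this]
        have h2 := hMS (x + d) K (by simp at hK; omega)
        linarith
    · have h0 : ind x = 0 := by simp [hind, hxE]
      obtain ⟨K, hK, hK2⟩ := Finset.exists_mem_eq_sup' (s := range (K0 + 1)) ⟨0, by simp⟩
        (fun K => S K x)
      have hK3 : M x = S K x := hK2
      cases K with
      | zero =>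
        simp [hS] at hK3
        linarith [hF x, hM0 (x + d)]
      | succ K =>
        have h1 : S (K + 1) x = (F x - ind x) + S K (x + d) := by
          simp only [hS]
          rw [Finset.sum_range_succ']
          simp only [Nat.cast_zero, zero_mul, add_zero]
          rw [add_comm]
          congr 1
          apply Finset.sum_congr rfl
          intro k _
          have : x + ((k + 1 : ℕ) : ℤ) * d = x + d + k * d := by push_cast; ring
          rw [this]
        have h2 := hMS (x + d) K (by simp at hK; omega)
        linarith
  have sM : Summable M := summable_of_hasFiniteSupport hMfin
  have sF : Summable F := summable_of_hasFiniteSupport hfin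
  have hindfin : ind.support.Finite := by
    apply hEfin.subset
    intro x hx
    by_contra h
    exact hx (by simp [hind, h])
  have sI : Summable ind := summable_of_hasFiniteSupport hindfin
  have sM2 : Summable (fun x => M (x + d)) := (Equiv.addRight d).summable_iff.mpr sM
  have e1 : ∑' x, M (x + d) = ∑' x, M x := (Equiv.addRight d).tsum_eq M
  have hsum := (sM.add sI).tsum_le_tsum step (sF.add sM2)
  rw [sM.tsum_add sI, sF.tsum_add sM2, e1] at hsum
  have e2 : ∑' x, ind x = lam * E.ncard := by
    rw [tsum_eq_sum (s := hEfin.toFinset)]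
    · rw [Set.ncard_eq_toFinset_card E hEfin, ← nsmul_eq_mul', ← Finset.sum_const]
      apply Finset.sum_congr rfl
      intro x hx
      simp at hx
      simp [hind, hx]
    · intro x hx
      simp at hx
      simp [hind, hx]
  linarith

end PM

namespace PM

open Finset MeasureTheory

/-- The `ℓ^p` norm of a nonnegative function on the integers. -/
noncomputable def nrm (p : ℝ) (F : ℤ → ENNReal) : ENNReal := (∑' x, F x ^ p) ^ (1 / p)

lemma lint_rpow (p : ℝ) (hp : 1 < p) (a : ℝ) (ha : 0 ≤ a) :
    ∫⁻ t in Set.Ioc 0 a, ENNReal.ofReal (t ^ (p - 2)) = ENNReal.ofReal (a ^ (p - 1) / (p - 1)) := by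
  have hi : IntervalIntegrable (fun t : ℝ => t ^ (p - 2)) volume 0 a :=
    intervalIntegral.intervalIntegrable_rpow' (by linarith)
  rw [← ofReal_integral_eq_lintegral_ofReal]
  · rw [← intervalIntegral.integral_of_le ha, integral_rpow (Or.inl (by linarith))]
    rw [show p - 2 + 1 = p - 1 by ring, Real.zero_rpow (by linarith), sub_zero]
  · exact (intervalIntegrable_iff_integrableOn_Ioc_of_le ha).1 hi
  · filter_upwards [ae_restrict_mem measurableSet_Ioc] with t ht
    exact Real.rpow_nonneg ht.1.le _

theorem hl_pow (p : ℝ) (hp : 1 < p) (F : ℤ → ℝ) (hF : ∀ x, 0 ≤ F x)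
    (hfin : F.support.Finite) (d : ℤ) (K0 : ℕ) (M : ℤ → ℝ) (hM0 : ∀ x, 0 ≤ M x)
    (hM : ∀ x t, 0 < t → t < M x → ∃ K : ℕ, 1 ≤ K ∧ K ≤ K0 ∧ t * K < ∑ k ∈ range K, F (x + k * d)) :
    ∑' x, ENNReal.ofReal (M x ^ p) ≤
      ENNReal.ofReal (p * 2 ^ p / (p - 1)) * ∑' x, ENNReal.ofReal (F x ^ p) := by
  have h1 : ∑' x, ENNReal.ofReal (M x ^ p) = ∫⁻ x, ENNReal.ofReal (M x ^ p) ∂Measure.count := by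
    rw [lintegral_count]
  rw [h1, lintegral_rpow_eq_lintegral_meas_lt_mul _ (Filter.Eventually.of_forall hM0)
    (measurable_of_countable M).aemeasurable (by linarith)]
  have h2 : ∀ t ∈ Set.Ioi (0:ℝ), Measure.count {a : ℤ | t < M a} * ENNReal.ofReal (t ^ (p - 1)) ≤
      ∑' x, ENNReal.ofReal (2 * F x) *
        (Set.Ioc 0 (2 * F x)).indicator (fun t => ENNReal.ofReal (t ^ (p - 2))) t := by
    intro t ht
    have ht0 : (0:ℝ) < t := ht
    set G : ℤ → ℝ := fun x => max (F x - t / 2) 0 with hG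
    have hGF : ∀ x, G x ≤ F x := fun x => max_le (by linarith) (hF x)
    have hGs : G.support.Finite := by
      apply hfin.subset
      intro x hx hx0
      apply hx
      simp only [hG, hx0]
      apply max_eq_right; linarith
    obtain ⟨hEf, hEc⟩ := hl_weak G (fun x => le_max_right _ _) hGs d K0 (t / 2) (by linarith) _ rfl
    set E : Set ℤ := {x | ∃ K : ℕ, 1 ≤ K ∧ K ≤ K0 ∧ (t / 2) * K < ∑ k ∈ range K, G (x + k * d)}
      with hE
    have hsub : {a : ℤ | t < M a} ⊆ E := by
      intro x hx
      obtain ⟨K, hK1, hK2, hK3⟩ := hM x t ht0 hx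
      refine ⟨K, hK1, hK2, ?_⟩
      have : ∑ k ∈ range K, (F (x + k * d) - t / 2) ≤ ∑ k ∈ range K, G (x + k * d) :=
        Finset.sum_le_sum (fun k _ => le_max_left _ _)
      rw [Finset.sum_sub_distrib] at this
      simp at this
      linarith
    have hsumG : Summable G := summable_of_hasFiniteSupport hGs
    have e1 : Measure.count {a : ℤ | t < M a} ≤ ENNReal.ofReal (2 / t * ∑' x, G x) := by
      calc Measure.count {a : ℤ | t < M a} ≤ Measure.count E := measure_mono hsub
        _ = ENNReal.ofReal (E.ncard) := by
          rw [Measure.count_apply_finite E hEf, Set.ncard_eq_toFinset_card E hEf]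
          simp
        _ ≤ _ := by
          apply ENNReal.ofReal_le_ofReal
          rw [div_mul_eq_mul_div, le_div_iff₀ ht0]
          linarith
    calc _ ≤ ENNReal.ofReal (2 / t * ∑' x, G x) * ENNReal.ofReal (t ^ (p - 1)) := by gcongr
      _ = ENNReal.ofReal (∑' x, (2 / t * t ^ (p - 1)) * G x) := by
        rw [← ENNReal.ofReal_mul (by have : 0 ≤ ∑' x, G x := tsum_nonneg (fun x => le_max_right _ _)
                                     positivity), tsum_mul_left]
        congr 1; ring
      _ = ∑' x, ENNReal.ofReal ((2 / t * t ^ (p - 1)) * G x) := by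
        rw [ENNReal.ofReal_tsum_of_nonneg]
        · intro x
          have : 0 ≤ G x := le_max_right _ _
          positivity
        · exact hsumG.mul_left _
      _ ≤ _ := by
        apply ENNReal.tsum_le_tsum
        intro x
        by_cases hx : t ≤ 2 * F x
        · rw [Set.indicator_of_mem (show t ∈ Set.Ioc 0 (2 * F x) from ⟨ht0, hx⟩),
            ← ENNReal.ofReal_mul (by linarith [hF x])]
          apply ENNReal.ofReal_le_ofReal
          have : t ^ (p - 1) = t * t ^ (p - 2) := by
            rw [← Real.rpow_one_add' ht0.le (by linarith)]; congr 1; ring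
          rw [this]
          have h3 : 2 / t * (t * t ^ (p - 2)) = 2 * t ^ (p - 2) := by field_simp
          rw [h3]
          have : 0 ≤ t ^ (p - 2) := by positivity
          nlinarith [hGF x]
        · have : G x = 0 := by
            simp only [hG]; apply max_eq_right; linarith
          simp [this]
  calc _ ≤ ENNReal.ofReal p * ∫⁻ t in Set.Ioi 0, ∑' x, ENNReal.ofReal (2 * F x) *
        (Set.Ioc 0 (2 * F x)).indicator (fun t => ENNReal.ofReal (t ^ (p - 2))) t := by
        gcongr 1
        exact setLIntegral_mono' measurableSet_Ioi h2
    _ = ENNReal.ofReal p * ∑' x, ENNReal.ofReal (2 * F x) * 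
          ENNReal.ofReal ((2 * F x) ^ (p - 1) / (p - 1)) := by
        congr 1
        rw [lintegral_tsum]
        · congr 1; ext x
          rw [lintegral_const_mul]
          · congr 1
            rw [← lint_rpow p hp (2 * F x) (by linarith [hF x])]
            rw [lintegral_indicator measurableSet_Ioc, Measure.restrict_restrict measurableSet_Ioc]
            congr 2
            ext y; simp
          · apply Measurable.indicator _ measurableSet_Ioc
            fun_prop
        · intro x
          apply Measurable.aemeasurable
          apply Measurable.const_mul
          apply Measurable.indicator _ measurableSet_Ioc
          fun_prop
    _ = _ := by
        rw [← ENNReal.tsum_mul_left, ← ENNReal.tsum_mul_left]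
        congr 1; ext x
        have h0 := hF x
        have hp1 : 0 < p - 1 := by linarith
        rw [← ENNReal.ofReal_mul (by linarith), ← ENNReal.ofReal_mul (by linarith),
          ← ENNReal.ofReal_mul (by positivity)]
        congr 1
        have : (2 * F x) * (2 * F x) ^ (p - 1) = 2 ^ p * F x ^ p := by
          rw [← Real.rpow_one_add' (by linarith) (by linarith), ← Real.mul_rpow (by norm_num) h0]
          congr 1; ring
        calc p * (2 * F x * ((2 * F x) ^ (p - 1) / (p - 1)))
            = p * (2 * F x * (2 * F x) ^ (p - 1)) / (p - 1) := by ring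
          _ = _ := by rw [this]; ring

/-- The Hardy-Littlewood maximal theorem for the shift by `d`. -/
theorem hl (p : ℝ) (hp : 1 < p) (hp2 : p ≤ 2) (F : ℤ → ℝ) (hF : ∀ x, 0 ≤ F x)
    (hfin : F.support.Finite) (d : ℤ) (K0 : ℕ) :
    nrm p (fun x => ⨆ K ∈ range K0, ENNReal.ofReal ((∑ k ∈ range (K + 1), F (x + k * d)) / (K + 1)))
      ≤ ENNReal.ofReal (8 / (p - 1)) * nrm p (fun x => ENNReal.ofReal (F x)) := by
  have hp1 : 0 < p - 1 := by linarith
  set M : ℤ → ENNReal := fun x => ⨆ K ∈ range K0,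
    ENNReal.ofReal ((∑ k ∈ range (K + 1), F (x + k * d)) / (K + 1)) with hM
  have hMtop : ∀ x, M x < ⊤ := by
    intro x
    simp only [hM]
    rw [← Finset.sup_eq_iSup, Finset.sup_lt_iff (by simp)]
    intro K _
    exact ENNReal.ofReal_lt_top
  have hpow := hl_pow p hp F hF hfin d K0 (fun x => (M x).toReal) (fun x => ENNReal.toReal_nonneg) (by
    intro x t ht htM
    have h1 : ENNReal.ofReal t < M x := by
      rw [ENNReal.ofReal_lt_iff_lt_toReal ht.le (hMtop x).ne]; exact htM
    simp only [hM, lt_iSup_iff] at h1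
    obtain ⟨K, hK, hK2⟩ := h1
    refine ⟨K + 1, by omega, by simp at hK; omega, ?_⟩
    rw [ENNReal.ofReal_lt_ofReal_iff_of_nonneg ht.le, lt_div_iff₀ (by positivity)] at hK2
    push_cast; exact hK2)
  have e1 : ∀ x, ENNReal.ofReal ((M x).toReal ^ p) = M x ^ p := by
    intro x
    rw [← ENNReal.ofReal_rpow_of_nonneg ENNReal.toReal_nonneg (by linarith),
      ENNReal.ofReal_toReal (hMtop x).ne]
  have e2 : ∀ x, ENNReal.ofReal (F x ^ p) = ENNReal.ofReal (F x) ^ p := by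
    intro x
    rw [← ENNReal.ofReal_rpow_of_nonneg (hF x) (by linarith)]
  simp only [e1, e2] at hpow
  unfold nrm
  calc (∑' x, M x ^ p) ^ (1 / p) ≤ (ENNReal.ofReal (8 / (p - 1)) * ∑' x, ENNReal.ofReal (F x) ^ p) ^ (1 / p) := by
        apply ENNReal.rpow_le_rpow _ (by positivity)
        refine hpow.trans ?_
        gcongr
        have : (2:ℝ) ^ p ≤ 2 ^ (2:ℝ) := Real.rpow_le_rpow_of_exponent_le (by norm_num) hp2
        norm_num at this
        nlinarith [Real.rpow_pos_of_pos (by norm_num : (0:ℝ) < 2) p]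
    _ = ENNReal.ofReal (8 / (p - 1)) ^ (1 / p) * (∑' x, ENNReal.ofReal (F x) ^ p) ^ (1 / p) := by
        rw [ENNReal.mul_rpow_of_nonneg _ _ (by positivity)]
    _ ≤ _ := by
        gcongr
        have h8 : (1:ENNReal) ≤ ENNReal.ofReal (8 / (p - 1)) := by
          rw [ENNReal.one_le_ofReal, le_div_iff₀ hp1]; linarith
        calc _ ≤ ENNReal.ofReal (8 / (p - 1)) ^ (1:ℝ) := by
              apply ENNReal.rpow_le_rpow_of_exponent_le h8
              rw [div_le_one (by linarith)]; linarith
          _ = _ := by simp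

end PM

namespace PM
open Finset

/-- `tw w s` is the phase of `w` times `|w|^s`. -/
noncomputable def tw (w s : ℂ) : ℂ := w / ‖w‖ * Complex.exp (s * (Real.log ‖w‖ : ℝ))

lemma norm_tw (w s : ℂ) (r p : ℝ) (hr : 0 < r) (hp : 0 < p) (h : s.re * r = p) :
    ‖tw w s‖ ^ r = ‖w‖ ^ p := by
  unfold tw
  by_cases hw : w = 0
  · simp [hw, Real.zero_rpow hr.ne', Real.zero_rpow hp.ne']
  · have hn : 0 < ‖w‖ := norm_pos_iff.2 hw
    have h1 : ‖w / (‖w‖ : ℂ)‖ = 1 := by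
      rw [norm_div, Complex.norm_real, norm_norm, div_self hn.ne']
    rw [norm_mul, h1, one_mul, Complex.norm_exp, Complex.re_mul_ofReal, ← Real.exp_mul, ← h,
      Real.rpow_def_of_pos hn]
    congr 1; ring

lemma norm_tw_le (w s : ℂ) (A : ℝ) (h : |s.re| ≤ A) :
    ‖tw w s‖ ≤ Real.exp (A * |Real.log ‖w‖|) := by
  unfold tw
  by_cases hw : w = 0
  · simp [hw]
  · have hn : 0 < ‖w‖ := norm_pos_iff.2 hw
    have h1 : ‖w / (‖w‖ : ℂ)‖ = 1 := by
      rw [norm_div, Complex.norm_real, norm_norm, div_self hn.ne']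
    rw [norm_mul, h1, one_mul, Complex.norm_exp, Complex.re_mul_ofReal]
    apply Real.exp_le_exp.2
    calc _ ≤ |s.re * Real.log ‖w‖| := le_abs_self _
      _ = |s.re| * |Real.log ‖w‖| := abs_mul _ _
      _ ≤ _ := by gcongr

lemma tw_one (w : ℂ) : tw w 1 = w := by
  unfold tw
  by_cases hw : w = 0
  · simp [hw]
  · have hn : 0 < ‖w‖ := norm_pos_iff.2 hw
    rw [one_mul, ← Complex.ofReal_exp, Real.exp_log hn]
    have : (‖w‖ : ℂ) ≠ 0 := by exact_mod_cast hn.ne'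
    field_simp

lemma mul_conj_tw (w : ℂ) (p : ℝ) (hp : 0 < p) :
    w * tw (starRingEnd ℂ w) ((p - 1 : ℝ) : ℂ) = ((‖w‖ ^ p : ℝ) : ℂ) := by
  unfold tw
  by_cases hw : w = 0
  · simp [hw, Real.zero_rpow hp.ne']
  · have hn : 0 < ‖w‖ := norm_pos_iff.2 hw
    have h0 : (‖w‖ : ℂ) ≠ 0 := by exact_mod_cast hn.ne'
    rw [RCLike.norm_conj, ← Complex.ofReal_mul, ← Complex.ofReal_exp]
    have h2 : Real.exp ((p - 1) * Real.log ‖w‖) = ‖w‖ ^ p / ‖w‖ := by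
      rw [mul_comm, ← Real.rpow_def_of_pos hn, Real.rpow_sub hn, Real.rpow_one]
    rw [h2]
    have h3 : w * (starRingEnd ℂ) w = (‖w‖ : ℂ) ^ 2 := by
      rw [Complex.mul_conj, Complex.normSq_eq_norm_sq]; push_cast; ring
    calc _ = (w * (starRingEnd ℂ) w) / ‖w‖ * ((‖w‖ ^ p / ‖w‖ : ℝ) : ℂ) := by ring
      _ = _ := by rw [h3]; push_cast; field_simp

lemma rt_edge {X Y : Finset ℤ} (a : ℤ → ℤ → ℂ) (r B : ℝ) (hr : 1 < r) (hB : 0 ≤ B)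
    (h : ∀ f : ℤ → ℂ, (∑ x ∈ Y, ‖∑ y ∈ X, a x y * f y‖ ^ r) ^ (1 / r) ≤
      B * (∑ y ∈ X, ‖f y‖ ^ r) ^ (1 / r)) (f g : ℤ → ℂ) (Φ U : ℝ)
    (hΦ : ∑ y ∈ X, ‖f y‖ ^ r = Φ) (hU : ∑ x ∈ Y, ‖g x‖ ^ (r / (r - 1)) = U) :
    ‖∑ x ∈ Y, (∑ y ∈ X, a x y * f y) * g x‖ ≤ B * Φ ^ (1 / r) * U ^ (1 - 1 / r) := by
  have hc : r.HolderConjugate (r / (r - 1)) := by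
    rw [Real.holderConjugate_iff_eq_conjExponent hr]
  have h0 := Real.inner_le_Lp_mul_Lq Y (fun x => ‖∑ y ∈ X, a x y * f y‖) (fun x => ‖g x‖) hc
  simp only [abs_norm] at h0
  have e : 1 / (r / (r - 1)) = 1 - 1 / r := by
    have : r ≠ 0 := by linarith
    field_simp
  rw [e, hU] at h0
  have hU0 : 0 ≤ U := by rw [← hU]; positivity
  calc _ ≤ ∑ x ∈ Y, ‖∑ y ∈ X, a x y * f y‖ * ‖g x‖ := by
        refine (norm_sum_le _ _).trans (le_of_eq ?_)
        simp only [norm_mul]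
    _ ≤ _ := h0
    _ ≤ _ := by
        have := h f
        rw [hΦ] at this
        gcongr

theorem rt {X Y : Finset ℤ} (a : ℤ → ℤ → ℂ) (p0 p1 p θ B0 B1 : ℝ) (hp0 : 1 < p0) (hp1 : 1 < p1)
    (hp : 1 < p) (hθ0 : 0 ≤ θ) (hθ1 : θ ≤ 1) (hpθ : 1 / p = (1 - θ) / p0 + θ / p1)
    (hB0 : 0 ≤ B0) (hB1 : 0 ≤ B1)
    (h0 : ∀ f : ℤ → ℂ, (∑ x ∈ Y, ‖∑ y ∈ X, a x y * f y‖ ^ p0) ^ (1 / p0) ≤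
      B0 * (∑ y ∈ X, ‖f y‖ ^ p0) ^ (1 / p0))
    (h1 : ∀ f : ℤ → ℂ, (∑ x ∈ Y, ‖∑ y ∈ X, a x y * f y‖ ^ p1) ^ (1 / p1) ≤
      B1 * (∑ y ∈ X, ‖f y‖ ^ p1) ^ (1 / p1)) (f : ℤ → ℂ) :
    (∑ x ∈ Y, ‖∑ y ∈ X, a x y * f y‖ ^ p) ^ (1 / p) ≤
      B0 ^ (1 - θ) * B1 ^ θ * (∑ y ∈ X, ‖f y‖ ^ p) ^ (1 / p) := by
  set u : ℤ → ℂ := fun x => ∑ y ∈ X, a x y * f y with hu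
  set Φ : ℝ := ∑ y ∈ X, ‖f y‖ ^ p with hΦ
  set U : ℝ := ∑ x ∈ Y, ‖u x‖ ^ p with hU
  have hΦ0 : 0 ≤ Φ := by positivity
  have hU0 : 0 ≤ U := by positivity
  have p00 : 0 < p0 := by linarith
  have p10 : 0 < p1 := by linarith
  have pp : 0 < p := by linarith
  set al : ℂ → ℂ := fun z => (1 - z) * ((1 / p0 : ℝ) : ℂ) + z * ((1 / p1 : ℝ) : ℂ) with hal
  have alre : ∀ z, (al z).re = (1 - z.re) * (1 / p0) + z.re * (1 / p1) := by
    intro z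
    simp only [hal, Complex.add_re, Complex.re_mul_ofReal, Complex.sub_re, Complex.one_re]
  set F : ℂ → ℂ := fun z => ∑ x ∈ Y, (∑ y ∈ X, a x y * tw (f y) (p * al z)) *
    tw (starRingEnd ℂ (u x)) (p * (1 - al z)) with hF
  have hdiff : Differentiable ℂ F := by
    simp only [hF, tw, hal]
    fun_prop
  have key := Complex.HadamardThreeLines.norm_le_interp_of_mem_verticalClosedStrip₀₁' F
    (z := (θ : ℂ)) (a := B0 * Φ ^ (1 / p0) * U ^ (1 - 1 / p0))
    (b := B1 * Φ ^ (1 / p1) * U ^ (1 - 1 / p1))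
    (by simp [Complex.HadamardThreeLines.verticalClosedStrip, hθ0, hθ1])
    hdiff.diffContOnCl
    (by
      refine ⟨∑ x ∈ Y, (∑ y ∈ X, ‖a x y‖ * Real.exp ((p * 2) * |Real.log ‖f y‖|)) *
        Real.exp ((p * 3) * |Real.log ‖starRingEnd ℂ (u x)‖|), ?_⟩
      rintro _ ⟨z, hz, rfl⟩
      simp only [Complex.HadamardThreeLines.verticalClosedStrip, Set.mem_preimage, Set.mem_Icc] at hz
      have b0 : 1 / p0 ≤ 1 := by rw [div_le_one p00]; linarith
      have b1 : 1 / p1 ≤ 1 := by rw [div_le_one p10]; linarith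
      have c0 : 0 < 1 / p0 := by positivity
      have c1 : 0 < 1 / p1 := by positivity
      have r0 : 0 ≤ (al z).re := by
        rw [alre]
        have := mul_nonneg (sub_nonneg.2 hz.2) c0.le
        have := mul_nonneg hz.1 c1.le
        linarith
      have r1 : (al z).re ≤ 2 := by
        rw [alre]
        have := mul_le_mul (show 1 - z.re ≤ 1 by linarith) b0 c0.le (by norm_num)
        have := mul_le_mul hz.2 b1 c1.le (by norm_num)
        linarith
      simp only [Function.comp, hF]
      refine (norm_sum_le _ _).trans (Finset.sum_le_sum fun x _ => ?_)
      rw [norm_mul]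
      gcongr
      · refine (norm_sum_le _ _).trans (Finset.sum_le_sum fun y _ => ?_)
        rw [norm_mul]
        gcongr
        apply norm_tw_le
        rw [Complex.re_ofReal_mul, abs_mul, abs_of_pos pp, abs_of_nonneg r0]
        gcongr
      · apply norm_tw_le
        rw [Complex.re_ofReal_mul, abs_mul, abs_of_pos pp, Complex.sub_re, Complex.one_re]
        gcongr
        rw [abs_le]; constructor <;> linarith)
    (by
      intro z hz
      have hz' : z.re = 0 := hz
      have hre : (al z).re = 1 / p0 := by rw [alre, hz']; ring
      apply rt_edge a p0 B0 hp0 hB0 h0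
      · apply Finset.sum_congr rfl; intro y _
        apply norm_tw _ _ _ _ p00 pp
        rw [Complex.re_ofReal_mul, hre]; field_simp
      · apply Finset.sum_congr rfl; intro x _
        have : p0 - 1 ≠ 0 := by linarith
        have : 0 < p0 - 1 := by linarith
        rw [← RCLike.norm_conj (u x)]
        apply norm_tw _ _ _ _ (by positivity) pp
        rw [Complex.re_ofReal_mul, Complex.sub_re, hre, Complex.one_re]; field_simp)
    (by
      intro z hz
      have hz' : z.re = 1 := hz
      have hre : (al z).re = 1 / p1 := by rw [alre, hz']; ring
      apply rt_edge a p1 B1 hp1 hB1 h1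
      · apply Finset.sum_congr rfl; intro y _
        apply norm_tw _ _ _ _ p10 pp
        rw [Complex.re_ofReal_mul, hre]; field_simp
      · apply Finset.sum_congr rfl; intro x _
        have : p1 - 1 ≠ 0 := by linarith
        have : 0 < p1 - 1 := by linarith
        rw [← RCLike.norm_conj (u x)]
        apply norm_tw _ _ _ _ (by positivity) pp
        rw [Complex.re_ofReal_mul, Complex.sub_re, hre, Complex.one_re]; field_simp)
  have hF1 : F θ = (U : ℂ) := by
    have e1 : (p : ℂ) * al θ = 1 := by
      have : al θ = ((1 / p : ℝ) : ℂ) := by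
        rw [hpθ]; simp only [hal]; push_cast; ring
      rw [this, ← Complex.ofReal_mul]
      rw [mul_one_div_cancel pp.ne']; simp
    have e2 : (p : ℂ) * (1 - al θ) = ((p - 1 : ℝ) : ℂ) := by
      rw [mul_sub, e1]; push_cast; ring
    simp only [hF, e1, e2, tw_one, hU]
    push_cast
    apply Finset.sum_congr rfl
    intro x _
    have := mul_conj_tw (u x) p pp
    push_cast at this
    exact this
  rw [hF1, Complex.norm_real, Real.norm_of_nonneg hU0, Complex.ofReal_re] at key
  by_cases hUz : U = 0
  · rw [hUz, Real.zero_rpow (by positivity)]; positivity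
  by_cases hΦz : Φ = 0
  · have hf0 : ∀ y ∈ X, f y = 0 := by
      intro y hy
      have := (Finset.sum_eq_zero_iff_of_nonneg (fun y _ => by positivity)).1 hΦz y hy
      rw [Real.rpow_eq_zero (norm_nonneg _) pp.ne'] at this
      simpa using this
    exfalso; apply hUz
    rw [hU]
    apply Finset.sum_eq_zero
    intro x _
    have : u x = 0 := Finset.sum_eq_zero (fun y hy => by rw [hf0 y hy, mul_zero])
    rw [this, norm_zero, Real.zero_rpow pp.ne']
  have hU1 : 0 < U := lt_of_le_of_ne hU0 (Ne.symm hUz)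
  have hΦ1 : 0 < Φ := lt_of_le_of_ne hΦ0 (Ne.symm hΦz)
  have e : (B0 * Φ ^ (1 / p0) * U ^ (1 - 1 / p0)) ^ (1 - θ) *
      (B1 * Φ ^ (1 / p1) * U ^ (1 - 1 / p1)) ^ θ =
      B0 ^ (1 - θ) * B1 ^ θ * Φ ^ (1 / p) * U ^ (1 - 1 / p) := by
    rw [Real.mul_rpow (by positivity) (by positivity), Real.mul_rpow (by positivity) (by positivity),
      Real.mul_rpow (by positivity) (by positivity), Real.mul_rpow (by positivity) (by positivity),
      ← Real.rpow_mul hΦ0, ← Real.rpow_mul hΦ0, ← Real.rpow_mul hU0, ← Real.rpow_mul hU0]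
    have e1 : Φ ^ (1 / p) = Φ ^ (1 / p0 * (1 - θ)) * Φ ^ (1 / p1 * θ) := by
      rw [← Real.rpow_add hΦ1, hpθ]; congr 1; ring
    have e2 : U ^ (1 - 1 / p) = U ^ ((1 - 1 / p0) * (1 - θ)) * U ^ ((1 - 1 / p1) * θ) := by
      rw [← Real.rpow_add hU1, hpθ]; congr 1; ring
    rw [e1, e2]; ring
  rw [e] at key
  have e3 : U = U ^ (1 / p) * U ^ (1 - 1 / p) := by
    rw [← Real.rpow_add hU1]; simp
  have hpos : 0 < U ^ (1 - 1 / p) := by positivity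
  refine le_of_mul_le_mul_right ?_ hpos
  rw [← e3]; exact key
end PM

namespace PM

open Finset MeasureTheory

/-- The additive character `exp (2 π i t)`. -/
noncomputable def ee (t : ℝ) : ℂ := Complex.exp (2 * Real.pi * t * Complex.I)

lemma ee_add (s t : ℝ) : ee (s + t) = ee s * ee t := by
  unfold ee
  rw [← Complex.exp_add]; congr 1; push_cast; ring

lemma ee_zero : ee 0 = 1 := by simp [ee]

lemma norm_ee (t : ℝ) : ‖ee t‖ = 1 := by
  unfold ee
  rw [show (2 * Real.pi * t * Complex.I : ℂ) = ((2 * Real.pi * t : ℝ) : ℂ) * Complex.I by push_cast; ring]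
  exact Complex.norm_exp_ofReal_mul_I _

lemma ee_int (n : ℤ) : ee n = 1 := by
  unfold ee
  rw [Complex.exp_eq_one_iff]
  exact ⟨n, by push_cast; ring⟩

lemma ee_conj (t : ℝ) : (starRingEnd ℂ) (ee t) = ee (-t) := by
  unfold ee
  rw [← Complex.exp_conj]; congr 1
  have h2 : (starRingEnd ℂ) 2 = 2 := Complex.conj_ofNat 2
  simp [h2]

lemma ee_cont : Continuous ee := by unfold ee; fun_prop

lemma ee_integral (n : ℤ) (hn : n ≠ 0) : ∫ ξ in (0:ℝ)..1, ee (n * ξ) = 0 := by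
  have h : ∀ ξ : ℝ, ee (n * ξ) = Complex.exp ((2 * Real.pi * n * Complex.I) * ξ) := by
    intro ξ; unfold ee; congr 1; push_cast; ring
  simp_rw [h]
  have hc : (2 * Real.pi * n * Complex.I : ℂ) ≠ 0 := by
    have : (n : ℂ) ≠ 0 := by exact_mod_cast hn
    have h2 : (Real.pi : ℂ) ≠ 0 := by exact_mod_cast Real.pi_ne_zero
    simp [this, h2]
  rw [integral_exp_mul_complex hc]
  have : Complex.exp (2 * Real.pi * n * Complex.I * (1:ℝ)) = 1 := by
    have := ee_int n
    unfold ee at this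
    rw [← this]; congr 1; push_cast; ring
  rw [this]; simp

lemma parseval (s : Finset ℤ) (a : ℤ → ℂ) :
    ∫ ξ in (0:ℝ)..1, ‖∑ n ∈ s, a n * ee (n * ξ)‖ ^ 2 = ∑ n ∈ s, ‖a n‖ ^ 2 := by
  have h : ∀ ξ : ℝ, ((‖∑ n ∈ s, a n * ee (n * ξ)‖ ^ 2 : ℝ) : ℂ)
      = ∑ n ∈ s, ∑ m ∈ s, a n * (starRingEnd ℂ) (a m) * ee (((n - m : ℤ) : ℝ) * ξ) := by
    intro ξ
    rw [Complex.ofReal_pow, ← Complex.mul_conj', map_sum, sum_mul_sum]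
    refine sum_congr rfl fun n _ => sum_congr rfl fun m _ => ?_
    rw [map_mul, ee_conj]
    rw [show (((n - m : ℤ) : ℝ) * ξ) = n * ξ + -(m * ξ) by push_cast; ring, ee_add]
    ring
  have h2 : ((∫ ξ in (0:ℝ)..1, ‖∑ n ∈ s, a n * ee (n * ξ)‖ ^ 2 : ℝ) : ℂ) = ((∑ n ∈ s, ‖a n‖ ^ 2 : ℝ) : ℂ) := by
    rw [← intervalIntegral.integral_ofReal]
    simp_rw [h]
    have hc : ∀ n m : ℤ, Continuous fun ξ : ℝ => a n * (starRingEnd ℂ) (a m) * ee (((n - m : ℤ) : ℝ) * ξ) := by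
      intro n m
      exact continuous_const.mul (ee_cont.comp (by fun_prop))
    rw [intervalIntegral.integral_finsetSum]
    · rw [Complex.ofReal_sum]
      refine sum_congr rfl fun n hn => ?_
      rw [intervalIntegral.integral_finsetSum]
      · rw [sum_eq_single_of_mem n hn]
        · simp [ee_zero, Complex.mul_conj']
        · intro m _ hm
          rw [intervalIntegral.integral_const_mul, ee_integral _ (by omega), mul_zero]
      · intro m _
        exact (hc n m).intervalIntegrable _ _
    · intro n _
      exact (continuous_finsetSum _ fun m _ => hc n m).intervalIntegrable _ _
  exact_mod_cast h2

theorem conv_l2 (f : ℤ → ℂ) (S : Finset ℤ) (hf : ∀ x, x ∉ S → f x = 0) (h : ℕ → ℂ) (I : Finset ℕ)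
    (B : ℝ) (hB : ∀ ξ : ℝ, ‖∑ n ∈ I, h n * ee (n * ξ)‖ ≤ B) (Y : Finset ℤ) :
    ∑ x ∈ Y, ‖∑ n ∈ I, h n * f (x + n)‖ ^ 2 ≤ B ^ 2 * ∑ x ∈ S, ‖f x‖ ^ 2 := by
  classical
  set g : ℤ → ℂ := fun x => ∑ n ∈ I, h n * f (x + n) with hg
  set S' : Finset ℤ := (S ×ˢ I).image (fun q => q.1 - (q.2 : ℤ)) ∪ Y with hS'
  have hgS : ∀ ξ : ℝ, ∑ x ∈ S', g x * ee (x * ξ) = (∑ n ∈ I, h n * ee (n * (-ξ))) * ∑ y ∈ S, f y * ee (y * ξ) := by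
    intro ξ
    simp only [hg, sum_mul]
    rw [sum_comm]
    refine sum_congr rfl fun n hn => ?_
    rw [mul_sum]
    symm
    refine sum_bij_ne_zero (fun y _ _ => y - (n:ℤ)) ?_ ?_ ?_ ?_
    · intro y hy _
      exact mem_union_left _ (mem_image.2 ⟨(y, n), by simp [hy, hn], rfl⟩)
    · intro a _ _ b _ _ hab
      simpa using hab
    · intro x _ hx
      have hxS : x + n ∈ S := by
        by_contra hc
        apply hx; rw [hf _ hc]; simp
      refine ⟨x + n, hxS, ?_, by simp⟩
      have h1 : h n ≠ 0 := by rintro h0; apply hx; simp [h0]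
      have h2 : f (x + n) ≠ 0 := by rintro h0; apply hx; simp [h0]
      have h3 : ∀ t, ee t ≠ 0 := fun t => by
        rw [← norm_pos_iff, norm_ee]; exact one_pos
      exact mul_ne_zero (mul_ne_zero h1 (h3 _)) (mul_ne_zero h2 (h3 _))
    · intro y _ _
      rw [show (((y - n : ℤ) : ℝ) * ξ) = n * (-ξ) + y * ξ by push_cast; ring, ee_add]
      simp; ring
  calc ∑ x ∈ Y, ‖g x‖ ^ 2 ≤ ∑ x ∈ S', ‖g x‖ ^ 2 :=
        sum_le_sum_of_subset_of_nonneg subset_union_right (fun _ _ _ => by positivity)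
    _ = ∫ ξ in (0:ℝ)..1, ‖∑ x ∈ S', g x * ee (x * ξ)‖ ^ 2 := (parseval _ _).symm
    _ ≤ ∫ ξ in (0:ℝ)..1, B ^ 2 * ‖∑ y ∈ S, f y * ee (y * ξ)‖ ^ 2 := by
        have hc : ∀ (s : Finset ℤ) (a : ℤ → ℂ), Continuous fun ξ : ℝ => ‖∑ y ∈ s, a y * ee (y * ξ)‖ ^ 2 := by
          intro s a
          refine ((continuous_finsetSum _ fun y _ => continuous_const.mul (ee_cont.comp (by fun_prop))).norm).pow 2
        apply intervalIntegral.integral_mono_on zero_le_one ((hc _ _).intervalIntegrable _ _)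
          ((continuous_const.mul (hc _ _)).intervalIntegrable _ _)
        intro ξ _
        rw [hgS, norm_mul, mul_pow]
        exact mul_le_mul_of_nonneg_right (pow_le_pow_left₀ (norm_nonneg _) (hB _) 2) (by positivity)
    _ = _ := by rw [intervalIntegral.integral_const_mul, parseval]

end PM

namespace PM

open Finset

lemma ee_mul_sub_one (t : ℝ) : ‖ee t - 1‖ = 2 * |Real.sin (Real.pi * t)| := by
  have : ee t = Complex.exp (Complex.I * ((2 * Real.pi * t : ℝ) : ℂ)) := by
    unfold ee; congr 1; push_cast; ring
  rw [this, Complex.norm_exp_I_mul_ofReal_sub_one, norm_mul]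
  simp only [Real.norm_eq_abs]
  rw [show 2 * Real.pi * t / 2 = Real.pi * t by ring]
  norm_num

lemma ee_sub_one_le (t : ℝ) : ‖ee t - 1‖ ≤ 7 * |t| := by
  rw [ee_mul_sub_one]
  have h := Real.abs_sin_le_abs (x := Real.pi * t)
  rw [abs_mul, abs_of_pos Real.pi_pos] at h
  nlinarith [Real.pi_lt_d2, abs_nonneg t]

lemma ee_sub_one_ge (t : ℝ) (ε : ℝ) (h : ∀ a : ℤ, ε ≤ |t - a|) : 4 * ε ≤ ‖ee t - 1‖ := by
  have h1 : ee t = ee (t - round t) := by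
    have : ee t = ee ((t - round t) + (round t : ℤ)) := by congr 1; ring
    rw [this, ee_add, ee_int, mul_one]
  rw [h1, ee_mul_sub_one]
  have h2 := Real.mul_abs_le_abs_sin (x := Real.pi * (t - round t)) (by
    rw [abs_mul, abs_of_pos Real.pi_pos]
    have := abs_sub_round t
    nlinarith [Real.pi_pos])
  rw [abs_mul, abs_of_pos Real.pi_pos] at h2
  have h3 : 2 / Real.pi * (Real.pi * |t - round t|) = 2 * |t - round t| := by
    field_simp
  have := h (round t)
  linarith

lemma ee_nat_mul (k : ℕ) (t : ℝ) : ee (k * t) = ee t ^ k := by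
  unfold ee
  rw [← Complex.exp_nat_mul]; congr 1; push_cast; ring

lemma geom_bound (t ε : ℝ) (hε : 0 < ε) (h : ∀ a : ℤ, ε ≤ |t - a|) (K : ℕ) :
    ‖∑ k ∈ Icc 1 K, ee (k * t)‖ ≤ ε⁻¹ := by
  have h1 := ee_sub_one_ge t ε h
  have h2 : (∑ k ∈ Icc 1 K, ee (k * t)) * (ee t - 1) = ee t * (ee t ^ K - 1) := by
    rw [← geom_sum_mul, ← mul_assoc]
    congr 1
    have hIcc : ∑ k ∈ Icc 1 K, ee (k * t) = ∑ k ∈ range K, ee ((k + 1 : ℕ) * t) := by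
      rw [Finset.range_eq_Ico, Finset.sum_Ico_add' (fun k : ℕ => ee (k * t))]
      rfl
    rw [hIcc, mul_sum]
    refine sum_congr rfl fun k _ => ?_
    rw [ee_nat_mul, pow_succ']
  have h3 : ‖∑ k ∈ Icc 1 K, ee (k * t)‖ * ‖ee t - 1‖ ≤ 2 := by
    rw [← norm_mul, h2, norm_mul, norm_ee, one_mul]
    refine (norm_sub_le _ _).trans ?_
    rw [norm_pow, norm_ee]; norm_num
  have h4 : ‖∑ k ∈ Icc 1 K, ee (k * t)‖ * (4 * ε) ≤ 2 :=
    (mul_le_mul_of_nonneg_left h1 (norm_nonneg _)).trans h3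
  rw [← one_div, le_div_iff₀ hε]
  linarith

/-- sum over blocks of length `d` -/
lemma block_sum {M : Type*} [AddCommMonoid M] (g : ℕ → M) (d K : ℕ) :
    ∑ n ∈ range (K * d), g n = ∑ k ∈ range K, ∑ r ∈ range d, g (k * d + r) := by
  induction K with
  | zero => simp
  | succ K ih => rw [sum_range_succ, ← ih, add_mul, one_mul, sum_range_add]

lemma compare (η : ℝ) (N d : ℕ) (hd : 1 ≤ d) :
    ‖(d : ℂ) * ∑ k ∈ Icc 1 (N / d), ee (k * (d * η)) - ∑ n ∈ Icc 1 N, ee (n * η)‖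
      ≤ d + N * (7 * (d * |η|)) := by
  set K := N / d with hK
  have hKN : K * d ≤ N := Nat.div_mul_le_self N d
  have hlt : N < K * d + d := by
    have := Nat.lt_div_mul_add (a := N) (b := d) (by omega)
    omega
  have hIcc : ∀ (g : ℕ → ℂ) (M : ℕ), ∑ n ∈ Icc 1 M, g n = ∑ n ∈ range M, g (n + 1) := by
    intro g M
    rw [Finset.range_eq_Ico, Finset.sum_Ico_add']
    rfl
  have hsplit : ∑ n ∈ Icc 1 N, ee (n * η) = ∑ k ∈ range K, ∑ r ∈ range d, ee ((k * d + r + 1 : ℕ) * η)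
      + ∑ r ∈ range (N - K * d), ee ((K * d + r + 1 : ℕ) * η) := by
    rw [hIcc, ← block_sum (fun n => ee ((n + 1 : ℕ) * η)), ← sum_range_add (fun n => ee ((n + 1 : ℕ) * η))]
    congr 2; omega
  have hfirst : (d : ℂ) * ∑ k ∈ Icc 1 K, ee (k * (d * η)) = ∑ k ∈ range K, ∑ r ∈ range d, ee ((k + 1 : ℕ) * (d * η)) := by
    rw [hIcc, mul_sum]
    refine sum_congr rfl fun k _ => ?_
    simp
  rw [hsplit, hfirst, ← sub_sub, ← sum_sub_distrib]
  have h1 : ‖∑ k ∈ range K, (∑ r ∈ range d, ee ((k + 1 : ℕ) * (d * η)) - ∑ r ∈ range d, ee ((k * d + r + 1 : ℕ) * η))‖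
      ≤ ∑ k ∈ range K, ∑ r ∈ range d, (7 * (d * |η|)) := by
    refine (norm_sum_le _ _).trans (sum_le_sum fun k _ => ?_)
    rw [← sum_sub_distrib]
    refine (norm_sum_le _ _).trans (sum_le_sum fun r hr => ?_)
    have hr' := mem_range.1 hr
    have : ee ((k + 1 : ℕ) * (d * η)) = ee ((k * d + r + 1 : ℕ) * η) * ee (((d : ℝ) - r - 1) * η) := by
      rw [← ee_add]; congr 1; push_cast; ring
    rw [this, ← mul_sub_one, norm_mul, norm_ee, one_mul]
    refine (ee_sub_one_le _).trans ?_
    rw [abs_mul]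
    have h5 : (r : ℝ) + 1 ≤ d := by exact_mod_cast hr'
    have : |(d : ℝ) - r - 1| ≤ d := by
      rw [abs_of_nonneg (by linarith)]
      have : (0:ℝ) ≤ r := by positivity
      linarith
    gcongr
  have h2 : ‖∑ r ∈ range (N - K * d), ee ((K * d + r + 1 : ℕ) * η)‖ ≤ d := by
    refine (norm_sum_le _ _).trans ?_
    simp only [norm_ee, sum_const, card_range, nsmul_eq_mul, mul_one]
    exact_mod_cast (by omega : N - K * d ≤ d)
  refine (norm_sub_le _ _).trans ?_
  have h1b : ∑ k ∈ range K, ∑ r ∈ range d, (7 * (d * |η|)) = (K : ℝ) * (d * (7 * (d * |η|))) := by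
    simp only [sum_const, card_range, nsmul_eq_mul]
  rw [h1b] at h1
  have h3 : (K : ℝ) * (d * (7 * (d * |η|))) ≤ N * (7 * (d * |η|)) := by
    rw [← mul_assoc]
    have : (K : ℝ) * d ≤ N := by exact_mod_cast hKN
    gcongr
  linarith

theorem lemmaS {ι : Type*} (s : Finset ι) (c : ι → ℝ) (d : ι → ℕ) (D N : ℕ) (hd1 : ∀ A ∈ s, 1 ≤ d A)
    (hdD : ∀ A ∈ s, d A ≤ D) (hN : 4 * D ^ 2 ≤ N) (hN1 : 1 ≤ N) (W : ℝ) (hW0 : 0 ≤ W)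
    (hW : ∀ q : ℕ, 1 ≤ q → |∑ A ∈ s with q ∣ d A, c A / d A| ≤ W) (ξ : ℝ) :
    ‖∑ n ∈ Icc 1 N, ((∑ A ∈ s with d A ∣ n, c A : ℝ) : ℂ) * ee (n * ξ)‖ ≤
      N * (W + 8 * (Real.sqrt N)⁻¹ * ∑ A ∈ s, |c A|) := by
  classical
  set ε : ℝ := (Real.sqrt N)⁻¹ with hε
  have hNpos : (0:ℝ) < N := by exact_mod_cast hN1
  have hsq : 0 < Real.sqrt N := Real.sqrt_pos.2 hNpos
  have hε0 : 0 < ε := inv_pos.2 hsq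
  have hNε : (N : ℝ) * ε = Real.sqrt N := by
    rw [hε]; nth_rewrite 1 [← Real.mul_self_sqrt hNpos.le]; field_simp
  have hεinv : ε⁻¹ = N * ε := by rw [hNε, hε, inv_inv]
  have hε1 : ε ≤ 1 := by
    rw [hε]; apply inv_le_one_of_one_le₀
    rw [Real.one_le_sqrt]; exact_mod_cast hN1
  have hDε : 2 * D * ε ≤ 1 := by
    have h2D : (2:ℝ) * D ≤ Real.sqrt N := by
      apply Real.le_sqrt_of_sq_le
      have : (4:ℝ) * (D:ℝ) ^ 2 ≤ N := by exact_mod_cast hN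
      nlinarith
    rw [hε, ← div_eq_mul_inv, div_le_one hsq]; exact h2D
  have hswap : ∑ n ∈ Icc 1 N, ((∑ A ∈ s with d A ∣ n, c A : ℝ) : ℂ) * ee (n * ξ)
      = ∑ A ∈ s, (c A : ℂ) * ∑ k ∈ Icc 1 (N / d A), ee (k * (d A * ξ)) := by
    have h1 : ∀ n ∈ Icc 1 N, ((∑ A ∈ s with d A ∣ n, c A : ℝ) : ℂ) * ee (n * ξ) =
        ∑ A ∈ s, if d A ∣ n then (c A : ℂ) * ee (n * ξ) else 0 := by
      intro n _
      rw [← sum_filter, Complex.ofReal_sum, sum_mul]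
    rw [sum_congr rfl h1, sum_comm]
    refine sum_congr rfl fun A hA => ?_
    rw [← sum_filter, mul_sum]
    symm
    have hdA := hd1 A hA
    refine sum_bij (fun k _ => k * d A) ?_ ?_ ?_ ?_
    · intro k hk
      rw [mem_Icc] at hk
      rw [mem_filter, mem_Icc]
      refine ⟨⟨Nat.one_le_iff_ne_zero.2 (Nat.mul_ne_zero (by omega) (by omega)), ?_⟩, Dvd.intro_left _ rfl⟩
      exact (Nat.le_div_iff_mul_le (by omega)).1 hk.2
    · intro a _ b _ hab
      exact Nat.eq_of_mul_eq_mul_right (by omega) hab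
    · intro n hn
      rw [mem_filter, mem_Icc] at hn
      obtain ⟨⟨h1, h2⟩, k, hk⟩ := hn
      refine ⟨k, ?_, by rw [hk, mul_comm]⟩
      rw [mem_Icc, Nat.le_div_iff_mul_le (by omega)]
      refine ⟨?_, by rw [mul_comm, ← hk]; exact h2⟩
      rcases Nat.eq_zero_or_pos k with h0 | h0
      · subst h0; omega
      · exact h0
    · intro k _
      congr 2; push_cast; ring
  rw [hswap]
  by_cases hbad : ∃ A ∈ s, ∃ a : ℤ, |d A * ξ - a| < ε
  · obtain ⟨A0, hA0, a, ha⟩ := hbad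
    set r : ℚ := (a : ℚ) / (d A0 : ℤ) with hr
    set q := r.den with hq
    have hq1 : 1 ≤ q := r.den_pos
    set η : ℝ := ξ - (r : ℝ) with hη
    have hdpos : (1:ℝ) ≤ d A0 := by exact_mod_cast hd1 A0 hA0
    have hηε : |η| ≤ ε := by
      have : d A0 * ξ - a = d A0 * η := by
        rw [hη, hr]; push_cast; field_simp
      rw [this, abs_mul, abs_of_pos (by linarith)] at ha
      nlinarith [abs_nonneg η]
    -- non multiples
    have hnon : ∀ A ∈ s, ¬ q ∣ d A → ∀ a' : ℤ, ε ≤ |d A * ξ - a'| := by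
      intro A hA hqd a'
      by_contra hlt
      push Not at hlt
      apply hqd
      have hA1 : (1:ℝ) ≤ d A := by exact_mod_cast hd1 A hA
      have hAD : (d A : ℝ) ≤ D := by exact_mod_cast hdD A hA
      have hA0D : (d A0 : ℝ) ≤ D := by exact_mod_cast hdD A0 hA0
      have hlt' : |((a * d A - a' * d A0 : ℤ) : ℝ)| < 1 := by
        have : ((a * d A - a' * d A0 : ℤ) : ℝ) = d A0 * (d A * ξ - a') - d A * (d A0 * ξ - a) := by
          push_cast; ring
        rw [this]
        refine (abs_sub _ _).trans_lt ?_
        rw [abs_mul, abs_mul, abs_of_pos (by linarith : (0:ℝ) < d A0), abs_of_pos (by linarith : (0:ℝ) < d A)]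
        nlinarith [abs_nonneg (d A * ξ - a'), abs_nonneg (d A0 * ξ - a)]
      have heq : a * d A - a' * d A0 = 0 := by
        rw [← Int.cast_abs] at hlt'
        have : |a * (d A : ℤ) - a' * d A0| < 1 := by exact_mod_cast hlt'
        rwa [Int.abs_lt_one_iff] at this
      have hreq : r = (a' : ℚ) / (d A : ℤ) := by
        rw [hr, div_eq_div_iff (by have := hd1 A0 hA0; positivity) (by have := hd1 A hA; positivity)]
        have : a * (d A : ℤ) = a' * d A0 := by linarith
        exact_mod_cast this
      have := Rat.den_dvd a' (d A)
      rw [Rat.divInt_eq_div, ← hreq] at this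
      exact_mod_cast this
    have hmul : ∀ A ∈ s, q ∣ d A → ∀ k : ℕ, ee (k * (d A * ξ)) = ee (k * (d A * η)) := by
      rintro A hA ⟨l, hl⟩ k
      have hr' : (r : ℝ) * q = r.num := by exact_mod_cast Rat.mul_den_eq_num r
      have : (k : ℝ) * (d A * ξ) = k * (d A * η) + ((k * l * r.num : ℤ) : ℝ) := by
        rw [hη, hl]; push_cast; rw [← hr']; ring
      rw [this, ee_add, ee_int, mul_one]
    set Φ := ∑ n ∈ Icc 1 N, ee (n * η) with hΦ
    have hΦN : ‖Φ‖ ≤ N := by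
      refine (norm_sum_le _ _).trans ?_
      simp [norm_ee]
    have hterm : ∀ A ∈ s, ‖(c A : ℂ) * ∑ k ∈ Icc 1 (N / d A), ee (k * (d A * ξ)) -
        (if q ∣ d A then ((c A / d A : ℝ) : ℂ) else 0) * Φ‖ ≤ |c A| * (N * (8 * ε)) := by
      intro A hA
      have hA1 : (1:ℝ) ≤ d A := by exact_mod_cast hd1 A hA
      split_ifs with hqd
      · rw [sum_congr rfl fun k _ => hmul A hA hqd k]
        have hdne : (d A : ℂ) ≠ 0 := by
          have := hd1 A hA
          exact_mod_cast (by omega : d A ≠ 0)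
        have : (c A : ℂ) * ∑ k ∈ Icc 1 (N / d A), ee (k * (d A * η)) - ((c A / d A : ℝ) : ℂ) * Φ
            = ((c A / d A : ℝ) : ℂ) * ((d A : ℂ) * ∑ k ∈ Icc 1 (N / d A), ee (k * (d A * η)) - Φ) := by
          generalize ∑ k ∈ Icc 1 (N / d A), ee (k * (d A * η)) = S
          push_cast; field_simp
        rw [this, norm_mul, Complex.norm_real, Real.norm_eq_abs, abs_div, abs_of_pos (by linarith : (0:ℝ) < d A)]
        have h1 := compare η N (d A) (hd1 A hA)
        calc |c A| / d A * _ ≤ |c A| / d A * (d A + N * (7 * (d A * |η|))) := by gcongr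
          _ = |c A| * (1 + N * (7 * |η|)) := by field_simp
          _ ≤ |c A| * (N * (8 * ε)) := by
            gcongr
            have : 1 ≤ N * ε := by rw [hNε, Real.one_le_sqrt]; exact_mod_cast hN1
            nlinarith
      · rw [zero_mul, sub_zero, norm_mul, Complex.norm_real, Real.norm_eq_abs]
        have h1 := geom_bound (d A * ξ) ε hε0 (hnon A hA hqd) (N / d A)
        rw [hεinv] at h1
        gcongr
        nlinarith
    have htot : ‖∑ A ∈ s, (c A : ℂ) * ∑ k ∈ Icc 1 (N / d A), ee (k * (d A * ξ)) -
        ((∑ A ∈ s with q ∣ d A, c A / d A : ℝ) : ℂ) * Φ‖ ≤ ∑ A ∈ s, |c A| * (N * (8 * ε)) := by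
      rw [sum_filter, Complex.ofReal_sum, sum_mul, ← sum_sub_distrib]
      refine (norm_sum_le _ _).trans (sum_le_sum fun A hA => ?_)
      refine le_trans (le_of_eq ?_) (hterm A hA)
      congr 3; split_ifs <;> simp
    rw [← sum_mul] at htot
    have h2 : ‖((∑ A ∈ s with q ∣ d A, c A / d A : ℝ) : ℂ) * Φ‖ ≤ W * N := by
      rw [norm_mul, Complex.norm_real, Real.norm_eq_abs]
      exact mul_le_mul (hW q hq1) hΦN (norm_nonneg _) hW0
    have h3 := norm_add_le (∑ A ∈ s, (c A : ℂ) * ∑ k ∈ Icc 1 (N / d A), ee (k * (d A * ξ)) -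
        ((∑ A ∈ s with q ∣ d A, c A / d A : ℝ) : ℂ) * Φ) (((∑ A ∈ s with q ∣ d A, c A / d A : ℝ) : ℂ) * Φ)
    rw [sub_add_cancel] at h3
    linarith
  · push Not at hbad
    have : ‖∑ A ∈ s, (c A : ℂ) * ∑ k ∈ Icc 1 (N / d A), ee (k * (d A * ξ))‖ ≤ ∑ A ∈ s, |c A| * (N * ε) := by
      refine (norm_sum_le _ _).trans (sum_le_sum fun A hA => ?_)
      rw [norm_mul, Complex.norm_real, Real.norm_eq_abs, ← hεinv]
      gcongr
      exact geom_bound _ ε hε0 (hbad A hA) _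
    refine this.trans ?_
    rw [← sum_mul]
    have h5 : 0 ≤ ∑ A ∈ s, |c A| := sum_nonneg fun _ _ => abs_nonneg _
    have h6 : (0:ℝ) ≤ N * W := by positivity
    have h7 : 0 ≤ (∑ A ∈ s, |c A|) * (N * ε) := by positivity
    linarith

end PM

namespace PM
open Finset

lemma theta_eq (n : ℕ) : theta n = Chebyshev.theta n := by
  rw [Chebyshev.theta_eq_sum_Icc, theta, primesUpTo, Nat.floor_natCast]
  congr 1
  ext p; simp

lemma theta_lower : ∃ c : ℝ, 0 < c ∧ ∀ N : ℕ, 2 ≤ N → c * N ≤ theta N := by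
  refine ⟨1 / 1000000, by norm_num, fun N hN => ?_⟩
  rw [theta_eq]
  have hN' : (2:ℝ) ≤ N := by exact_mod_cast hN
  have hl2 := Real.log_two_gt_d9
  by_cases hbig : N < 600000
  · have h2 : Real.log 2 ≤ Chebyshev.theta N := by
      refine le_trans ?_ (Chebyshev.theta_mono hN')
      have := theta_eq 2
      rw [theta, primesUpTo] at this
      have h3 : (range (2 + 1)).filter Nat.Prime = {2} := by decide
      rw [h3] at this
      simp at this
      rw [← this]
    have : (N : ℝ) < 600000 := by exact_mod_cast hbig
    linarith
  · push Not at hbig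
    have hbig' : (600000 : ℝ) ≤ N := by exact_mod_cast hbig
    have h1 := Chebyshev.theta_ge N
    set s := Real.sqrt N with hs
    set u := Real.sqrt s with hu
    have hs2 : s ^ 2 = N := Real.sq_sqrt (by linarith)
    have hs0 : 0 ≤ s := Real.sqrt_nonneg _
    have hu2 : u ^ 2 = s := Real.sq_sqrt hs0
    have hu0 : 0 ≤ u := Real.sqrt_nonneg _
    have hs3 : 774 ≤ s := by
      apply Real.le_sqrt_of_sq_le; norm_num; linarith
    have hu3 : 27 ≤ u := by
      apply Real.le_sqrt_of_sq_le; norm_num; linarith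
    have hlog : Real.log N ≤ 4 * u := by
      rw [← hs2, ← hu2, ← pow_mul, Real.log_pow]
      have := Real.log_le_sub_one_of_pos (show 0 < u by linarith)
      push_cast; linarith
    have hlog1 : Real.log (N + 1) ≤ 1 + 4 * u := by
      have : Real.log (N + 1) ≤ Real.log (2 * N) := Real.log_le_log (by linarith) (by linarith)
      rw [Real.log_mul (by norm_num) (by linarith)] at this
      have := Real.log_two_lt_d9
      linarith
    have h4 : 2 * s * Real.log N ≤ 8 * u ^ 3 := by
      calc 2 * s * Real.log N ≤ 2 * s * (4 * u) := by gcongr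
        _ = 8 * u ^ 3 := by rw [← hu2]; ring
    have hNu : (N : ℝ) = u ^ 4 := by rw [← hs2, ← hu2]; ring
    rw [hNu] at h1 ⊢
    have h5 : u ^ 4 * 0.6931 ≤ u ^ 4 * Real.log 2 := by gcongr; linarith
    have h6 : 27 * u ^ 3 ≤ u ^ 4 := by
      have : u ^ 4 = u * u ^ 3 := by ring
      rw [this]; gcongr
    have h7 : 27 * (27 * u) ≤ u ^ 3 := by nlinarith [mul_nonneg hu0 hu0]
    have hNu' : Real.log (u ^ 4 + 1) ≤ 1 + 4 * u := by rw [← hNu]; exact hlog1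
    have h4' : 2 * s * Real.log (u ^ 4) ≤ 8 * u ^ 3 := by rw [← hNu]; exact h4
    have h1' : u ^ 4 * Real.log 2 - Real.log (u ^ 4 + 1) - 2 * s * Real.log (u ^ 4) ≤ Chebyshev.theta (u ^ 4) := by
      have : Real.sqrt (u ^ 4) = s := by rw [← hNu]
      rw [← this]
      have h9 := Chebyshev.theta_ge N
      rwa [hNu] at h9
    nlinarith

/-- primes in the half open interval `(a, b]` -/
def pr (a b : ℕ) : Finset ℕ := (Ioc a b).filter Nat.Prime

lemma mem_pr {a b p : ℕ} : p ∈ pr a b ↔ (a < p ∧ p ≤ b) ∧ p.Prime := by simp [pr]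

noncomputable def phi (n : ℕ) : ℝ := 1 / (n * Real.log n)

lemma phi_anti (n : ℕ) (hn : 2 ≤ n) : phi (n + 1) ≤ phi n := by
  unfold phi
  have hn' : (2:ℝ) ≤ n := by exact_mod_cast hn
  have := Real.log_pos (show (1:ℝ) < n by linarith)
  apply one_div_le_one_div_of_le
  · positivity
  · push_cast
    have h2 : Real.log n ≤ Real.log (n + 1) := Real.log_le_log (by linarith) (by linarith)
    gcongr
    linarith

lemma phi_le (n : ℕ) (hn : 2 ≤ n) :
    phi (n + 1) ≤ Real.log (Real.log (n + 1 : ℕ)) - Real.log (Real.log n) := by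
  unfold phi
  have hn' : (2:ℝ) ≤ n := by exact_mod_cast hn
  push_cast
  have h0 := Real.log_pos (show (1:ℝ) < n by linarith)
  have h1 := Real.log_pos (show (1:ℝ) < n + 1 by linarith)
  rw [← Real.log_div h1.ne' h0.ne']
  have h2 := Real.one_sub_inv_le_log_of_pos (div_pos h1 h0)
  refine le_trans ?_ h2
  rw [inv_div]
  have h3 := Real.one_sub_inv_le_log_of_pos (show 0 < ((n:ℝ) + 1) / n by positivity)
  rw [Real.log_div (by linarith) (by linarith), inv_div] at h3
  rw [one_sub_div h1.ne']
  rw [div_le_div_iff₀ (by positivity) h1]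
  have h4 : 1 - (n:ℝ) / (n + 1) = 1 / (n + 1) := by field_simp; ring
  rw [h4] at h3
  have h5 : 1 ≤ (Real.log (n + 1) - Real.log n) * (n + 1) := by
    rw [div_le_iff₀ (by linarith)] at h3; exact h3
  nlinarith

lemma cheb_succ (n : ℕ) : Chebyshev.theta ((n + 1 : ℕ) : ℝ) =
    Chebyshev.theta n + if (n + 1).Prime then Real.log (n + 1 : ℕ) else 0 := by
  rw [← theta_eq, ← theta_eq, theta, theta, primesUpTo, primesUpTo, range_add_one, filter_insert]
  split_ifs with h
  · rw [sum_insert (by simp)]; ring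
  · simp

lemma pr_succ (a n : ℕ) (hn : a ≤ n) (f : ℕ → ℝ) :
    ∑ p ∈ pr a (n + 1), f p = ∑ p ∈ pr a n, f p + if (n + 1).Prime then f (n + 1) else 0 := by
  have : Ioc a (n + 1) = insert (n + 1) (Ioc a n) := by
    ext x; simp; omega
  rw [pr, this, filter_insert]
  split_ifs with h
  · rw [sum_insert (by simp), add_comm]; rfl
  · simp [pr]

lemma recip_aux (a : ℕ) (ha : 2 ≤ a) (n : ℕ) (hn : a ≤ n) :
    ∑ p ∈ pr a n, (1:ℝ) / p ≤ (Chebyshev.theta n - Real.log 4 * n) * phi n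
      + Real.log 4 * (Real.log (Real.log n) - Real.log (Real.log a)) + Real.log 4 * (a * phi a) := by
  induction n, hn using Nat.le_induction with
  | base =>
    have h1 : pr a a = ∅ := by simp [pr]
    rw [h1]
    simp
    have : 0 ≤ Chebyshev.theta (a:ℝ) * phi a := by
      apply mul_nonneg (Chebyshev.theta_nonneg _)
      unfold phi; positivity
    linarith
  | succ n hn ih =>
    have hn2 : 2 ≤ n := by omega
    have hn' : (2:ℝ) ≤ n := by exact_mod_cast hn2
    rw [pr_succ a n hn, cheb_succ]
    have h4 : 0 < Real.log 4 := Real.log_pos (by norm_num)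
    have hth := Chebyshev.theta_le_log4_mul_x (x := n) (by positivity)
    have h1 := phi_anti n hn2
    have h2 := phi_le n hn2
    have h3 : (if (n + 1).Prime then (1:ℝ) / (n + 1 : ℕ) else 0) =
        (if (n + 1).Prime then Real.log (n + 1 : ℕ) else 0) * phi (n + 1) := by
      split_ifs
      · unfold phi
        have : 0 < Real.log ((n + 1 : ℕ) : ℝ) := Real.log_pos (by push_cast; linarith)
        field_simp
      · simp
    rw [h3]
    set e := (if (n + 1).Prime then Real.log (n + 1 : ℕ) else 0)
    have h5 : Real.log 4 * phi (n + 1) ≤ Real.log 4 * (Real.log (Real.log (n + 1 : ℕ)) - Real.log (Real.log n)) := by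
      gcongr
    have h6 : 0 ≤ (Real.log 4 * n - Chebyshev.theta n) * (phi n - phi (n + 1)) :=
      mul_nonneg (by linarith) (by linarith)
    push_cast at *
    nlinarith

lemma recip_sum (a b : ℕ) (ha : 2 ≤ a) (hab : a ≤ b) :
    ∑ p ∈ pr a b, (1:ℝ) / p ≤
      Real.log 4 * (Real.log (Real.log b) - Real.log (Real.log a)) + Real.log 4 / Real.log a := by
  have h := recip_aux a ha b hab
  have hth := Chebyshev.theta_le_log4_mul_x (x := b) (by positivity)
  have ha' : (2:ℝ) ≤ a := by exact_mod_cast ha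
  have h1 : (Chebyshev.theta b - Real.log 4 * b) * phi b ≤ 0 := by
    apply mul_nonpos_of_nonpos_of_nonneg
    · linarith
    · unfold phi; positivity
  have h2 : (a:ℝ) * phi a = 1 / Real.log a := by
    unfold phi
    have : 0 < Real.log (a : ℝ) := Real.log_pos (by linarith)
    field_simp
  rw [h2, mul_one_div] at h
  linarith

/-- growth sequence -/
noncomputable def xx (j : ℕ) : ℝ := (3 / 2 : ℝ) ^ j
noncomputable def yy (j : ℕ) : ℕ := ⌊Real.exp (xx j)⌋₊

lemma xx_one_le (j : ℕ) : 1 ≤ xx j := one_le_pow₀ (by norm_num)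
lemma xx_pos (j : ℕ) : 0 < xx j := by linarith [xx_one_le j]
lemma xx_succ (j : ℕ) : xx (j + 1) = 3 / 2 * xx j := by unfold xx; ring
lemma xx_mono {i j : ℕ} (h : i ≤ j) : xx i ≤ xx j := pow_le_pow_right₀ (by norm_num) h
lemma yy_le (j : ℕ) : (yy j : ℝ) ≤ Real.exp (xx j) := Nat.floor_le (Real.exp_pos _).le
lemma yy_mono {i j : ℕ} (h : i ≤ j) : yy i ≤ yy j := Nat.floor_mono (Real.exp_le_exp.2 (xx_mono h))
lemma yy_zero : yy 0 = 2 := by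
  unfold yy xx
  rw [pow_zero, Nat.floor_eq_iff (Real.exp_pos _).le]
  have h1 := Real.exp_one_gt_d9
  have h2 := Real.exp_one_lt_d9
  constructor <;> norm_num <;> linarith
lemma two_le_yy (j : ℕ) : 2 ≤ yy j := by
  rw [← yy_zero]; exact yy_mono (Nat.zero_le j)
lemma exp_le_two_yy (j : ℕ) : Real.exp (xx j) ≤ 2 * yy j := by
  have h1 : Real.exp (xx j) < yy j + 1 := Nat.lt_floor_add_one _
  have : (2:ℝ) ≤ yy j := by exact_mod_cast two_le_yy j
  linarith

lemma log_yy_le (j : ℕ) : Real.log (yy j) ≤ xx j := by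
  have : (2:ℝ) ≤ yy j := by exact_mod_cast two_le_yy j
  rw [Real.log_le_iff_le_exp (by linarith)]
  exact yy_le j

lemma log_yy_ge (j : ℕ) : 0.3 * xx j ≤ Real.log (yy j) := by
  have h2 : (2:ℝ) ≤ yy j := by exact_mod_cast two_le_yy j
  have h := Real.log_le_log (Real.exp_pos _) (exp_le_two_yy j)
  rw [Real.log_exp, Real.log_mul (by norm_num) (by linarith)] at h
  have := Real.log_two_lt_d9
  have := xx_one_le j
  linarith

lemma log4_le : Real.log 4 ≤ 1.3863 := by
  have : (4:ℝ) = 2 ^ 2 := by norm_num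
  rw [this, Real.log_pow]
  have := Real.log_two_lt_d9
  push_cast; linarith

lemma log4_pos : 0 < Real.log 4 := Real.log_pos (by norm_num)

lemma kappa_le (i : ℕ) : ∑ p ∈ pr (yy i) (yy (i + 1)), (1:ℝ) / p ≤ 5 := by
  have h := recip_sum (yy i) (yy (i + 1)) (two_le_yy i) (yy_mono (Nat.le_succ i))
  have h2 : (2:ℝ) ≤ yy i := by exact_mod_cast two_le_yy i
  have h3 := Real.log_two_gt_d9
  have h4 : Real.log 2 ≤ Real.log (yy i) := Real.log_le_log (by norm_num) h2
  have h5 := log_yy_ge i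
  have h6 := log_yy_le (i + 1)
  rw [xx_succ] at h6
  have h7 : (2:ℝ) ≤ yy (i + 1) := by exact_mod_cast two_le_yy (i + 1)
  have h8 : 0 < Real.log (yy (i + 1)) := Real.log_pos (by linarith)
  have h9 : Real.log (Real.log (yy (i + 1))) - Real.log (Real.log (yy i)) ≤ 2 := by
    rw [← Real.log_div (by linarith) (by linarith)]
    rw [Real.log_le_iff_le_exp (div_pos h8 (by linarith))]
    have : Real.exp 2 ≥ 5 := by
      have := Real.exp_one_gt_d9
      rw [show (2:ℝ) = 1 + 1 by norm_num, Real.exp_add]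
      nlinarith
    rw [div_le_iff₀ (by linarith)]
    nlinarith
  have h10 : Real.log 4 / Real.log (yy i) ≤ 2.1 := by
    rw [div_le_iff₀ (by linarith)]
    have := log4_le
    linarith
  have := log4_le
  have := log4_pos
  nlinarith

lemma one_sub_inv_prime (p : ℕ) (hp : 3 ≤ p) : 0 < 1 - 1 / (p:ℝ) := by
  have : (3:ℝ) ≤ p := by exact_mod_cast hp
  rw [sub_pos, div_lt_one (by linarith)]; linarith

lemma three_le_of_mem {a b p : ℕ} (ha : 2 ≤ a) (hp : p ∈ pr a b) : 3 ≤ p := by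
  rw [mem_pr] at hp; omega

lemma exp_neg_le (p : ℕ) (hp : 3 ≤ p) : Real.exp (-(2 * (1 / (p:ℝ)))) ≤ 1 - 1 / (p:ℝ) := by
  have hp' : (3:ℝ) ≤ p := by exact_mod_cast hp
  have h0 := one_sub_inv_prime p hp
  rw [Real.exp_neg, inv_le_comm₀ (Real.exp_pos _) h0]
  have h1 := Real.add_one_le_exp (2 * (1 / (p:ℝ)))
  refine le_trans ?_ h1
  rw [inv_le_iff_one_le_mul₀ h0]
  have h3 : 1 / (p:ℝ) ≤ 1 / 3 := one_div_le_one_div_of_le (by norm_num) hp'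
  have h4 : 0 ≤ 1 / (p:ℝ) := by positivity
  nlinarith

lemma V_block_ge (i : ℕ) : Real.exp (-10) ≤ ∏ p ∈ pr (yy i) (yy (i + 1)), (1 - 1 / (p:ℝ)) := by
  have h : ∏ p ∈ pr (yy i) (yy (i + 1)), Real.exp (-(2 * (1 / (p:ℝ)))) ≤ ∏ p ∈ pr (yy i) (yy (i + 1)), (1 - 1 / (p:ℝ)) :=
    prod_le_prod (fun _ _ => (Real.exp_pos _).le) fun p hp => exp_neg_le p (three_le_of_mem (two_le_yy i) hp)
  refine le_trans ?_ h
  rw [← Real.exp_sum, sum_neg_distrib, ← mul_sum]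
  apply Real.exp_le_exp.2
  have := kappa_le i
  linarith

lemma sum_telescope (b : ℕ) : ∑ p ∈ Ioc 2 b, 1 / ((p:ℝ) * (p - 1)) ≤ 1 := by
  have h : ∀ b : ℕ, 2 ≤ b → ∑ p ∈ Ioc 2 b, 1 / ((p:ℝ) * (p - 1)) ≤ 1 - 1 / (b:ℝ) := by
    intro b hb
    induction b, hb using Nat.le_induction with
    | base => simp; norm_num
    | succ n hn ih =>
      have : Ioc 2 (n + 1) = insert (n + 1) (Ioc 2 n) := by
        ext x; simp; omega
      rw [this, sum_insert (by simp)]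
      have hn' : (2:ℝ) ≤ n := by exact_mod_cast hn
      have h3 : 1 / ((((n + 1 : ℕ) : ℝ)) * (((n + 1 : ℕ) : ℝ) - 1)) = 1 / (n:ℝ) - 1 / ((n + 1 : ℕ) : ℝ) := by
        have hn0 : (n:ℝ) ≠ 0 := by linarith
        push_cast
        rw [add_sub_cancel_right]; field_simp; ring
      rw [h3]; linarith
  by_cases hb : 2 ≤ b
  · have := h b hb
    have : 0 ≤ 1 / (b:ℝ) := by positivity
    linarith
  · rw [Ioc_eq_empty (by omega)]; simp

lemma N3 : ∃ C : ℝ, 0 < C ∧ ∀ j, ∏ p ∈ pr 2 (yy j), ((1 - 1 / (p:ℝ))⁻¹ * (1 + 1 / (p:ℝ))) ≤ C * xx j ^ 3 := by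
  set C0 := 2 * (Real.log 4 * (- Real.log (Real.log 2)) + Real.log 4 / Real.log 2) + 2 with hC0
  refine ⟨Real.exp C0, Real.exp_pos _, fun j => ?_⟩
  have h1 : ∀ p ∈ pr 2 (yy j), (1 - 1 / (p:ℝ))⁻¹ * (1 + 1 / (p:ℝ)) ≤ Real.exp (2 * (1 / p) + 2 * (1 / ((p:ℝ) * (p - 1)))) := by
    intro p hp
    have hp3 : (3:ℝ) ≤ p := by exact_mod_cast three_le_of_mem le_rfl hp
    have h2 := Real.add_one_le_exp (2 * (1 / p) + 2 * (1 / ((p:ℝ) * (p - 1))))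
    refine le_trans (le_of_eq ?_) h2
    have : (p:ℝ) - 1 ≠ 0 := by linarith
    have : (p:ℝ) ≠ 0 := by linarith
    field_simp
    ring
  refine (prod_le_prod (fun p hp => ?_) h1).trans ?_
  · have := one_sub_inv_prime p (three_le_of_mem le_rfl hp)
    positivity
  rw [← Real.exp_sum]
  have hx : xx j ^ 3 = Real.exp (3 * Real.log (xx j)) := by
    rw [mul_comm, ← Real.rpow_natCast, Real.rpow_def_of_pos (xx_pos j)]; norm_num
  rw [hx, ← Real.exp_add]
  apply Real.exp_le_exp.2
  rw [sum_add_distrib, ← mul_sum, ← mul_sum]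
  have h3 := recip_sum 2 (yy j) le_rfl (two_le_yy j)
  have h4 : ∑ p ∈ pr 2 (yy j), 1 / ((p:ℝ) * (p - 1)) ≤ 1 := by
    refine le_trans (sum_le_sum_of_subset_of_nonneg (filter_subset _ _) ?_) (sum_telescope (yy j))
    intro p hp _
    have : 3 ≤ p := by simp at hp; omega
    have : (3:ℝ) ≤ p := by exact_mod_cast this
    have : 0 ≤ (p:ℝ) - 1 := by linarith
    positivity
  have h7 : (2:ℝ) ≤ yy j := by exact_mod_cast two_le_yy j
  have h5 : Real.log (Real.log (yy j)) ≤ Real.log (xx j) :=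
    Real.log_le_log (Real.log_pos (by linarith)) (log_yy_le j)
  have h6 : 0 ≤ Real.log (xx j) := Real.log_nonneg (xx_one_le j)
  have := log4_le
  have := log4_pos
  have h8 : Real.log 4 * Real.log (Real.log (yy j)) ≤ Real.log 4 * Real.log (xx j) := by gcongr
  push_cast at h3
  rw [hC0]
  nlinarith

/-- the monoid hom `n ↦ 1/n` -/
noncomputable def invHom : ℕ →* ℝ where
  toFun n := (n:ℝ)⁻¹
  map_one' := by simp
  map_mul' a b := by push_cast; rw [mul_inv]

lemma euler_lower (z : ℕ) : Real.log z ≤ ∏ p ∈ (z + 1).primesBelow, (1 - 1 / (p:ℝ))⁻¹ := by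
  have h := (EulerProduct.summable_and_hasSum_smoothNumbers_prod_primesBelow_geometric (f := invHom) (by
    intro p hp
    have : (1:ℝ) < p := by exact_mod_cast hp.one_lt
    simp only [invHom, MonoidHom.coe_mk, OneHom.coe_mk, norm_inv, RCLike.norm_natCast]
    exact inv_lt_one_of_one_lt₀ this) (z + 1)).2
  have h2 : ∏ p ∈ (z + 1).primesBelow, (1 - 1 / (p:ℝ))⁻¹ = ∏ p ∈ (z + 1).primesBelow, (1 - invHom p)⁻¹ := by
    simp [invHom]
  rw [h2]
  have hmem : ∀ k ∈ Icc 1 z, k ∈ (z + 1).smoothNumbers := by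
    intro k hk
    rw [mem_Icc] at hk
    rw [Nat.mem_smoothNumbers']
    intro p _ hpk
    have := Nat.le_of_dvd (by omega) hpk
    omega
  have h3 := sum_le_hasSum ((Icc 1 z).subtype (· ∈ (z + 1).smoothNumbers)) (fun i _ => by
    simp only [invHom, MonoidHom.coe_mk, OneHom.coe_mk]; positivity) h
  refine le_trans ?_ h3
  rw [sum_subtype_of_mem (fun n => invHom n) hmem]
  have h4 := log_add_one_le_harmonic z
  rw [harmonic_eq_sum_Icc] at h4
  push_cast at h4
  have h5 : Real.log z ≤ Real.log (z + 1) := by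
    rcases Nat.eq_zero_or_pos z with h0 | h0
    · subst h0; simp
    · apply Real.log_le_log (by exact_mod_cast h0) (by linarith)
  simp only [invHom, MonoidHom.coe_mk, OneHom.coe_mk]
  linarith

lemma N2 (J : ℕ) : 0.15 * xx J ≤ ∏ p ∈ pr 2 (yy J), (1 - 1 / (p:ℝ))⁻¹ := by
  have h := euler_lower (yy J)
  have h2 : (yy J + 1).primesBelow = insert 2 (pr 2 (yy J)) := by
    ext p
    simp only [Nat.primesBelow, mem_filter, mem_range, mem_insert, mem_pr]
    have := two_le_yy J
    constructor
    · rintro ⟨h1, h2⟩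
      have := h2.two_le
      by_cases hp : p = 2
      · left; exact hp
      · right; exact ⟨⟨by omega, by omega⟩, h2⟩
    · rintro (h1 | ⟨h1, h2⟩)
      · subst h1; exact ⟨by omega, Nat.prime_two⟩
      · exact ⟨by omega, h2⟩
  rw [h2, prod_insert (by simp [mem_pr])] at h
  have h3 := log_yy_ge J
  norm_num at h
  norm_num
  linarith

end PM

namespace PM
open Finset

/-- truncated inclusion-exclusion sum -/
noncomputable def SS (b : ℕ) (P : Finset ℕ) (x : ℕ → ℝ) : ℝ :=
  ∑ B ∈ P.powerset with B.card ≤ b, ∏ p ∈ B, (-x p)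

lemma SS_zero (P : Finset ℕ) (x : ℕ → ℝ) : SS 0 P x = 1 := by
  unfold SS
  have : P.powerset.filter (fun B => B.card ≤ 0) = {∅} := by
    ext B
    simp only [mem_filter, mem_powerset, mem_singleton, Nat.le_zero, card_eq_zero]
    constructor
    · exact fun h => h.2
    · rintro rfl; simp
  rw [this]; simp

lemma SS_insert (b : ℕ) (P : Finset ℕ) (x : ℕ → ℝ) (p : ℕ) (hp : p ∉ P) :
    SS (b + 1) (insert p P) x = SS (b + 1) P x - x p * SS b P x := by
  unfold SS
  rw [sum_filter, sum_powerset_insert hp, ← sum_filter, mul_sum,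
    sub_eq_add_neg, ← sum_neg_distrib, sum_filter (s := P.powerset) (p := fun B => B.card ≤ b)]
  congr 1
  refine sum_congr rfl fun B hB => ?_
  have hpB : p ∉ B := fun h => hp (mem_powerset.1 hB h)
  rw [card_insert_of_notMem hpB, prod_insert hpB]
  simp only [add_le_add_iff_right]
  split_ifs <;> ring

lemma SS_full (b : ℕ) (P : Finset ℕ) (x : ℕ → ℝ) (h : P.card ≤ b) : SS b P x = ∏ p ∈ P, (1 - x p) := by
  unfold SS
  rw [filter_true_of_mem (fun B hB => (card_le_card (mem_powerset.1 hB)).trans h)]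
  simp_rw [sub_eq_add_neg]
  rw [prod_one_add]

lemma bonf (P : Finset ℕ) (x : ℕ → ℝ) (hx0 : ∀ p ∈ P, 0 ≤ x p) (hx1 : ∀ p ∈ P, x p ≤ 1) :
    ∀ b, 0 ≤ (-1) ^ b * (SS b P x - ∏ p ∈ P, (1 - x p)) ∧
      (-1) ^ b * (SS b P x - ∏ p ∈ P, (1 - x p)) ≤ (∑ p ∈ P, x p) ^ (b + 1) / (b + 1).factorial := by
  induction P using Finset.induction_on with
  | empty =>
    intro b
    rw [SS_full b ∅ x (by simp)]; simp
  | insert p P hp ih =>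
    have ih' := ih (fun q hq => hx0 q (mem_insert_of_mem hq)) (fun q hq => hx1 q (mem_insert_of_mem hq))
    have h0 : 0 ≤ x p := hx0 p (mem_insert_self _ _)
    have h1 : x p ≤ 1 := hx1 p (mem_insert_self _ _)
    have hk : 0 ≤ ∑ q ∈ P, x q := sum_nonneg fun q hq => hx0 q (mem_insert_of_mem hq)
    have hP0 : 0 ≤ ∏ q ∈ P, (1 - x q) := prod_nonneg fun q hq => by
      have := hx1 q (mem_insert_of_mem hq); linarith
    have hP1 : ∏ q ∈ P, (1 - x q) ≤ 1 := prod_le_one (fun q hq => by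
      have := hx1 q (mem_insert_of_mem hq); linarith) (fun q hq => by
      have := hx0 q (mem_insert_of_mem hq); linarith)
    intro b
    rw [prod_insert hp, sum_insert hp]
    set K := ∑ q ∈ P, x q
    set Q := ∏ q ∈ P, (1 - x q)
    cases b with
    | zero =>
      have := ih' 0
      rw [SS_zero] at this ⊢
      simp at this ⊢
      constructor
      · nlinarith
      · nlinarith
    | succ b =>
      rw [SS_insert _ _ _ _ hp]
      have e : (-1:ℝ) ^ (b + 1) * (SS (b + 1) P x - x p * SS b P x - (1 - x p) * Q) =
        (-1) ^ (b + 1) * (SS (b + 1) P x - Q) + x p * ((-1) ^ b * (SS b P x - Q)) := by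
        rw [pow_succ]; ring
      rw [e]
      obtain ⟨a1, a2⟩ := ih' (b + 1)
      obtain ⟨a3, a4⟩ := ih' b
      refine ⟨by positivity, ?_⟩
      have h3 : x p * ((-1) ^ b * (SS b P x - Q)) ≤ x p * (K ^ (b + 1) / (b + 1).factorial) := by gcongr
      refine (add_le_add a2 h3).trans ?_
      have hf : ((b + 1 + 1).factorial : ℝ) = (b + 2) * (b + 1).factorial := by
        rw [Nat.factorial_succ]; push_cast; ring
      have hfp : (0:ℝ) < (b + 1).factorial := by exact_mod_cast Nat.factorial_pos _
      rw [hf]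
      have hbin : K ^ (b + 2) + (b + 2) * x p * K ^ (b + 1) ≤ (x p + K) ^ (b + 2) := by
        have : ∀ n : ℕ, K ^ (n + 1) + (n + 1) * x p * K ^ n ≤ (x p + K) ^ (n + 1) := by
          intro n
          induction n with
          | zero => simp; linarith
          | succ n ihn =>
            calc K ^ (n + 1 + 1) + ((n + 1 : ℕ) + 1) * x p * K ^ (n + 1)
                ≤ (K ^ (n + 1) + (n + 1) * x p * K ^ n) * (x p + K) := by
                  have : 0 ≤ (n + 1) * x p * K ^ n * x p := by positivity
                  push_cast
                  have e2 : (K ^ (n + 1) + (n + 1) * x p * K ^ n) * (x p + K) =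
                    K ^ (n + 1 + 1) + (n + 1 + 1) * x p * K ^ (n + 1) + (n + 1) * x p * K ^ n * x p := by ring
                  rw [e2]; linarith
              _ ≤ (x p + K) ^ (n + 1) * (x p + K) := by gcongr
              _ = _ := by ring
        have := this (b + 1)
        push_cast at this
        convert this using 2
        ring
      have e3 : K ^ (b + 1 + 1) / ((b + 2) * ((b + 1).factorial : ℝ)) + x p * (K ^ (b + 1) / (b + 1).factorial)
        = (K ^ (b + 2) + (b + 2) * x p * K ^ (b + 1)) / ((b + 2) * (b + 1).factorial) := by
        field_simp
      rw [e3]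
      gcongr

lemma SS_even_ge (P : Finset ℕ) (x : ℕ → ℝ) (hx0 : ∀ p ∈ P, 0 ≤ x p) (hx1 : ∀ p ∈ P, x p ≤ 1)
    (b : ℕ) (hb : Even b) : ∏ p ∈ P, (1 - x p) ≤ SS b P x := by
  have := (bonf P x hx0 hx1 b).1
  rw [hb.neg_one_pow] at this
  linarith

/-- the `i`-th block of primes -/
noncomputable def blk (i : ℕ) : Finset ℕ := pr (yy i) (yy (i + 1))

noncomputable def mm (b : ℕ → ℕ) (i : ℕ) : ℝ := SS (b i) (blk i) (fun p => 1 / (p:ℝ))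

noncomputable def bfam (b : ℕ → ℕ) (i : ℕ) : Finset (Finset ℕ) := (blk i).powerset.filter (fun B => B.card ≤ b i)

noncomputable def fam (b : ℕ → ℕ) : ℕ → Finset (Finset ℕ)
  | 0 => {∅}
  | j + 1 => (fam b j ×ˢ bfam b j).image (fun q => q.1 ∪ q.2)

noncomputable def cc (b : ℕ → ℕ) (j : ℕ) (A : Finset ℕ) : ℝ := (-1) ^ A.card / ∏ i ∈ range j, mm b i

/-- the product of the elements of a set -/
def dd (A : Finset ℕ) : ℕ := ∏ p ∈ A, p

noncomputable def gg (b : ℕ → ℕ) (j n : ℕ) : ℝ := ∑ A ∈ fam b j with dd A ∣ n, cc b j A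

noncomputable def ch (b : ℕ → ℕ) (j : ℕ) (A : Finset ℕ) : ℝ :=
  cc b (j + 1) A - if A ∈ fam b j then cc b j A else 0

lemma pr_union (j : ℕ) : pr 2 (yy (j + 1)) = pr 2 (yy j) ∪ blk j := by
  ext p
  simp only [blk, mem_union, mem_pr]
  have := two_le_yy j
  have := yy_mono (Nat.le_succ j)
  constructor
  · rintro ⟨⟨h1, h2⟩, h3⟩
    by_cases h : p ≤ yy j
    · exact Or.inl ⟨⟨h1, h⟩, h3⟩
    · exact Or.inr ⟨⟨by omega, h2⟩, h3⟩
  · rintro (⟨⟨h1, h2⟩, h3⟩ | ⟨⟨h1, h2⟩, h3⟩)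
    · exact ⟨⟨h1, by simp at *; omega⟩, h3⟩
    · exact ⟨⟨by omega, h2⟩, h3⟩

lemma pr_disj (j : ℕ) : Disjoint (pr 2 (yy j)) (blk j) := by
  rw [disjoint_left]
  intro p h1 h2
  rw [blk, mem_pr] at *
  omega

lemma pr_two_zero : pr 2 (yy 0) = ∅ := by rw [yy_zero]; simp [pr]

lemma fam_sub (b : ℕ → ℕ) (j : ℕ) : ∀ A ∈ fam b j, A ⊆ pr 2 (yy j) := by
  induction j with
  | zero => intro A hA; simp [fam] at hA; subst hA; simp
  | succ j ih =>
    intro A hA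
    simp only [fam, mem_image, mem_product, Prod.exists] at hA
    obtain ⟨A1, B, ⟨h1, h2⟩, rfl⟩ := hA
    rw [pr_union]
    exact union_subset_union (ih A1 h1) (by simp [bfam] at h2; exact h2.1)

lemma bfam_sub (b : ℕ → ℕ) (j : ℕ) : ∀ B ∈ bfam b j, B ⊆ blk j := by
  intro B hB; simp [bfam] at hB; exact hB.1

lemma sum_fam_succ (b : ℕ → ℕ) (j : ℕ) (Φ : Finset ℕ → ℝ) :
    ∑ A ∈ fam b (j + 1), Φ A = ∑ A ∈ fam b j, ∑ B ∈ bfam b j, Φ (A ∪ B) := by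
  rw [fam, sum_image, sum_product]
  rintro ⟨A, B⟩ h1 ⟨A', B'⟩ h2 h
  simp only [coe_product, Set.mem_prod, mem_coe] at h1 h2
  simp only at h
  have hd := pr_disj j
  rw [disjoint_left] at hd
  have a1 := fam_sub b j A h1.1
  have a2 := fam_sub b j A' h2.1
  have b1 := bfam_sub b j B h1.2
  have b2 := bfam_sub b j B' h2.2
  have key : ∀ x, (x ∈ A ∨ x ∈ B) ↔ (x ∈ A' ∨ x ∈ B') := by
    intro x; rw [← mem_union, ← mem_union, h]
  ext x
  · constructor
    · intro hx
      rcases (key x).1 (Or.inl hx) with h3 | h3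
      · exact h3
      · exact absurd (b2 h3) (hd (a1 hx))
    · intro hx
      rcases (key x).2 (Or.inl hx) with h3 | h3
      · exact h3
      · exact absurd (b1 h3) (hd (a2 hx))
  · constructor
    · intro hx
      rcases (key x).1 (Or.inr hx) with h3 | h3
      · exact absurd (b1 hx) (hd (a2 h3))
      · exact h3
    · intro hx
      rcases (key x).2 (Or.inr hx) with h3 | h3
      · exact absurd (b2 hx) (hd (a1 h3))
      · exact h3

lemma disj_of (b : ℕ → ℕ) (j : ℕ) {A B : Finset ℕ} (hA : A ∈ fam b j) (hB : B ∈ bfam b j) : Disjoint A B :=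
  disjoint_of_subset_left (fam_sub b j A hA) (disjoint_of_subset_right (bfam_sub b j B hB) (pr_disj j))

lemma dd_union {A B : Finset ℕ} (h : Disjoint A B) : dd (A ∪ B) = dd A * dd B := prod_union h

lemma prime_of_mem_fam (b : ℕ → ℕ) (j : ℕ) {A : Finset ℕ} (hA : A ∈ fam b j) : ∀ p ∈ A, p.Prime :=
  fun _ hp => (mem_pr.1 (fam_sub b j A hA hp)).2

lemma dd_dvd_iff (A : Finset ℕ) (hA : ∀ p ∈ A, p.Prime) (n : ℕ) : dd A ∣ n ↔ ∀ p ∈ A, p ∣ n := by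
  constructor
  · intro h p hp
    exact (dvd_prod_of_mem (fun p => p) hp).trans h
  · intro h
    exact prod_primes_dvd n (fun p hp => (hA p hp).prime) h

lemma dd_pos (A : Finset ℕ) (hA : ∀ p ∈ A, p.Prime) : 1 ≤ dd A :=
  Nat.one_le_iff_ne_zero.2 (prod_ne_zero_iff.2 fun p hp => (hA p hp).ne_zero)

lemma gg_prod (b : ℕ → ℕ) (n : ℕ) (j : ℕ) :
    gg b j n = ∏ i ∈ range j, (SS (b i) (blk i) (fun p => if p ∣ n then 1 else 0) / mm b i) := by
  have h1 : ∀ j, gg b j n = (∑ A ∈ fam b j, ∏ p ∈ A, (-(if p ∣ n then (1:ℝ) else 0))) / ∏ i ∈ range j, mm b i := by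
    intro j
    unfold gg
    rw [sum_filter, sum_div]
    refine sum_congr rfl fun A hA => ?_
    split_ifs with h
    · rw [dd_dvd_iff A (prime_of_mem_fam b j hA)] at h
      unfold cc
      congr 1
      rw [prod_congr rfl (fun p hp => by rw [if_pos (h p hp)])]
      simp
    · rw [dd_dvd_iff A (prime_of_mem_fam b j hA)] at h
      push Not at h
      obtain ⟨p, hp, hpn⟩ := h
      rw [prod_eq_zero hp (by simp [hpn]), zero_div]
  rw [h1, prod_div_distrib]
  congr 1
  induction j with
  | zero => simp [fam]
  | succ j ih =>
    rw [sum_fam_succ, prod_range_succ, ← ih, sum_mul]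
    refine sum_congr rfl fun A hA => ?_
    rw [SS, mul_sum]
    refine sum_congr rfl fun B hB => ?_
    rw [prod_union (disj_of b j hA hB)]

lemma blk_ge3 {i p : ℕ} (hp : p ∈ blk i) : 3 ≤ p := three_le_of_mem (two_le_yy i) hp

lemma blk_inv1 {i p : ℕ} (hp : p ∈ blk i) : 1 / (p:ℝ) ≤ 1 := by
  have := one_sub_inv_prime p (blk_ge3 hp)
  linarith

noncomputable def VV (i : ℕ) : ℝ := ∏ p ∈ blk i, (1 - 1 / (p:ℝ))

lemma VV_pos (i : ℕ) : 0 < VV i := prod_pos fun p hp => one_sub_inv_prime p (blk_ge3 hp)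

lemma VV_ge (i : ℕ) : Real.exp (-10) ≤ VV i := V_block_ge i

lemma mm_ge (b : ℕ → ℕ) (i : ℕ) (hb : Even (b i)) : VV i ≤ mm b i :=
  SS_even_ge _ _ (fun p _ => by positivity) (fun p hp => blk_inv1 hp) _ hb

lemma mm_pos (b : ℕ → ℕ) (i : ℕ) (hb : Even (b i)) : 0 < mm b i := (VV_pos i).trans_le (mm_ge b i hb)

lemma prod_VV (j : ℕ) : ∏ i ∈ range j, VV i = ∏ p ∈ pr 2 (yy j), (1 - 1 / (p:ℝ)) := by
  induction j with
  | zero => rw [pr_two_zero]; simp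
  | succ j ih => rw [prod_range_succ, ih, pr_union, prod_union (pr_disj j)]; rfl

lemma gg_nonneg (b : ℕ → ℕ) (hb : ∀ i, Even (b i)) (j n : ℕ) : 0 ≤ gg b j n := by
  rw [gg_prod]
  refine prod_nonneg fun i _ => div_nonneg ?_ (mm_pos b i (hb i)).le
  refine le_trans ?_ (SS_even_ge _ _ ?_ ?_ _ (hb i))
  · refine prod_nonneg fun p _ => ?_
    split_ifs <;> simp
  · intro p _; split_ifs <;> simp
  · intro p _; split_ifs <;> simp

lemma gg_zero (b : ℕ → ℕ) (n : ℕ) : gg b 0 n = 1 := by rw [gg_prod]; simp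

lemma gg_prime (b : ℕ → ℕ) (j : ℕ) (q : ℕ) (hq : q.Prime) (hqj : yy j < q) :
    gg b j q = ∏ i ∈ range j, (mm b i)⁻¹ := by
  rw [gg_prod]
  refine prod_congr rfl fun i hi => ?_
  have : SS (b i) (blk i) (fun p => if p ∣ q then 1 else 0) = 1 := by
    unfold SS
    rw [sum_eq_single_of_mem ∅ (by simp)]
    · simp
    · intro B hB hne
      obtain ⟨p, hp⟩ := nonempty_iff_ne_empty.2 hne
      apply prod_eq_zero hp
      have hpb : p ∈ blk i := by
        simp at hB; exact hB.1 hp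
      rw [blk, mem_pr] at hpb
      have hm : yy (i + 1) ≤ yy j := yy_mono (by simpa using hi)
      simp only [neg_eq_zero, ite_eq_right_iff, one_ne_zero, imp_false]
      intro hd
      rcases (Nat.dvd_prime hq).1 hd with h | h
      · exact hpb.2.one_lt.ne' h
      · omega
  rw [this, one_div]

/-- truncation parameters -/
noncomputable def bb (J i : ℕ) : ℕ := if (yy (i + 1) : ℝ) ≤ xx J then 2 * yy (i + 1) else 2 * (J - i)

lemma bb_even (J i : ℕ) : Even (bb J i) := by
  unfold bb; split_ifs <;> simp

lemma mm_le (J i : ℕ) (hi : i < J) :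
    mm (bb J) i ≤ VV i * (1 + Real.exp 10 * ((5:ℝ) ^ (2 * (J - i) + 1) / (2 * (J - i) + 1).factorial)) := by
  have hV := VV_pos i
  by_cases h : (yy (i + 1) : ℝ) ≤ xx J
  · have hb : bb J i = 2 * yy (i + 1) := by rw [bb, if_pos h]
    have : mm (bb J) i = VV i := by
      rw [mm, hb, SS_full]
      · rfl
      · have : (blk i).card ≤ (Ioc (yy i) (yy (i + 1))).card := card_filter_le _ _
        rw [Nat.card_Ioc] at this
        omega
    rw [this]
    have : 0 ≤ VV i * (Real.exp 10 * ((5:ℝ) ^ (2 * (J - i) + 1) / (2 * (J - i) + 1).factorial)) := by positivity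
    linarith
  · have hb : bb J i = 2 * (J - i) := by rw [bb, if_neg h]
    have h1 := (bonf (blk i) (fun p => 1 / (p:ℝ)) (fun p _ => by positivity) (fun p hp => blk_inv1 hp) (bb J i)).2
    rw [(bb_even J i).neg_one_pow, one_mul] at h1
    have h2 : (∑ p ∈ blk i, 1 / (p:ℝ)) ^ (bb J i + 1) / ((bb J i + 1).factorial : ℝ) ≤
        (5:ℝ) ^ (2 * (J - i) + 1) / (2 * (J - i) + 1).factorial := by
      rw [hb]
      gcongr
      exact kappa_le i
    have h3 : 1 ≤ VV i * Real.exp 10 := by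
      have := VV_ge i
      calc (1:ℝ) = Real.exp (-10) * Real.exp 10 := by rw [← Real.exp_add]; simp
        _ ≤ _ := by gcongr
    have h4 : mm (bb J) i - VV i ≤ (5:ℝ) ^ (2 * (J - i) + 1) / (2 * (J - i) + 1).factorial := h1.trans h2
    set t := (5:ℝ) ^ (2 * (J - i) + 1) / (2 * (J - i) + 1).factorial
    have ht : 0 ≤ t := by positivity
    nlinarith

lemma prod_mm_le : ∃ C : ℝ, 0 < C ∧ ∀ J, ∏ i ∈ range J, mm (bb J) i ≤ C * ∏ i ∈ range J, VV i := by
  refine ⟨Real.exp (Real.exp 10 * Real.exp 5), Real.exp_pos _, fun J => ?_⟩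
  have h1 : ∏ i ∈ range J, mm (bb J) i ≤
      ∏ i ∈ range J, (VV i * Real.exp (Real.exp 10 * ((5:ℝ) ^ (2 * (J - i) + 1) / (2 * (J - i) + 1).factorial))) := by
    refine prod_le_prod (fun i _ => (mm_pos _ i (bb_even J i)).le) fun i hi => ?_
    refine (mm_le J i (mem_range.1 hi)).trans ?_
    have := VV_pos i
    gcongr
    rw [add_comm]
    exact Real.add_one_le_exp _
  refine h1.trans ?_
  rw [prod_mul_distrib, mul_comm, ← Real.exp_sum]
  have hV : 0 ≤ ∏ i ∈ range J, VV i := prod_nonneg fun i _ => (VV_pos i).le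
  gcongr
  rw [← mul_sum]
  gcongr
  refine le_trans ?_ (Real.sum_le_exp_of_nonneg (x := 5) (by norm_num) (2 * J + 2))
  rw [← sum_image (s := range J) (g := fun i => 2 * (J - i) + 1) (f := fun n => (5:ℝ) ^ n / n.factorial)]
  · apply sum_le_sum_of_subset_of_nonneg
    · intro n hn
      simp at hn ⊢
      omega
    · intros; positivity
  · intro a ha b hb hab
    simp at ha hb hab
    omega

lemma gg_prime_ge : ∃ c : ℝ, 0 < c ∧ ∀ J q : ℕ, q.Prime → yy J < q → c * xx J ≤ gg (bb J) J q := by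
  obtain ⟨C, hC, h⟩ := prod_mm_le
  refine ⟨0.15 / C, by positivity, fun J q hq hJ => ?_⟩
  rw [gg_prime _ _ _ hq hJ, prod_inv_distrib]
  have h1 := h J
  have h2 := N2 J
  have hm : 0 < ∏ i ∈ range J, mm (bb J) i := prod_pos fun i _ => mm_pos _ _ (bb_even J i)
  have hV : 0 < ∏ i ∈ range J, VV i := prod_pos fun i _ => VV_pos i
  rw [prod_inv_distrib, ← prod_VV] at h2
  calc 0.15 / C * xx J = C⁻¹ * (0.15 * xx J) := by field_simp
    _ ≤ C⁻¹ * (∏ i ∈ range J, VV i)⁻¹ := by gcongr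
    _ = (C * ∏ i ∈ range J, VV i)⁻¹ := by rw [mul_inv]
    _ ≤ _ := by gcongr

end PM

namespace PM
open Finset

lemma fam_mono (b : ℕ → ℕ) (j : ℕ) : fam b j ⊆ fam b (j + 1) := by
  intro A hA
  rw [fam, mem_image]
  exact ⟨(A, ∅), by simp [hA, bfam], by simp⟩

noncomputable def hh (b : ℕ → ℕ) (j n : ℕ) : ℝ := ∑ A ∈ fam b (j + 1) with dd A ∣ n, ch b j A

lemma sum_ch (b : ℕ → ℕ) (j : ℕ) (P : Finset ℕ → Prop) [DecidablePred P] (w : Finset ℕ → ℝ) :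
    ∑ A ∈ fam b (j + 1) with P A, ch b j A * w A =
      ∑ A ∈ fam b (j + 1) with P A, cc b (j + 1) A * w A - ∑ A ∈ fam b j with P A, cc b j A * w A := by
  unfold ch
  simp_rw [sub_mul]
  rw [sum_sub_distrib]
  congr 1
  have h : (fam b j).filter P = ((fam b (j + 1)).filter P).filter (fun A => A ∈ fam b j) := by
    ext A
    simp only [mem_filter]
    constructor
    · rintro ⟨h1, h2⟩; exact ⟨⟨fam_mono b j h1, h2⟩, h1⟩
    · rintro ⟨⟨h1, h2⟩, h3⟩; exact ⟨h3, h2⟩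
  rw [h, sum_filter (p := fun A => A ∈ fam b j)]
  refine sum_congr rfl fun A _ => ?_
  split_ifs <;> simp

lemma hh_eq (b : ℕ → ℕ) (j n : ℕ) : hh b j n = gg b (j + 1) n - gg b j n := by
  have := sum_ch b j (fun A => dd A ∣ n) (fun _ => 1)
  simpa [hh, gg] using this

lemma gg_telescope (b : ℕ → ℕ) (J n : ℕ) : gg b J n = 1 + ∑ j ∈ range J, hh b j n := by
  simp_rw [hh_eq]
  rw [sum_range_sub (fun j => gg b j n), gg_zero]; ring

lemma cc_abs (b : ℕ → ℕ) (hb : ∀ i, Even (b i)) (j : ℕ) (A : Finset ℕ) :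
    |cc b j A| ≤ (∏ i ∈ range j, VV i)⁻¹ := by
  have hm : 0 < ∏ i ∈ range j, mm b i := prod_pos fun i _ => mm_pos _ _ (hb i)
  have hV : 0 < ∏ i ∈ range j, VV i := prod_pos fun i _ => VV_pos i
  rw [cc, abs_div, abs_pow, abs_neg, abs_one, one_pow, abs_of_pos hm, one_div]
  gcongr with i _
  · exact fun i _ => (VV_pos i).le
  · exact mm_ge b i (hb i)

lemma VV_le_one (i : ℕ) : VV i ≤ 1 := prod_le_one (fun p hp => (one_sub_inv_prime p (blk_ge3 hp)).le)
  (fun p _ => by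
    have : 0 ≤ 1 / (p:ℝ) := by positivity
    linarith)

lemma ch_abs (b : ℕ → ℕ) (hb : ∀ i, Even (b i)) (j : ℕ) (A : Finset ℕ) :
    |ch b j A| ≤ 2 * (∏ i ∈ range (j + 1), VV i)⁻¹ := by
  have hV : 0 < ∏ i ∈ range (j + 1), VV i := prod_pos fun i _ => VV_pos i
  have hVj : 0 < ∏ i ∈ range j, VV i := prod_pos fun i _ => VV_pos i
  have h1 := cc_abs b hb (j + 1) A
  have h2 := cc_abs b hb j A
  have h3 : (∏ i ∈ range j, VV i)⁻¹ ≤ (∏ i ∈ range (j + 1), VV i)⁻¹ := by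
    apply inv_anti₀ hV
    rw [prod_range_succ]
    exact mul_le_of_le_one_right hVj.le (VV_le_one j)
  unfold ch
  refine (abs_sub _ _).trans ?_
  have h4 : |if A ∈ fam b j then cc b j A else 0| ≤ (∏ i ∈ range (j + 1), VV i)⁻¹ := by
    split_ifs
    · exact h2.trans h3
    · rw [abs_zero]; positivity
  linarith

noncomputable def KK (j : ℕ) : ℝ := ∏ p ∈ pr 2 (yy (j + 1)), ((1 - 1 / (p:ℝ))⁻¹ * (1 + 1 / (p:ℝ)))

lemma KK_le : ∃ C : ℝ, 0 < C ∧ ∀ j, KK j ≤ C * xx j ^ 3 := by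
  obtain ⟨C, hC, h⟩ := N3
  refine ⟨4 * C, by positivity, fun j => (h (j + 1)).trans ?_⟩
  rw [xx_succ, mul_pow]
  have := xx_pos j
  have : 0 < C * xx j ^ 3 := by positivity
  nlinarith

lemma KK_eq (j : ℕ) : KK j = (∏ i ∈ range (j + 1), VV i)⁻¹ * ∏ p ∈ pr 2 (yy (j + 1)), (1 + 1 / (p:ℝ)) := by
  rw [KK, prod_mul_distrib, prod_inv_distrib, prod_VV]

lemma KK_nonneg (j : ℕ) : 0 ≤ KK j := by
  rw [KK_eq]
  have hV : 0 < ∏ i ∈ range (j + 1), VV i := prod_pos fun i _ => VV_pos i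
  have : 0 ≤ ∏ p ∈ pr 2 (yy (j + 1)), (1 + 1 / (p:ℝ)) := prod_nonneg fun p _ => by positivity
  positivity

lemma inv_dd (A : Finset ℕ) : 1 / (dd A : ℝ) = ∏ p ∈ A, (1 / (p:ℝ)) := by
  unfold dd; push_cast; rw [prod_div_distrib]; simp

lemma sum_inv_dd (P : Finset ℕ) : ∑ A ∈ P.powerset, 1 / (dd A : ℝ) = ∏ p ∈ P, (1 + 1 / (p:ℝ)) := by
  rw [prod_one_add]
  exact sum_congr rfl fun A _ => inv_dd A

lemma sum_inv_dd_mem (P : Finset ℕ) (q : ℕ) (hq : q ∈ P) :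
    ∑ A ∈ P.powerset with q ∈ A, 1 / (dd A : ℝ) ≤ 1 / (q:ℝ) * ∏ p ∈ P, (1 + 1 / (p:ℝ)) := by
  obtain ⟨P', hP', rfl⟩ : ∃ P', q ∉ P' ∧ P = insert q P' := ⟨P.erase q, by simp, by rw [insert_erase hq]⟩
  rw [sum_filter, sum_powerset_insert hP', prod_insert hP', ← sum_inv_dd P']
  have h1 : ∑ t ∈ P'.powerset, (if q ∈ t then 1 / (dd t : ℝ) else 0) = 0 :=
    sum_eq_zero fun t ht => if_neg fun h => hP' (mem_powerset.1 ht h)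
  have h2 : ∑ t ∈ P'.powerset, (if q ∈ insert q t then 1 / (dd (insert q t) : ℝ) else 0)
      = 1 / (q:ℝ) * ∑ A ∈ P'.powerset, 1 / (dd A : ℝ) := by
    rw [mul_sum]
    refine sum_congr rfl fun t ht => ?_
    rw [if_pos (mem_insert_self _ _), inv_dd, prod_insert (fun h => hP' (mem_powerset.1 ht h)), inv_dd]
  rw [h1, h2, zero_add]
  have h3 : 0 ≤ ∑ A ∈ P'.powerset, 1 / (dd A : ℝ) := sum_nonneg fun _ _ => by positivity
  have h4 : 0 ≤ 1 / (q:ℝ) := by positivity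
  gcongr
  nlinarith

lemma I2 (b : ℕ → ℕ) (hb : ∀ i, Even (b i)) (j : ℕ) :
    ∑ A ∈ fam b (j + 1), |ch b j A| / dd A ≤ 2 * KK j := by
  have hV : 0 < ∏ i ∈ range (j + 1), VV i := prod_pos fun i _ => VV_pos i
  calc ∑ A ∈ fam b (j + 1), |ch b j A| / dd A
      ≤ ∑ A ∈ fam b (j + 1), 2 * (∏ i ∈ range (j + 1), VV i)⁻¹ * (1 / dd A) := by
        refine sum_le_sum fun A _ => ?_
        rw [mul_one_div]
        gcongr
        exact ch_abs b hb j A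
    _ ≤ ∑ A ∈ (pr 2 (yy (j + 1))).powerset, 2 * (∏ i ∈ range (j + 1), VV i)⁻¹ * (1 / dd A) := by
        apply sum_le_sum_of_subset_of_nonneg
        · intro A hA; exact mem_powerset.2 (fam_sub _ _ _ hA)
        · intros; positivity
    _ = 2 * KK j := by rw [← mul_sum, sum_inv_dd, KK_eq]; ring

lemma dd_dvd_of_sub {A P : Finset ℕ} (h : A ⊆ P) : dd A ∣ dd P := prod_dvd_prod_of_subset _ _ _ h

lemma sum_bfam (b : ℕ → ℕ) (hb : ∀ i, Even (b i)) (j : ℕ) :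
    ∑ B ∈ bfam b j, (-1) ^ B.card / mm b j * (1 / (dd B : ℝ)) = 1 := by
  have h : mm b j ≠ 0 := (mm_pos b j (hb j)).ne'
  have : ∑ B ∈ bfam b j, (-1) ^ B.card * (1 / (dd B : ℝ)) = mm b j := by
    rw [mm, SS, bfam]
    refine sum_congr rfl fun B _ => ?_
    rw [inv_dd, prod_neg]
  rw [sum_congr rfl (fun B _ => show (-1) ^ B.card / mm b j * (1 / (dd B : ℝ)) =
    (mm b j)⁻¹ * ((-1) ^ B.card * (1 / (dd B : ℝ))) by ring), ← mul_sum, this, inv_mul_cancel₀ h]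

lemma I3 (b : ℕ → ℕ) (hb : ∀ i, Even (b i)) (j : ℕ) (q : ℕ) (_hq : 1 ≤ q) :
    |∑ A ∈ fam b (j + 1) with q ∣ dd A, ch b j A / dd A| ≤ KK j / yy j := by
  have hyy : (0:ℝ) < yy j := by
    have := two_le_yy j
    positivity
  have e0 := sum_ch b j (fun A => q ∣ dd A) (fun A => 1 / (dd A : ℝ))
  simp only [mul_one_div] at e0
  rw [e0]
  by_cases h : q ∣ dd (pr 2 (yy j))
  · have hcop : ∀ B ∈ bfam b j, Nat.Coprime q (dd B) := by
      intro B hB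
      apply Nat.Coprime.coprime_dvd_left h
      apply Nat.Coprime.coprime_dvd_right (dd_dvd_of_sub (bfam_sub b j B hB))
      unfold dd
      rw [Nat.coprime_prod_left_iff]
      intro p hp
      rw [Nat.coprime_prod_right_iff]
      intro r hr
      rw [Nat.coprime_primes (mem_pr.1 hp).2 (mem_pr.1 hr).2]
      rintro rfl
      exact disjoint_left.1 (pr_disj j) hp hr
    have : ∑ A ∈ fam b (j + 1) with q ∣ dd A, cc b (j + 1) A / dd A = ∑ A ∈ fam b j with q ∣ dd A, cc b j A / dd A := by
      rw [sum_filter, sum_filter, sum_fam_succ]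
      refine sum_congr rfl fun A hA => ?_
      have : ∀ B ∈ bfam b j, (if q ∣ dd (A ∪ B) then cc b (j + 1) (A ∪ B) / dd (A ∪ B) else 0) =
          (if q ∣ dd A then cc b j A / dd A else 0) * ((-1) ^ B.card / mm b j * (1 / (dd B : ℝ))) := by
        intro B hB
        have hd := disj_of b j hA hB
        rw [dd_union hd]
        have : (q ∣ dd A * dd B) = (q ∣ dd A) := propext (hcop B hB).dvd_mul_right
        simp only [this]
        split_ifs
        · unfold cc
          rw [card_union_of_disjoint hd, pow_add, prod_range_succ]
          push_cast
          ring
        · simp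
      rw [sum_congr rfl this, ← mul_sum, sum_bfam b hb j, mul_one]
    rw [this, sub_self, abs_zero]
    exact div_nonneg (KK_nonneg j) hyy.le
  · have h1 : (fam b j).filter (fun A => q ∣ dd A) = ∅ := by
      rw [filter_eq_empty_iff]
      intro A hA hqA
      exact h (hqA.trans (dd_dvd_of_sub (fam_sub b j A hA)))
    rw [h1, sum_empty, sub_zero]
    have hV : 0 < ∏ i ∈ range (j + 1), VV i := prod_pos fun i _ => VV_pos i
    by_cases h2 : q ∣ dd (pr 2 (yy (j + 1)))
    · obtain ⟨r, hr, hrq⟩ : ∃ r ∈ blk j, r ∣ q := by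
        by_contra hne
        push Not at hne
        apply h
        rw [pr_union, dd_union (pr_disj j)] at h2
        refine Nat.Coprime.dvd_of_dvd_mul_right ?_ h2
        unfold dd
        rw [Nat.coprime_prod_right_iff]
        intro r hr
        rw [Nat.coprime_comm, Nat.Prime.coprime_iff_not_dvd (mem_pr.1 hr).2]
        exact hne r hr
      have hrp := (mem_pr.1 hr).2
      calc |∑ A ∈ fam b (j + 1) with q ∣ dd A, cc b (j + 1) A / dd A|
          ≤ ∑ A ∈ fam b (j + 1) with q ∣ dd A, (∏ i ∈ range (j + 1), VV i)⁻¹ * (1 / dd A) := by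
            refine (abs_sum_le_sum_abs _ _).trans (sum_le_sum fun A _ => ?_)
            rw [abs_div, mul_one_div, Nat.abs_cast]
            gcongr
            exact cc_abs b hb (j + 1) A
        _ ≤ ∑ A ∈ (pr 2 (yy (j + 1))).powerset with r ∈ A, (∏ i ∈ range (j + 1), VV i)⁻¹ * (1 / dd A) := by
            apply sum_le_sum_of_subset_of_nonneg
            · intro A hA
              rw [mem_filter] at hA ⊢
              refine ⟨mem_powerset.2 (fam_sub _ _ _ hA.1), ?_⟩
              have hrd : r ∣ dd A := hrq.trans hA.2
              rw [dd, Prime.dvd_finset_prod_iff hrp.prime] at hrd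
              obtain ⟨p, hp, hrp2⟩ := hrd
              rwa [(Nat.prime_dvd_prime_iff_eq hrp (prime_of_mem_fam _ _ hA.1 p hp)).1 hrp2]
            · intros; positivity
        _ ≤ (∏ i ∈ range (j + 1), VV i)⁻¹ * (1 / (r:ℝ) * ∏ p ∈ pr 2 (yy (j + 1)), (1 + 1 / (p:ℝ))) := by
            rw [← mul_sum]
            gcongr
            apply sum_inv_dd_mem
            rw [pr_union]; exact mem_union_right _ hr
        _ = KK j * (1 / (r:ℝ)) := by rw [KK_eq]; ring
        _ ≤ KK j * (1 / (yy j : ℝ)) := by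
            have := KK_nonneg j
            have : (yy j : ℝ) ≤ r := by
              have := (mem_pr.1 hr).1.1
              exact_mod_cast this.le
            gcongr
        _ = KK j / yy j := by ring
    · have h1 : (fam b (j + 1)).filter (fun A => q ∣ dd A) = ∅ := by
        rw [filter_eq_empty_iff]
        intro A hA hqA
        exact h2 (hqA.trans (dd_dvd_of_sub (fam_sub b (j + 1) A hA)))
      rw [h1, sum_empty, abs_zero]
      exact div_nonneg (KK_nonneg j) hyy.le

lemma sum_xx (J : ℕ) : ∑ i ∈ range J, xx (i + 1) ≤ 3 * xx J := by
  induction J with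
  | zero => simp; exact (xx_pos 0).le
  | succ J ih => rw [sum_range_succ, xx_succ]; linarith

lemma sum_lvl (J : ℕ) : ∑ i ∈ range J, 2 * ((J:ℝ) - i) * xx (i + 1) ≤ 18 * xx J := by
  induction J with
  | zero => simp; exact (xx_pos 0).le
  | succ J ih =>
    have h := sum_xx (J + 1)
    have e : ∑ i ∈ range (J + 1), 2 * (((J + 1 : ℕ) : ℝ) - i) * xx (i + 1) =
      ∑ i ∈ range (J + 1), 2 * ((J:ℝ) - i) * xx (i + 1) + 2 * ∑ i ∈ range (J + 1), xx (i + 1) := by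
      rw [mul_sum, ← sum_add_distrib]
      refine sum_congr rfl fun i _ => ?_
      push_cast; ring
    rw [e, sum_range_succ, sub_self]
    rw [xx_succ] at h ⊢
    linarith

lemma dd_pr_le (z : ℕ) : dd (pr 2 z) ∣ primorial z := by
  unfold primorial dd
  apply prod_dvd_prod_of_subset
  intro p hp
  rw [mem_pr] at hp
  simp [hp.2]; omega

lemma level_aux (J : ℕ) (j : ℕ) (hj : j ≤ J) : ∀ A ∈ fam (bb J) j,
    (dd A : ℝ) ≤ primorial ⌊xx J⌋₊ * Real.exp (∑ i ∈ range j, 2 * ((J:ℝ) - i) * xx (i + 1)) := by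
  induction j with
  | zero =>
    intro A hA
    simp [fam] at hA
    subst hA
    simp [dd]
    exact_mod_cast primorial_pos _
  | succ j ih =>
    intro A hA
    have hpos : (1:ℝ) ≤ primorial ⌊xx J⌋₊ := by exact_mod_cast primorial_pos _
    by_cases hex : (yy (j + 1) : ℝ) ≤ xx J
    · have h1 : dd A ≤ primorial ⌊xx J⌋₊ := by
        have h2 : dd A ∣ primorial (yy (j + 1)) := (dd_dvd_of_sub (fam_sub _ _ A hA)).trans (dd_pr_le _)
        refine (Nat.le_of_dvd (primorial_pos _) h2).trans ?_
        exact primorial_mono (Nat.le_floor hex)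
      have h3 : (0:ℝ) ≤ ∑ i ∈ range (j + 1), 2 * ((J:ℝ) - i) * xx (i + 1) := by
        refine sum_nonneg fun i hi => ?_
        have : i ≤ J := by have := mem_range.1 hi; omega
        have : (i:ℝ) ≤ J := by exact_mod_cast this
        have := xx_pos (i + 1)
        have : (0:ℝ) ≤ J - i := by linarith
        positivity
      have h4 := Real.one_le_exp h3
      have h5 : (dd A : ℝ) ≤ primorial ⌊xx J⌋₊ := by exact_mod_cast h1
      nlinarith
    · rw [fam, mem_image] at hA
      obtain ⟨⟨A1, B⟩, hq, rfl⟩ := hA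
      rw [mem_product] at hq
      simp only at hq ⊢
      rw [dd_union (disj_of _ _ hq.1 hq.2), sum_range_succ, Real.exp_add]
      have hbJ : bb J j = 2 * (J - j) := by rw [bb, if_neg hex]
      have hB : (dd B : ℝ) ≤ Real.exp (2 * ((J:ℝ) - j) * xx (j + 1)) := by
        have hBc : B.card ≤ 2 * (J - j) := by
          have := hq.2
          rw [bfam, mem_filter, hbJ] at this
          exact this.2
        have h1 : dd B ≤ (yy (j + 1)) ^ B.card := by
          unfold dd
          apply prod_le_pow_card
          intro p hp
          exact (mem_pr.1 (bfam_sub _ _ B hq.2 hp)).1.2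
        have h2 : dd B ≤ (yy (j + 1)) ^ (2 * (J - j)) :=
          h1.trans (Nat.pow_le_pow_right (by have := two_le_yy (j + 1); omega) hBc)
        calc (dd B : ℝ) ≤ (yy (j + 1) : ℝ) ^ (2 * (J - j)) := by exact_mod_cast h2
          _ ≤ Real.exp (xx (j + 1)) ^ (2 * (J - j)) := by
            gcongr; exact yy_le _
          _ = _ := by
            rw [← Real.exp_nat_mul]; congr 1
            rw [Nat.cast_mul, Nat.cast_sub (by omega)]; push_cast; ring
      have := ih (by omega) A1 hq.1
      push_cast
      rw [← mul_assoc]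
      gcongr

lemma I4 (J j : ℕ) (hj : j < J) (A : Finset ℕ) (hA : A ∈ fam (bb J) (j + 1)) : (dd A : ℝ) ≤ Real.exp (20 * xx J) := by
  have h := level_aux J (j + 1) hj A hA
  have h1 : ∑ i ∈ range (j + 1), 2 * ((J:ℝ) - i) * xx (i + 1) ≤ 18 * xx J := by
    refine le_trans (sum_le_sum_of_subset_of_nonneg (range_subset_range.2 hj) ?_) (sum_lvl J)
    intro i hi _
    have : (i:ℝ) ≤ J := by exact_mod_cast (mem_range.1 hi).le
    have := xx_pos (i + 1)
    have : (0:ℝ) ≤ J - i := by linarith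
    positivity
  have h2 : (primorial ⌊xx J⌋₊ : ℝ) ≤ Real.exp (2 * xx J) := by
    calc (primorial ⌊xx J⌋₊ : ℝ) ≤ (4:ℝ) ^ ⌊xx J⌋₊ := by exact_mod_cast primorial_le_four_pow _
      _ = Real.exp (⌊xx J⌋₊ * Real.log 4) := by
        rw [Real.exp_nat_mul, Real.exp_log (by norm_num)]
      _ ≤ _ := by
        apply Real.exp_le_exp.2
        have := Nat.floor_le (xx_pos J).le
        have := log4_le
        have := log4_pos
        nlinarith [xx_pos J]
  calc (dd A : ℝ) ≤ _ := h
    _ ≤ Real.exp (2 * xx J) * Real.exp (18 * xx J) := by gcongr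
    _ = _ := by rw [← Real.exp_add]; congr 1; ring

lemma fam_congr (b b' : ℕ → ℕ) (j : ℕ) (h : ∀ i < j, b i = b' i) : fam b j = fam b' j := by
  induction j with
  | zero => rfl
  | succ j ih =>
    rw [fam, fam, ih (fun i hi => h i (by omega)), bfam, bfam, h j (by omega)]

lemma cc_congr (b b' : ℕ → ℕ) (j : ℕ) (h : ∀ i < j, b i = b' i) : cc b j = cc b' j := by
  funext A
  unfold cc
  congr 1
  refine prod_congr rfl fun i hi => ?_
  rw [mm, mm, h i (mem_range.1 hi)]

lemma hh_congr (b b' : ℕ → ℕ) (j : ℕ) (h : ∀ i < j + 1, b i = b' i) : hh b j = hh b' j := by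
  funext n
  unfold hh ch
  rw [fam_congr b b' (j + 1) h, cc_congr b b' (j + 1) h, fam_congr b b' j (fun i hi => h i (by omega)),
    cc_congr b b' j (fun i hi => h i (by omega))]

/-- exact parameters -/
noncomputable def be (i : ℕ) : ℕ := 2 * yy (i + 1)

lemma be_even (i : ℕ) : Even (be i) := by simp [be]

lemma I5 (J j : ℕ) (h : (yy (j + 1) : ℝ) ≤ xx J) : hh (bb J) j = hh be j := by
  apply hh_congr
  intro i hi
  rw [bb, if_pos, be]
  refine le_trans ?_ h
  exact_mod_cast yy_mono (by omega)

lemma hh_periodic (b : ℕ → ℕ) (j L n k : ℕ) (hL : dd (pr 2 (yy (j + 1))) ∣ L) : hh b j (n + k * L) = hh b j n := by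
  unfold hh
  congr 1
  apply filter_congr
  intro A hA
  have : dd A ∣ k * L := ((dd_dvd_of_sub (fam_sub _ _ A hA)).trans hL).mul_left k
  exact (Nat.dvd_add_iff_left this).symm

end PM

namespace PM
open Finset

lemma nrm_mono (p : ℝ) (hp : 0 ≤ p) {F G : ℤ → ENNReal} (h : ∀ x, F x ≤ G x) : nrm p F ≤ nrm p G := by
  unfold nrm
  gcongr with x
  exact h x

lemma nrm_le_iff (p : ℝ) (hp : 0 < p) (F : ℤ → ENNReal) (B : ENNReal) :
    nrm p F ≤ B ↔ ∀ Y : Finset ℤ, (∑ x ∈ Y, F x ^ p) ^ (1 / p) ≤ B := by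
  unfold nrm
  constructor
  · intro h Y
    refine le_trans ?_ h
    gcongr
    exact ENNReal.sum_le_tsum Y
  · intro h
    rw [one_div, ENNReal.rpow_inv_le_iff hp, ENNReal.tsum_eq_iSup_sum]
    refine iSup_le fun Y => ?_
    rw [← ENNReal.rpow_inv_le_iff hp, ← one_div]
    exact h Y

lemma nrm_finset_le (p : ℝ) (hp : 0 < p) (F : ℤ → ENNReal) (Y : Finset ℤ) :
    (∑ x ∈ Y, F x ^ p) ^ (1 / p) ≤ nrm p F := (nrm_le_iff p hp F _).1 le_rfl Y

lemma nrm_zero (p : ℝ) (hp : 0 < p) : nrm p (fun _ => 0) = 0 := by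
  unfold nrm
  simp [ENNReal.zero_rpow_of_pos hp, hp]

lemma nrm_add (p : ℝ) (hp : 1 ≤ p) (F G : ℤ → ENNReal) :
    nrm p (fun x => F x + G x) ≤ nrm p F + nrm p G := by
  have hp0 : 0 < p := by linarith
  rw [nrm_le_iff p hp0]
  intro Y
  refine (ENNReal.Lp_add_le Y F G hp).trans ?_
  exact add_le_add (nrm_finset_le p hp0 F Y) (nrm_finset_le p hp0 G Y)

lemma nrm_sum {ι : Type*} (p : ℝ) (hp : 1 ≤ p) (s : Finset ι) (F : ι → ℤ → ENNReal) :
    nrm p (fun x => ∑ i ∈ s, F i x) ≤ ∑ i ∈ s, nrm p (F i) := by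
  classical
  induction s using Finset.induction_on with
  | empty => simp [nrm_zero p (by linarith : 0 < p)]
  | insert a s ha ih =>
    simp only [sum_insert ha]
    exact (nrm_add p hp _ _).trans (add_le_add le_rfl ih)

lemma nrm_const_mul (p : ℝ) (hp : 0 < p) (c : ENNReal) (F : ℤ → ENNReal) :
    nrm p (fun x => c * F x) = c * nrm p F := by
  unfold nrm
  simp_rw [ENNReal.mul_rpow_of_nonneg _ _ hp.le]
  rw [ENNReal.tsum_mul_left, ENNReal.mul_rpow_of_nonneg _ _ (by positivity), ← ENNReal.rpow_mul,
    mul_one_div_cancel hp.ne', ENNReal.rpow_one]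

lemma nrm_shift (p : ℝ) (F : ℤ → ENNReal) (d : ℤ) : nrm p (fun x => F (x + d)) = nrm p F := by
  unfold nrm
  congr 1
  exact (Equiv.addRight d).tsum_eq (fun x => F x ^ p)

lemma fin_nrm (p : ℝ) (hp : 0 < p) (g : ℤ → ℂ) (Y : Finset ℤ) :
    (∑ x ∈ Y, ‖g x‖ₑ ^ p) ^ (1 / p) = ENNReal.ofReal ((∑ x ∈ Y, ‖g x‖ ^ p) ^ (1 / p)) := by
  rw [← ENNReal.ofReal_rpow_of_nonneg (sum_nonneg fun x _ => by positivity) (by positivity),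
    ENNReal.ofReal_sum_of_nonneg (fun x _ => by positivity)]
  congr 1
  refine sum_congr rfl fun x _ => ?_
  rw [← ENNReal.ofReal_rpow_of_nonneg (norm_nonneg _) hp.le, ofReal_norm]

lemma nrm_supp (p : ℝ) (hp : 0 < p) (g : ℤ → ℂ) (X : Finset ℤ) (hX : ∀ x, x ∉ X → g x = 0) :
    nrm p (fun x => ‖g x‖ₑ) = ENNReal.ofReal ((∑ x ∈ X, ‖g x‖ ^ p) ^ (1 / p)) := by
  rw [← fin_nrm p hp, nrm, tsum_eq_sum (s := X)]
  intro x hx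
  simp [hX x hx, hp]

/-- maximal operator bound on finitely supported functions -/
def MaxBd {ι : Type} (T : ι → (ℤ → ℂ) → ℤ → ℂ) (s : Finset ι) (p B : ℝ) : Prop :=
  ∀ f : ℤ → ℂ, f.support.Finite →
    nrm p (fun x => ⨆ m ∈ s, ‖T m f x‖ₑ) ≤ ENNReal.ofReal B * nrm p (fun x => ‖f x‖ₑ)

lemma interp {ι : Type} (T : ι → (ℤ → ℂ) →ₗ[ℂ] (ℤ → ℂ)) (s : Finset ι) (p0 p1 p θ B0 B1 : ℝ)
    (hp0 : 1 < p0) (hp1 : 1 < p1) (hp : 1 < p) (hθ0 : 0 ≤ θ) (hθ1 : θ ≤ 1)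
    (hpθ : 1 / p = (1 - θ) / p0 + θ / p1) (hB0 : 0 ≤ B0) (hB1 : 0 ≤ B1)
    (h0 : MaxBd (fun m f => T m f) s p0 B0) (h1 : MaxBd (fun m f => T m f) s p1 B1) :
    MaxBd (fun m f => T m f) s p (B0 ^ (1 - θ) * B1 ^ θ) := by
  classical
  intro f hf
  have hp' : 0 < p := by linarith
  rcases s.eq_empty_or_nonempty with rfl | hs
  · simp [nrm_zero p hp']
  set X := hf.toFinset with hX
  have hXf : ∀ x, x ∉ X → f x = 0 := by
    intro x hx; by_contra h; exact hx (by simpa [hX] using h)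
  have hmax : ∀ x, ∃ m ∈ s, ∀ m' ∈ s, ‖T m' f x‖ₑ ≤ ‖T m f x‖ₑ := fun x => s.exists_max_image _ hs
  choose μ hμ hμ2 using hmax
  have hsup : ∀ x, (⨆ m ∈ s, ‖T m f x‖ₑ) = ‖T (μ x) f x‖ₑ := fun x =>
    le_antisymm (iSup₂_le fun m hm => hμ2 x m hm) (le_iSup₂_of_le (μ x) (hμ x) le_rfl)
  simp_rw [hsup]
  rw [nrm_le_iff p hp']
  intro Y
  set a : ℤ → ℤ → ℂ := fun x y => T (μ x) (Pi.single y 1) x with ha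
  have key : ∀ (g : ℤ → ℂ) (x : ℤ), ∑ y ∈ X, a x y * g y = T (μ x) (fun y => if y ∈ X then g y else 0) x := by
    intro g x
    have : (fun y => if y ∈ X then g y else 0) = ∑ y ∈ X, g y • (Pi.single y 1 : ℤ → ℂ) := by
      funext z
      rw [Finset.sum_apply]
      simp [Pi.single_apply]
    rw [this, map_sum, Finset.sum_apply]
    refine sum_congr rfl fun y _ => ?_
    rw [map_smul, Pi.smul_apply, smul_eq_mul, mul_comm]
  have step : ∀ q B : ℝ, 1 < q → 0 ≤ B → MaxBd (fun m f => T m f) s q B → ∀ g : ℤ → ℂ,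
      (∑ x ∈ Y, ‖∑ y ∈ X, a x y * g y‖ ^ q) ^ (1 / q) ≤ B * (∑ y ∈ X, ‖g y‖ ^ q) ^ (1 / q) := by
    intro q B hq hB hM g
    have hq' : 0 < q := by linarith
    set g' : ℤ → ℂ := fun y => if y ∈ X then g y else 0 with hg'
    have hg'X : ∀ x, x ∉ X → g' x = 0 := fun x hx => by simp [hg', hx]
    have h := hM g' (X.finite_toSet.subset fun x hx => by
      by_contra h; exact hx (hg'X x h))
    rw [nrm_supp q hq' g' X hg'X, ← ENNReal.ofReal_mul hB] at h
    have h2 := (nrm_finset_le q hq' _ Y).trans h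
    have h3 : (∑ x ∈ Y, ‖T (μ x) g' x‖ₑ ^ q) ^ (1 / q) ≤ ENNReal.ofReal (B * (∑ x ∈ X, ‖g' x‖ ^ q) ^ (1 / q)) := by
      refine le_trans ?_ h2
      gcongr with x hx
      exact le_iSup₂_of_le (f := fun m (_ : m ∈ s) => ‖T m g' x‖ₑ) (μ x) (hμ x) le_rfl
    rw [fin_nrm q hq' (fun x => T (μ x) g' x), ENNReal.ofReal_le_ofReal_iff (by positivity)] at h3
    simp_rw [key]
    refine h3.trans (le_of_eq ?_)
    congr 2
    refine sum_congr rfl fun x hx => by simp [hg', hx]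
  have hr := rt (X := X) (Y := Y) a p0 p1 p θ B0 B1 hp0 hp1 hp hθ0 hθ1 hpθ hB0 hB1
    (step p0 B0 hp0 hB0 h0) (step p1 B1 hp1 hB1 h1) f
  have hfX : (fun y => if y ∈ X then f y else 0) = f := by
    funext y
    split_ifs with h
    · rfl
    · exact (hXf y h).symm
  simp_rw [key, hfX] at hr
  rw [fin_nrm p hp' (fun x => T (μ x) f x), nrm_supp p hp' f X hXf, ← ENNReal.ofReal_mul (by positivity)]
  exact ENNReal.ofReal_le_ofReal hr

/-- Hardy-Littlewood maximal function with step `d` -/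
noncomputable def HLM (d : ℤ) (K0 : ℕ) (F : ℤ → ℝ) (x : ℤ) : ENNReal :=
  ⨆ K ∈ range K0, ENNReal.ofReal ((∑ k ∈ range (K + 1), F (x + k * d)) / (K + 1))

lemma nrm_HLM (p : ℝ) (hp : 1 < p) (hp2 : p ≤ 2) (F : ℤ → ℝ) (hF : ∀ x, 0 ≤ F x)
    (hfin : F.support.Finite) (d : ℤ) (K0 : ℕ) :
    nrm p (HLM d K0 F) ≤ ENNReal.ofReal (8 / (p - 1)) * nrm p (fun x => ENNReal.ofReal (F x)) :=
  hl p hp hp2 F hF hfin d K0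

lemma le_HLM (d : ℤ) (K0 N : ℕ) (h1 : 1 ≤ N) (hN : N ≤ K0) (F : ℤ → ℝ) (x : ℤ) :
    ENNReal.ofReal ((∑ k ∈ range N, F (x + k * d)) / N) ≤ HLM d K0 F x := by
  obtain ⟨K, rfl⟩ : ∃ K, N = K + 1 := ⟨N - 1, by omega⟩
  refine le_iSup₂_of_le (f := fun K (_ : K ∈ range K0) => ENNReal.ofReal ((∑ k ∈ range (K + 1), F (x + k * d)) / (K + 1))) K (mem_range.2 (by omega)) ?_
  push_cast; rfl

lemma sum_Icc_shift (N : ℕ) (F : ℤ → ℝ) (x : ℤ) (d : ℤ) :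
    ∑ n ∈ Icc 1 N, F (x + n * d) = ∑ k ∈ range N, F (x + d + k * d) := by
  rw [range_eq_Ico, sum_Ico_eq_sum_range]
  rw [show Icc 1 N = Ico 1 (N + 1) by ext; simp, sum_Ico_eq_sum_range]
  refine sum_congr (by simp) fun k _ => ?_
  congr 1; push_cast; ring

end PM

namespace PM
open Finset

lemma jj_ex (m : ℕ) (hm : 200 ≤ m) : ∃ J, 200 * xx J ≤ m ∧ (m:ℝ) < 200 * xx (J + 1) := by
  have hm' : (200:ℝ) ≤ m := by exact_mod_cast hm
  obtain ⟨n, h1, h2⟩ := exists_nat_pow_near (x := (m:ℝ) / 200) (y := 3 / 2) (by linarith) (by norm_num)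
  refine ⟨n, ?_, ?_⟩
  · unfold xx; linarith
  · unfold xx; linarith

noncomputable def jj (m : ℕ) : ℕ := if h : 200 ≤ m then (jj_ex m h).choose else 0

lemma jj_le (m : ℕ) (hm : 200 ≤ m) : 200 * xx (jj m) ≤ m := by
  rw [jj, dif_pos hm]; exact (jj_ex m hm).choose_spec.1

lemma jj_lt (m : ℕ) (hm : 200 ≤ m) : (m:ℝ) < 300 * xx (jj m) := by
  have h := (jj_ex m hm).choose_spec.2
  rw [xx_succ] at h
  rw [jj, dif_pos hm]; linarith

noncomputable def QQ (J : ℕ) : ℕ := primorial ⌊xx J⌋₊ ^ 10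

lemma QQ_pos (J : ℕ) : 0 < QQ J := pow_pos (primorial_pos _) _

lemma QQ_le (m : ℕ) (hm : 200 ≤ m) : QQ (jj m) ≤ 2 ^ m := by
  have h1 := jj_le m hm
  have h2 := Nat.floor_le (xx_pos (jj m)).le
  have h3 : (20 * ⌊xx (jj m)⌋₊ : ℝ) ≤ m := by linarith [xx_pos (jj m)]
  have h4 : 20 * ⌊xx (jj m)⌋₊ ≤ m := by exact_mod_cast h3
  calc QQ (jj m) ≤ (4 ^ ⌊xx (jj m)⌋₊) ^ 10 := Nat.pow_le_pow_left (primorial_le_four_pow _) _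
    _ = 2 ^ (20 * ⌊xx (jj m)⌋₊) := by
      rw [show (4:ℕ) = 2 ^ 2 by norm_num, ← pow_mul, ← pow_mul]; congr 1; ring
    _ ≤ _ := Nat.pow_le_pow_right (by norm_num) h4

noncomputable def NN (m : ℕ) : ℕ := QQ (jj m) * ((2 ^ m + QQ (jj m) - 1) / QQ (jj m))

lemma NN_ge (m : ℕ) : 2 ^ m ≤ NN m := by
  have hQ := QQ_pos (jj m)
  unfold NN
  have := Nat.lt_mul_div_succ (2 ^ m + QQ (jj m) - 1) hQ
  rw [mul_add] at this
  omega

lemma NN_le (m : ℕ) (hm : 200 ≤ m) : NN m ≤ 2 * 2 ^ m := by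
  have hQ := QQ_le m hm
  have := Nat.mul_div_le (2 ^ m + QQ (jj m) - 1) (QQ (jj m))
  unfold NN
  omega

lemma NN_pos (m : ℕ) : 1 ≤ NN m := le_trans (Nat.one_le_two_pow) (NN_ge m)

lemma QQ_dvd (m : ℕ) : QQ (jj m) ∣ NN m := Dvd.intro _ rfl

/-- weighted average operator -/
noncomputable def AV (h : ℕ → ℝ) (N : ℕ) : (ℤ → ℂ) →ₗ[ℂ] (ℤ → ℂ) where
  toFun f x := (N:ℂ)⁻¹ * ∑ n ∈ Icc 1 N, (h n : ℂ) * f (x + n)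
  map_add' f g := by
    funext x
    simp only [Pi.add_apply, mul_add, sum_add_distrib]
  map_smul' c f := by
    funext x
    simp only [Pi.smul_apply, smul_eq_mul, RingHom.id_apply, mul_sum]
    exact sum_congr rfl fun n _ => by ring

lemma AV_apply (h : ℕ → ℝ) (N : ℕ) (f : ℤ → ℂ) (x : ℤ) :
    AV h N f x = (N:ℂ)⁻¹ * ∑ n ∈ Icc 1 N, (h n : ℂ) * f (x + n) := rfl

lemma hat_bd (b : ℕ → ℕ) (hb : ∀ i, Even (b i)) (j N D : ℕ) (hD : ∀ A ∈ fam b (j + 1), dd A ≤ D)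
    (hN : 4 * D ^ 2 ≤ N) (hN1 : 1 ≤ N) (hND : (yy j : ℝ) * D ≤ Real.sqrt N) (ξ : ℝ) :
    ‖∑ n ∈ Icc 1 N, (hh b j n : ℂ) * ee (n * ξ)‖ ≤ N * (17 * (KK j / yy j)) := by
  have hyy : (0:ℝ) < yy j := by
    have := two_le_yy j
    positivity
  have h := lemmaS (fam b (j + 1)) (ch b j) dd D N (fun A hA => dd_pos A (prime_of_mem_fam _ _ hA)) hD hN hN1
    (KK j / yy j) (div_nonneg (KK_nonneg j) hyy.le) (fun q hq => I3 b hb j q hq) ξ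
  refine h.trans ?_
  have hK := KK_nonneg j
  have hNp : (0:ℝ) < Real.sqrt N := Real.sqrt_pos.2 (by exact_mod_cast hN1)
  have h1 : ∑ A ∈ fam b (j + 1), |ch b j A| ≤ D * (2 * KK j) := by
    refine le_trans ?_ (mul_le_mul_of_nonneg_left (I2 b hb j) (Nat.cast_nonneg D))
    rw [mul_sum]
    refine sum_le_sum fun A hA => ?_
    have h2 : (1:ℝ) ≤ dd A := by exact_mod_cast dd_pos A (prime_of_mem_fam _ _ hA)
    have h3 : (dd A : ℝ) ≤ D := by exact_mod_cast hD A hA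
    rw [mul_div_assoc', le_div_iff₀ (by linarith), mul_comm]
    gcongr
  have h2 : 8 * (Real.sqrt N)⁻¹ * ∑ A ∈ fam b (j + 1), |ch b j A| ≤ 16 * (KK j / yy j) := by
    calc 8 * (Real.sqrt N)⁻¹ * ∑ A ∈ fam b (j + 1), |ch b j A| ≤ 8 * (Real.sqrt N)⁻¹ * (D * (2 * KK j)) := by gcongr
      _ = 16 * KK j * ((D:ℝ) / Real.sqrt N) := by ring
      _ ≤ 16 * KK j * (1 / yy j) := by
        apply mul_le_mul_of_nonneg_left _ (by positivity)
        rw [div_le_div_iff₀ hNp hyy]; linarith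
      _ = _ := by ring
  gcongr
  linarith

lemma AV_l2 (h : ℕ → ℝ) (N : ℕ) (hN1 : 1 ≤ N) (B : ℝ) (hB0 : 0 ≤ B)
    (hB : ∀ ξ : ℝ, ‖∑ n ∈ Icc 1 N, (h n : ℂ) * ee (n * ξ)‖ ≤ N * B)
    (f : ℤ → ℂ) (hf : f.support.Finite) :
    nrm 2 (fun x => ‖AV h N f x‖ₑ) ≤ ENNReal.ofReal B * nrm 2 (fun x => ‖f x‖ₑ) := by
  set X := hf.toFinset with hX
  have hXf : ∀ x, x ∉ X → f x = 0 := by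
    intro x hx; by_contra h; exact hx (by simpa [hX] using h)
  rw [nrm_supp 2 (by norm_num) f X hXf, nrm_le_iff 2 (by norm_num)]
  intro Y
  rw [fin_nrm 2 (by norm_num), ← ENNReal.ofReal_mul hB0]
  apply ENNReal.ofReal_le_ofReal
  have hc := conv_l2 f X hXf (fun n => (h n : ℂ)) (Icc 1 N) (N * B) hB Y
  have hNr : (0:ℝ) < N := by exact_mod_cast hN1
  have e : ∑ x ∈ Y, ‖AV h N f x‖ ^ (2:ℝ) ≤ B ^ 2 * ∑ x ∈ X, ‖f x‖ ^ 2 := by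
    have : ∀ x, ‖AV h N f x‖ ^ (2:ℝ) = ((N:ℝ) ^ 2)⁻¹ * ‖∑ n ∈ Icc 1 N, (h n : ℂ) * f (x + n)‖ ^ 2 := by
      intro x
      rw [AV_apply, norm_mul, norm_inv, Complex.norm_natCast, Real.rpow_ofNat, mul_pow, inv_pow]
    simp_rw [this]
    rw [← mul_sum, inv_mul_le_iff₀ (by positivity)]
    linarith [hc]
  rw [← Real.sqrt_eq_rpow, ← Real.sqrt_eq_rpow]
  simp_rw [Real.rpow_ofNat] at e ⊢
  refine (Real.sqrt_le_sqrt e).trans (le_of_eq ?_)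
  rw [Real.sqrt_mul (by positivity), Real.sqrt_sq hB0]

lemma sum_dvd_Icc (N d : ℕ) (hd : 1 ≤ d) (G : ℕ → ℝ) :
    ∑ n ∈ Icc 1 N with d ∣ n, G n = ∑ k ∈ Icc 1 (N / d), G (k * d) := by
  symm
  apply sum_bij (fun k _ => k * d)
  · intro k hk
    simp only [mem_Icc, mem_filter] at hk ⊢
    refine ⟨⟨Nat.mul_pos hk.1 hd, (Nat.le_div_iff_mul_le hd).1 hk.2⟩, Dvd.intro_left k rfl⟩
  · intro a _ b _ h
    exact Nat.eq_of_mul_eq_mul_right hd h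
  · intro n hn
    simp only [mem_Icc, mem_filter] at hn
    obtain ⟨⟨h1, h2⟩, k, rfl⟩ := hn
    refine ⟨k, ?_, by ring⟩
    rw [mem_Icc]
    refine ⟨Nat.pos_of_ne_zero (by rintro rfl; simp at h1), (Nat.le_div_iff_mul_le hd).2 (by rw [mul_comm]; exact h2)⟩
  · intros; rfl

lemma AV_hh_le (b : ℕ → ℕ) (hb : ∀ i, Even (b i)) (j N K0 : ℕ) (hN1 : 1 ≤ N) (hK0 : N ≤ K0) (f : ℤ → ℂ) (x : ℤ) :
    ‖AV (hh b j) N f x‖ₑ ≤ ∑ A ∈ (pr 2 (yy (j + 1))).powerset,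
      ENNReal.ofReal (2 * (∏ i ∈ range (j + 1), VV i)⁻¹ * (1 / dd A)) * HLM (dd A) K0 (fun y => ‖f y‖) (x + dd A) := by
  have hV : 0 < ∏ i ∈ range (j + 1), VV i := prod_pos fun i _ => VV_pos i
  set V := 2 * (∏ i ∈ range (j + 1), VV i)⁻¹ with hVd
  have hV0 : 0 ≤ V := by positivity
  have hNr : (0:ℝ) < N := by exact_mod_cast hN1
  have hdp : ∀ A ∈ (pr 2 (yy (j + 1))).powerset, 1 ≤ dd A := fun A hA =>
    dd_pos A fun p hp => (mem_pr.1 (mem_powerset.1 hA hp)).2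
  have h1 : ‖AV (hh b j) N f x‖ ≤ ∑ A ∈ (pr 2 (yy (j + 1))).powerset,
      V * ((N:ℝ)⁻¹ * ∑ k ∈ Icc 1 (N / dd A), ‖f (x + k * (dd A : ℤ))‖) := by
    rw [AV_apply, norm_mul, norm_inv, Complex.norm_natCast]
    have : ∀ n, ‖((hh b j n : ℝ) : ℂ) * f (x + n)‖ ≤ ∑ A ∈ (pr 2 (yy (j + 1))).powerset, if dd A ∣ n then V * ‖f (x + n)‖ else 0 := by
      intro n
      rw [norm_mul, Complex.norm_real, Real.norm_eq_abs]
      calc |hh b j n| * ‖f (x + n)‖ ≤ (∑ A ∈ fam b (j + 1) with dd A ∣ n, V) * ‖f (x + n)‖ := by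
            gcongr
            exact (abs_sum_le_sum_abs _ _).trans (sum_le_sum fun A _ => ch_abs b hb j A)
        _ = ∑ A ∈ fam b (j + 1), if dd A ∣ n then V * ‖f (x + n)‖ else 0 := by
            rw [sum_mul, sum_filter]
        _ ≤ _ := by
            apply sum_le_sum_of_subset_of_nonneg
            · intro A hA; exact mem_powerset.2 (fam_sub _ _ _ hA)
            · intros; split_ifs <;> positivity
    calc (N:ℝ)⁻¹ * ‖∑ n ∈ Icc 1 N, ((hh b j n : ℝ) : ℂ) * f (x + n)‖
        ≤ (N:ℝ)⁻¹ * ∑ n ∈ Icc 1 N, ∑ A ∈ (pr 2 (yy (j + 1))).powerset, if dd A ∣ n then V * ‖f (x + n)‖ else 0 := by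
          gcongr
          exact (norm_sum_le _ _).trans (sum_le_sum fun n _ => this n)
      _ = _ := by
          rw [sum_comm, mul_sum]
          refine sum_congr rfl fun A hA => ?_
          rw [← sum_filter, sum_dvd_Icc N (dd A) (hdp A hA) (fun n => V * ‖f (x + n)‖), ← mul_sum]
          push_cast; ring
  rw [← ofReal_norm]
  refine (ENNReal.ofReal_le_ofReal h1).trans ?_
  rw [ENNReal.ofReal_sum_of_nonneg (fun A _ => by positivity)]
  refine sum_le_sum fun A hA => ?_
  have hd := hdp A hA
  have hdr : (0:ℝ) < dd A := by exact_mod_cast hd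
  rcases Nat.eq_zero_or_pos (N / dd A) with h0 | hpos
  · rw [h0]; simp
  · have h2 := le_HLM (dd A) K0 (N / dd A) hpos ((Nat.div_le_self _ _).trans hK0) (fun y => ‖f y‖) (x + dd A)
    rw [← sum_Icc_shift (N / dd A) (fun y => ‖f y‖)] at h2
    refine le_trans ?_ (mul_le_mul_right h2 _)
    rw [← ENNReal.ofReal_mul (by positivity)]
    apply ENNReal.ofReal_le_ofReal
    rw [mul_assoc V]
    apply mul_le_mul_of_nonneg_left _ hV0
    set S := ∑ k ∈ Icc 1 (N / dd A), ‖f (x + k * (dd A : ℤ))‖ with hS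
    have hS0 : 0 ≤ S := sum_nonneg fun _ _ => norm_nonneg _
    have h3 : ((N / dd A : ℕ) : ℝ) * dd A ≤ N := by exact_mod_cast Nat.div_mul_le_self N (dd A)
    have h4 : (0:ℝ) < (N / dd A : ℕ) := by exact_mod_cast hpos
    rw [div_mul_div_comm, one_mul, inv_mul_eq_div]
    rw [mul_comm] at h3
    gcongr

lemma bd_one (p : ℝ) (hp : 1 < p) (hp2 : p ≤ 2) (b : ℕ → ℕ → ℕ) (hb : ∀ J i, Even (b J i)) (N : ℕ → ℕ) (hN : ∀ m, 1 ≤ N m) (j : ℕ) (s : Finset ℕ) :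
    MaxBd (fun m f => AV (hh (b m) j) (N m) f) s p (16 * KK j / (p - 1)) := by
  intro f hf
  have hV : 0 < ∏ i ∈ range (j + 1), VV i := prod_pos fun i _ => VV_pos i
  set V := 2 * (∏ i ∈ range (j + 1), VV i)⁻¹ with hVd
  have hV0 : 0 ≤ V := by positivity
  set K0 := ∑ m ∈ s, N m with hK0
  have h1 : ∀ x, (⨆ m ∈ s, ‖AV (hh (b m) j) (N m) f x‖ₑ) ≤ ∑ A ∈ (pr 2 (yy (j + 1))).powerset,
      ENNReal.ofReal (V * (1 / dd A)) * HLM (dd A) K0 (fun y => ‖f y‖) (x + dd A) := by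
    intro x
    refine iSup₂_le fun m hm => ?_
    exact AV_hh_le (b m) (hb m) j (N m) K0 (hN m) (single_le_sum (fun _ _ => Nat.zero_le _) hm) f x
  have hsupp : (fun y => ‖f y‖).support.Finite := by
    refine hf.subset fun x hx h0 => hx ?_
    simp [h0]
  have hp0 : 0 < p - 1 := by linarith
  calc _ ≤ _ := nrm_mono p (by linarith) h1
    _ ≤ ∑ A ∈ (pr 2 (yy (j + 1))).powerset, nrm p (fun x => ENNReal.ofReal (V * (1 / dd A)) * HLM (dd A) K0 (fun y => ‖f y‖) (x + dd A)) :=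
      nrm_sum p hp.le _ _
    _ ≤ ∑ A ∈ (pr 2 (yy (j + 1))).powerset, ENNReal.ofReal (V * (1 / dd A)) * (ENNReal.ofReal (8 / (p - 1)) * nrm p (fun x => ‖f x‖ₑ)) := by
      refine sum_le_sum fun A _ => ?_
      rw [nrm_const_mul p (by linarith) _ (fun x => HLM (dd A) K0 (fun y => ‖f y‖) (x + dd A)), nrm_shift p (HLM (dd A) K0 (fun y => ‖f y‖))]
      gcongr
      refine (nrm_HLM p hp hp2 _ (fun _ => norm_nonneg _) hsupp _ _).trans (le_of_eq ?_)
      simp_rw [ofReal_norm]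
    _ = _ := by
      rw [← sum_mul, ← ENNReal.ofReal_sum_of_nonneg (fun A _ => by positivity), ← mul_sum, sum_inv_dd, ← mul_assoc,
        ← ENNReal.ofReal_mul]
      · congr 2
        rw [hVd, KK_eq]; ring
      · have : 0 ≤ ∏ p ∈ pr 2 (yy (j + 1)), (1 + 1 / (p:ℝ)) := prod_nonneg fun p _ => by positivity
        positivity

end PM

namespace PM
open Finset

lemma sup_l2 {ι : Type} (s : Finset ι) (F : ι → ℤ → ENNReal) (c : ENNReal) (h : ∀ m ∈ s, nrm 2 (F m) ≤ c) :
    nrm 2 (fun x => ⨆ m ∈ s, F m x) ≤ (s.card : ENNReal) ^ (1 / 2 : ℝ) * c := by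
  have h1 : ∑' x, (⨆ m ∈ s, F m x) ^ (2:ℝ) ≤ s.card * c ^ (2:ℝ) := by
    calc ∑' x, (⨆ m ∈ s, F m x) ^ (2:ℝ) ≤ ∑' x, ∑ m ∈ s, F m x ^ (2:ℝ) := by
          refine ENNReal.tsum_le_tsum fun x => ?_
          rw [← ENNReal.le_rpow_inv_iff (by norm_num)]
          refine iSup₂_le fun m hm => ?_
          rw [ENNReal.le_rpow_inv_iff (by norm_num)]
          exact single_le_sum (f := fun m => F m x ^ (2:ℝ)) (fun _ _ => zero_le) hm
      _ = ∑ m ∈ s, ∑' x, F m x ^ (2:ℝ) := by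
          rw [Summable.tsum_finsetSum fun _ _ => ENNReal.summable]
      _ ≤ ∑ m ∈ s, c ^ (2:ℝ) := by
          refine sum_le_sum fun m hm => ?_
          have := h m hm
          rw [nrm, one_div, ENNReal.rpow_inv_le_iff (by norm_num)] at this
          exact this
      _ = _ := by rw [sum_const, nsmul_eq_mul]
  rw [nrm]
  calc _ ≤ (s.card * c ^ (2:ℝ)) ^ (1 / 2 : ℝ) := by gcongr
    _ = _ := by
      rw [ENNReal.mul_rpow_of_nonneg _ _ (by norm_num), ← ENNReal.rpow_mul]
      norm_num

lemma yy_pos (j : ℕ) : (0:ℝ) < yy j := by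
  have := two_le_yy j
  positivity

lemma two_pow_ge (m : ℕ) (hm : 200 ≤ m) : Real.exp (120 * xx (jj m)) ≤ 2 ^ m := by
  have h1 := jj_le m hm
  have h2 := Real.log_two_gt_d9
  rw [← Real.exp_log (show (0:ℝ) < 2 ^ m by positivity), Real.log_pow]
  apply Real.exp_le_exp.2
  nlinarith [xx_pos (jj m)]

lemma non_single (m j : ℕ) (hm : 200 ≤ m) (hj : j < jj m) (f : ℤ → ℂ) (hf : f.support.Finite) :
    nrm 2 (fun x => ‖AV (hh (bb (jj m)) j) (NN m) f x‖ₑ) ≤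
      ENNReal.ofReal (17 * (KK j / yy j)) * nrm 2 (fun x => ‖f x‖ₑ) := by
  have hK := KK_nonneg j
  have hy := yy_pos j
  apply AV_l2 _ _ (NN_pos m) _ (by positivity) _ f hf
  set E := Real.exp (20 * xx (jj m)) with hE
  have hx1 := xx_one_le (jj m)
  have hE1 : 0 < E := Real.exp_pos _
  have hE4 : 4 ≤ E := by
    have := Real.add_one_le_exp (20 * xx (jj m))
    linarith
  have hN : E ^ 6 ≤ NN m := by
    have h1 : (2:ℝ) ^ m ≤ NN m := by exact_mod_cast NN_ge m
    refine le_trans ?_ ((two_pow_ge m hm).trans h1)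
    rw [hE, ← Real.exp_nat_mul]
    apply Real.exp_le_exp.2
    push_cast; linarith
  have hD : ((⌊E⌋₊ : ℕ) : ℝ) ≤ E := Nat.floor_le hE1.le
  have hyE : (yy j : ℝ) ≤ E := by
    refine (yy_le j).trans (Real.exp_le_exp.2 ?_)
    have := xx_mono hj.le
    linarith
  apply hat_bd (bb (jj m)) (bb_even (jj m)) j (NN m) ⌊E⌋₊ (fun A hA => Nat.le_floor (I4 _ _ hj A hA)) _ (NN_pos m)
  · apply Real.le_sqrt_of_sq_le
    refine le_trans ?_ hN
    calc ((yy j : ℝ) * ⌊E⌋₊) ^ 2 ≤ (E * E) ^ 2 := by gcongr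
      _ = E ^ 4 := by ring
      _ ≤ E ^ 6 := pow_le_pow_right₀ (by linarith) (by norm_num)
  · have : (4:ℝ) * ⌊E⌋₊ ^ 2 ≤ NN m := by
      refine le_trans ?_ hN
      calc (4:ℝ) * ⌊E⌋₊ ^ 2 ≤ E * E ^ 2 := by gcongr
        _ = E ^ 3 := by ring
        _ ≤ E ^ 6 := pow_le_pow_right₀ (by linarith) (by norm_num)
    exact_mod_cast this

lemma inv_yy_le (j : ℕ) : 1 / (yy j : ℝ) ≤ 2 * Real.exp (-xx j) := by
  rw [div_le_iff₀ (yy_pos j), Real.exp_neg]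
  have := exp_le_two_yy j
  have h := Real.exp_pos (xx j)
  rw [mul_comm 2, mul_assoc, inv_mul_eq_div, le_div_iff₀ h]; linarith

lemma bd_non (j : ℕ) (s : Finset ℕ) (hs : ∀ m ∈ s, 200 ≤ m ∧ j < jj m ∧ xx (jj m) < yy (j + 1)) :
    MaxBd (fun m f => AV (hh (bb (jj m)) j) (NN m) f) s 2 (620 * (KK j * Real.exp (-xx j / 4))) := by
  intro f hf
  have hK := KK_nonneg j
  have h := sup_l2 s (fun m x => ‖AV (hh (bb (jj m)) j) (NN m) f x‖ₑ) _ (fun m hm => non_single m j (hs m hm).1 (hs m hm).2.1 f hf)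
  refine h.trans ?_
  rw [← mul_assoc]
  gcongr
  have hcard : (s.card : ℝ) ≤ 300 * Real.exp (3 / 2 * xx j) := by
    have h1 : s ⊆ range (300 * yy (j + 1)) := by
      intro m hm
      obtain ⟨h1, h2, h3⟩ := hs m hm
      rw [mem_range]
      have h4 := jj_lt m h1
      have : (m:ℝ) < ((300 * yy (j + 1) : ℕ) : ℝ) := by push_cast; linarith
      exact_mod_cast this
    have h2 := card_le_card h1
    rw [card_range] at h2
    have h3 : (s.card : ℝ) ≤ 300 * yy (j + 1) := by exact_mod_cast h2
    have h4 := yy_le (j + 1)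
    rw [xx_succ] at h4
    linarith
  rw [← ENNReal.ofReal_natCast, ENNReal.ofReal_rpow_of_nonneg (by positivity) (by norm_num), ← ENNReal.ofReal_mul (by positivity)]
  apply ENNReal.ofReal_le_ofReal
  rw [← Real.sqrt_eq_rpow]
  have h5 : Real.sqrt s.card ≤ 18 * Real.exp (3 / 4 * xx j) := by
    apply Real.sqrt_le_iff.2 ⟨by positivity, ?_⟩
    refine hcard.trans ?_
    rw [mul_pow, ← Real.exp_nat_mul, show ((2:ℕ):ℝ) * (3 / 4 * xx j) = 3 / 2 * xx j by push_cast; ring]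
    have := Real.exp_pos (3 / 2 * xx j)
    linarith
  have h6 := inv_yy_le j
  calc Real.sqrt s.card * (17 * (KK j / yy j)) = 17 * KK j * (Real.sqrt s.card * (1 / yy j)) := by ring
    _ ≤ 17 * KK j * ((18 * Real.exp (3 / 4 * xx j)) * (2 * Real.exp (-xx j))) := by
      have := yy_pos j
      gcongr
    _ = 612 * (KK j * (Real.exp (3 / 4 * xx j) * Real.exp (-xx j))) := by ring
    _ = 612 * (KK j * Real.exp (-xx j / 4)) := by rw [← Real.exp_add]; congr 3; ring
    _ ≤ _ := by gcongr; norm_num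

lemma AV_supp (h : ℕ → ℝ) (N : ℕ) (f : ℤ → ℂ) (hf : f.support.Finite) : (AV h N f).support.Finite := by
  classical
  refine ((hf.toFinset ×ˢ Icc 1 N).image (fun q => q.1 - (q.2 : ℤ))).finite_toSet.subset ?_
  intro x hx
  by_contra hcon
  apply hx
  rw [AV_apply, sum_eq_zero, mul_zero]
  intro n hn
  have : f (x + n) = 0 := by
    by_contra h0
    apply hcon
    rw [mem_coe, mem_image]
    exact ⟨(x + n, n), by simp only [mem_product, Set.Finite.mem_toFinset]; exact ⟨h0, hn⟩, by simp⟩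
  rw [this, mul_zero]

lemma sum_Icc_block (g : ℕ → ℂ) (K L : ℕ) : ∑ n ∈ Icc 1 (K * L), g n = ∑ k ∈ range K, ∑ n ∈ Icc 1 L, g (n + k * L) := by
  have e : ∀ (M : ℕ) (u : ℕ → ℂ), ∑ n ∈ Icc 1 M, u n = ∑ n ∈ range M, u (n + 1) := by
    intro M u
    rw [show Icc 1 M = Ico 1 (M + 1) by ext; simp, sum_Ico_eq_sum_range]
    refine sum_congr (by simp) fun k _ => by rw [add_comm]
  rw [e, block_sum]
  refine sum_congr rfl fun k _ => ?_
  rw [e]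
  refine sum_congr rfl fun r _ => ?_
  congr 1; ring

lemma AV_block (h : ℕ → ℝ) (K L : ℕ) (hper : ∀ n k, h (n + k * L) = h n) (f : ℤ → ℂ) (x : ℤ) :
    AV h (K * L) f x = (K:ℂ)⁻¹ * ∑ k ∈ range K, AV h L f (x + k * L) := by
  rw [AV_apply, sum_Icc_block]
  simp_rw [AV_apply, hper]
  rw [← mul_sum, ← mul_assoc]
  congr 1
  · push_cast; rw [mul_inv]
  · refine sum_congr rfl fun k _ => sum_congr rfl fun n _ => ?_
    congr 2; push_cast; ring

lemma primorial_dvd {a b : ℕ} (h : a ≤ b) : primorial a ∣ primorial b := by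
  unfold primorial
  apply prod_dvd_prod_of_subset
  intro p hp
  simp only [mem_filter, mem_range] at hp ⊢
  exact ⟨by omega, hp.2⟩

lemma primorial_sq_ge (z : ℕ) (hz : 2 ≤ z) : z ≤ primorial z ^ 2 ∧ 2 ≤ primorial z := by
  obtain ⟨p, hp, h1, h2⟩ := Nat.exists_prime_lt_and_le_two_mul (z / 2) (by omega)
  have hP := primorial_pos z
  have mem : ∀ q, q.Prime → q ≤ z → q ≤ primorial z := by
    intro q hq hqz
    apply Nat.le_of_dvd hP
    unfold primorial
    apply dvd_prod_of_mem
    simp [hq]; omega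
  have h3 := mem p hp (by omega)
  have h4 := mem 2 Nat.prime_two hz
  refine ⟨?_, h4⟩
  nlinarith [Nat.div_add_mod z 2, Nat.mod_lt z (by norm_num : 0 < 2)]

noncomputable def LL (j : ℕ) : ℕ := primorial (yy (j + 1)) ^ 10

lemma LL_dvd (m j : ℕ) (h : (yy (j + 1) : ℝ) ≤ xx (jj m)) : LL j ∣ NN m :=
  (pow_dvd_pow_of_dvd (primorial_dvd (Nat.le_floor h)) 10).trans (QQ_dvd m)

lemma ex_single (j : ℕ) (f : ℤ → ℂ) (hf : f.support.Finite) :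
    nrm 2 (fun x => ‖AV (hh be j) (LL j) f x‖ₑ) ≤
      ENNReal.ofReal (17 * (KK j / yy j)) * nrm 2 (fun x => ‖f x‖ₑ) := by
  have hK := KK_nonneg j
  have hy := yy_pos j
  obtain ⟨h1, h2⟩ := primorial_sq_ge (yy (j + 1)) (two_le_yy _)
  set P := primorial (yy (j + 1)) with hP
  have hL : LL j = P ^ 10 := rfl
  have hL1 : 1 ≤ LL j := by rw [hL]; exact Nat.one_le_pow _ _ (by omega)
  apply AV_l2 _ _ hL1 _ (by positivity) _ f hf
  apply hat_bd be be_even j (LL j) P _ _ hL1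
  · apply Real.le_sqrt_of_sq_le
    have h3 : yy j ≤ P ^ 2 := (yy_mono (by omega)).trans h1
    have : (yy j * P) ^ 2 ≤ LL j := by
      calc (yy j * P) ^ 2 ≤ (P ^ 2 * P) ^ 2 := by gcongr
        _ = P ^ 6 := by ring
        _ ≤ _ := by rw [hL]; exact Nat.pow_le_pow_right (by omega) (by norm_num)
    exact_mod_cast this
  · intro A hA
    exact Nat.le_of_dvd (by omega) ((dd_dvd_of_sub (fam_sub _ _ A hA)).trans (dd_pr_le _))
  · calc 4 * P ^ 2 ≤ P ^ 2 * P ^ 2 := by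
          have : 2 ^ 2 ≤ P ^ 2 := Nat.pow_le_pow_left h2 2
          gcongr
          omega
      _ = P ^ 4 := by ring
      _ ≤ _ := by rw [hL]; exact Nat.pow_le_pow_right (by omega) (by norm_num)

lemma bd_ex (j : ℕ) (s : Finset ℕ) (hs : ∀ m ∈ s, (yy (j + 1) : ℝ) ≤ xx (jj m)) :
    MaxBd (fun m f => AV (hh (bb (jj m)) j) (NN m) f) s 2 (280 * (KK j * Real.exp (-xx j / 4))) := by
  intro f hf
  have hK := KK_nonneg j
  set G : ℤ → ℂ := AV (hh be j) (LL j) f with hG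
  have hGs : (fun y => ‖G y‖).support.Finite := by
    refine (AV_supp (hh be j) (LL j) f hf).subset fun x hx h0 => hx ?_
    simp [hG, h0]
  set K0 := ∑ m ∈ s, NN m with hK0
  have h1 : ∀ x, (⨆ m ∈ s, ‖AV (hh (bb (jj m)) j) (NN m) f x‖ₑ) ≤ HLM (LL j) K0 (fun y => ‖G y‖) x := by
    intro x
    refine iSup₂_le fun m hm => ?_
    obtain ⟨K, hKL⟩ := LL_dvd m j (hs m hm)
    have hK1 : 1 ≤ K := Nat.pos_of_ne_zero (by
      rintro rfl
      have := NN_pos m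
      omega)
    have hLp : 1 ≤ LL j := Nat.one_le_pow _ _ (primorial_pos _)
    have hKK0 : K ≤ K0 := by
      refine le_trans ?_ (single_le_sum (f := NN) (fun _ _ => Nat.zero_le _) hm)
      rw [hKL]; exact Nat.le_mul_of_pos_left _ hLp
    refine le_trans ?_ (le_HLM (LL j) K0 K hK1 hKK0 (fun y => ‖G y‖) x)
    rw [I5 _ _ (hs m hm), hKL, mul_comm (LL j) K, AV_block _ _ _ (fun n k => hh_periodic be j (LL j) n k
      ((dd_pr_le _).trans (dvd_pow_self _ (by norm_num)))), ← ofReal_norm]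
    apply ENNReal.ofReal_le_ofReal
    rw [norm_mul, norm_inv, Complex.norm_natCast, inv_mul_eq_div]
    gcongr
    exact norm_sum_le _ _
  calc _ ≤ _ := nrm_mono 2 (by norm_num) h1
    _ ≤ _ := nrm_HLM 2 (by norm_num) le_rfl _ (fun _ => norm_nonneg _) hGs _ _
    _ = ENNReal.ofReal (8 / (2 - 1)) * nrm 2 (fun x => ‖G x‖ₑ) := by simp_rw [ofReal_norm]
    _ ≤ ENNReal.ofReal (8 / (2 - 1)) * (ENNReal.ofReal (17 * (KK j / yy j)) * nrm 2 (fun x => ‖f x‖ₑ)) := by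
      gcongr
      exact ex_single j f hf
    _ ≤ _ := by
      rw [← mul_assoc, ← ENNReal.ofReal_mul (by norm_num)]
      refine mul_le_mul_left (ENNReal.ofReal_le_ofReal ?_) _
      have h2 := inv_yy_le j
      have h3 : Real.exp (-xx j) ≤ Real.exp (-xx j / 4) := Real.exp_le_exp.2 (by linarith [xx_pos j])
      calc 8 / (2 - 1) * (17 * (KK j / yy j)) = 136 * (KK j * (1 / yy j)) := by ring
        _ ≤ 136 * (KK j * (2 * Real.exp (-xx j / 4))) := by
          gcongr
          linarith
        _ ≤ _ := by
          have : 0 ≤ KK j * Real.exp (-xx j / 4) := by positivity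
          nlinarith

lemma bd_two (j : ℕ) (s : Finset ℕ) (hs : ∀ m ∈ s, 200 ≤ m ∧ j < jj m) :
    MaxBd (fun m f => AV (hh (bb (jj m)) j) (NN m) f) s 2 (1000 * (KK j * Real.exp (-xx j / 4))) := by
  classical
  intro f hf
  have hK := KK_nonneg j
  have h1 := bd_ex j (s.filter (fun m => (yy (j + 1) : ℝ) ≤ xx (jj m))) (fun m hm => (mem_filter.1 hm).2) f hf
  have h2 := bd_non j (s.filter (fun m => ¬ (yy (j + 1) : ℝ) ≤ xx (jj m))) (fun m hm =>
    ⟨(hs m (mem_filter.1 hm).1).1, (hs m (mem_filter.1 hm).1).2, not_le.1 (mem_filter.1 hm).2⟩) f hf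
  refine le_trans ?_ ((nrm_add 2 (by norm_num) _ _).trans ((add_le_add h1 h2).trans ?_))
  · apply nrm_mono 2 (by norm_num)
    intro x
    refine iSup₂_le fun m hm => ?_
    by_cases h : (yy (j + 1) : ℝ) ≤ xx (jj m)
    · refine le_add_of_le_of_nonneg ?_ zero_le
      exact le_iSup₂_of_le (f := fun m (_ : m ∈ s.filter (fun m => (yy (j + 1) : ℝ) ≤ xx (jj m))) =>
        ‖AV (hh (bb (jj m)) j) (NN m) f x‖ₑ) m (mem_filter.2 ⟨hm, h⟩) le_rfl
    · refine le_add_of_nonneg_of_le zero_le ?_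
      exact le_iSup₂_of_le (f := fun m (_ : m ∈ s.filter (fun m => ¬ (yy (j + 1) : ℝ) ≤ xx (jj m))) =>
        ‖AV (hh (bb (jj m)) j) (NN m) f x‖ₑ) m (mem_filter.2 ⟨hm, h⟩) le_rfl
  · rw [← add_mul, ← ENNReal.ofReal_add (by positivity) (by positivity)]
    gcongr
    have : 0 ≤ KK j * Real.exp (-xx j / 4) := by positivity
    linarith

lemma bd_p : ∃ C : ℝ, 0 < C ∧ ∀ p : ℝ, 1 < p → p ≤ 2 → ∀ (j : ℕ) (s : Finset ℕ), (∀ m ∈ s, 200 ≤ m ∧ j < jj m) →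
    MaxBd (fun m f => AV (hh (bb (jj m)) j) (NN m) f) s p (C / (p - 1) * (xx j ^ 3 * Real.exp (-((p - 1) / 8 * xx j)))) := by
  obtain ⟨C, hC, hKC⟩ := KK_le
  refine ⟨1000 * C, by positivity, fun p hp hp2 j s hs => ?_⟩
  have hK := KK_nonneg j
  have hp1 : 0 < p - 1 := by linarith
  set p0 := (1 + p) / 2 with hp0
  set θ := (p - 1) / (p * (2 - p0)) with hθ
  have h2p0 : 0 < 2 - p0 := by rw [hp0]; linarith
  have hden : 0 < p * (2 - p0) := by positivity
  have hθ0 : 0 ≤ θ := by positivity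
  have hθge : (p - 1) / 2 ≤ θ := by
    rw [hθ]
    apply div_le_div_of_nonneg_left hp1.le hden
    rw [hp0]; nlinarith
  have hθ1 : θ ≤ 1 := by
    rw [hθ, div_le_one hden, hp0]; nlinarith
  have hpθ : 1 / p = (1 - θ) / p0 + θ / 2 := by
    rw [hθ]
    have : p0 ≠ 0 := by rw [hp0]; positivity
    field_simp
    rw [hp0]; ring
  have h1 := bd_one p0 (by rw [hp0]; linarith) (by rw [hp0]; linarith) (fun m => bb (jj m)) (fun m => bb_even (jj m)) NN NN_pos j s
  have h2 := bd_two j s hs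
  have hp01 : p0 - 1 = (p - 1) / 2 := by rw [hp0]; ring
  have h3 := interp (fun m => AV (hh (bb (jj m)) j) (NN m)) s p0 2 p θ (16 * KK j / (p0 - 1)) (1000 * (KK j * Real.exp (-xx j / 4)))
    (by rw [hp0]; linarith) (by norm_num) hp hθ0 hθ1 hpθ (by rw [hp01]; positivity) (by positivity) h1 h2
  intro f hf
  refine (h3 f hf).trans ?_
  refine mul_le_mul_left (ENNReal.ofReal_le_ofReal ?_) _
  set G := 1000 * KK j / (p - 1) with hG
  have hG0 : 0 ≤ G := by positivity
  have e1 : 16 * KK j / (p0 - 1) ≤ G := by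
    rw [hp01, hG, div_div_eq_mul_div]
    apply div_le_div_of_nonneg_right _ hp1.le
    linarith
  have e2 : 1000 * (KK j * Real.exp (-xx j / 4)) ≤ G * Real.exp (-xx j / 4) := by
    rw [← mul_assoc]
    gcongr
    rw [hG, le_div_iff₀ hp1]
    nlinarith
  calc (16 * KK j / (p0 - 1)) ^ (1 - θ) * (1000 * (KK j * Real.exp (-xx j / 4))) ^ θ
      ≤ G ^ (1 - θ) * (G * Real.exp (-xx j / 4)) ^ θ := by
        have : 0 ≤ 16 * KK j / (p0 - 1) := by rw [hp01]; positivity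
        have : 0 ≤ 1 - θ := by linarith
        gcongr
    _ = G * Real.exp (-xx j / 4 * θ) := by
        rw [Real.mul_rpow hG0 (Real.exp_pos _).le, ← Real.exp_mul, ← mul_assoc, ← Real.rpow_add_of_nonneg hG0 (by linarith) hθ0]
        rw [sub_add_cancel, Real.rpow_one]
    _ ≤ (1000 * (C * xx j ^ 3) / (p - 1)) * Real.exp (-((p - 1) / 8 * xx j)) := by
        rw [hG]
        have := hKC j
        have hx := xx_pos j
        gcongr
        nlinarith
    _ = _ := by ring

lemma sum_exp (δ : ℝ) (hδ : 0 < δ) (J : ℕ) : ∑ j ∈ range J, xx j ^ 3 * Real.exp (-(δ * xx j)) ≤ 106 / δ ^ 3 := by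
  have key : ∀ u : ℝ, 0 < u → u ^ 3 * Real.exp (-u) ≤ 106 * ((3 / 2 * u) / (1 + 3 / 2 * u) - u / (1 + u)) := by
    intro u hu
    have e : (3 / 2 * u) / (1 + 3 / 2 * u) - u / (1 + u) = (1 / 2 * u) / ((1 + 3 / 2 * u) * (1 + u)) := by
      field_simp; ring
    rw [e, mul_div_assoc', le_div_iff₀ (by positivity), Real.exp_neg]
    have h2 := Real.pow_div_factorial_le_exp u hu.le 2
    have h3 := Real.pow_div_factorial_le_exp u hu.le 3
    have h4 := Real.pow_div_factorial_le_exp u hu.le 4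
    norm_num [Nat.factorial] at h2 h3 h4
    have hE := Real.exp_pos u
    rw [mul_assoc, inv_mul_eq_div, mul_div_assoc', div_le_iff₀ hE]
    have : u ^ 2 + 5 / 2 * u ^ 3 + 3 / 2 * u ^ 4 ≤ 53 * Real.exp u := by nlinarith
    nlinarith
  have h1 : ∀ j, xx j ^ 3 * Real.exp (-(δ * xx j)) ≤ 106 / δ ^ 3 * ((δ * xx (j + 1)) / (1 + δ * xx (j + 1)) - (δ * xx j) / (1 + δ * xx j)) := by
    intro j
    have h := key (δ * xx j) (mul_pos hδ (xx_pos j))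
    rw [xx_succ, show δ * (3 / 2 * xx j) = 3 / 2 * (δ * xx j) by ring, div_mul_eq_mul_div, le_div_iff₀ (by positivity)]
    refine le_trans (le_of_eq ?_) h
    ring
  refine (sum_le_sum fun j _ => h1 j).trans ?_
  rw [← mul_sum, sum_range_sub (fun j => (δ * xx j) / (1 + δ * xx j))]
  apply mul_le_of_le_one_right (by positivity)
  have a1 : 0 < δ * xx J := mul_pos hδ (xx_pos J)
  have a2 : 0 < δ * xx 0 := mul_pos hδ (xx_pos 0)
  have : (δ * xx J) / (1 + δ * xx J) ≤ 1 := by rw [div_le_one (by positivity)]; linarith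
  have : 0 ≤ (δ * xx 0) / (1 + δ * xx 0) := by positivity
  linarith

end PM

namespace PM
open Finset

/-- weighted prime average of a nonnegative function -/
noncomputable def MF (N : ℕ) (F : ℤ → ℝ) (x : ℤ) : ℝ :=
  (theta N)⁻¹ * ∑ p ∈ primesUpTo N, F (x + p) * Real.log p

lemma mem_pU {N p : ℕ} : p ∈ primesUpTo N ↔ p ≤ N ∧ p.Prime := by
  simp [primesUpTo]

lemma log_le_theta (N p : ℕ) (hp : p ∈ primesUpTo N) : Real.log p ≤ theta N := by
  unfold theta
  refine single_le_sum (f := fun p : ℕ => Real.log p) (fun q hq => ?_) hp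
  exact Real.log_natCast_nonneg q

lemma theta_pos (N : ℕ) (hN : 2 ≤ N) : 0 < theta N := by
  refine lt_of_lt_of_le ?_ (log_le_theta N 2 (mem_pU.2 ⟨hN, Nat.prime_two⟩))
  exact_mod_cast Real.log_pos (by norm_num : (1:ℝ) < 2)

lemma avg_le_HLM (N K0 : ℕ) (h1 : 1 ≤ N) (hN : N ≤ K0) (F : ℤ → ℝ) (x : ℤ) :
    ENNReal.ofReal ((∑ n ∈ Icc 1 N, F (x + n)) / N) ≤ HLM 1 K0 F (x + 1) := by
  have h := le_HLM 1 K0 N h1 hN F (x + 1)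
  rw [← sum_Icc_shift N F x 1] at h
  simpa using h

lemma MF_small (N : ℕ) (hN : 2 ≤ N) (F : ℤ → ℝ) (hF : ∀ x, 0 ≤ F x) (x : ℤ) :
    MF N F x ≤ N * ((∑ n ∈ Icc 1 N, F (x + n)) / N) := by
  have hNr : (0:ℝ) < N := by exact_mod_cast (by omega : 0 < N)
  rw [mul_div_cancel₀ _ hNr.ne', MF, inv_mul_le_iff₀ (theta_pos N hN), mul_sum]
  calc ∑ p ∈ primesUpTo N, F (x + p) * Real.log p ≤ ∑ p ∈ primesUpTo N, theta N * F (x + p) := by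
        refine sum_le_sum fun p hp => ?_
        rw [mul_comm]
        exact mul_le_mul_of_nonneg_right (log_le_theta N p hp) (hF _)
    _ ≤ _ := by
        apply sum_le_sum_of_subset_of_nonneg
        · intro p hp
          rw [mem_pU] at hp
          rw [mem_Icc]
          exact ⟨hp.2.one_le, hp.1⟩
        · intros; exact mul_nonneg (theta_pos N hN).le (hF _)

lemma m_yy (m : ℕ) (hm : 200 ≤ m) : (m:ℝ) * yy (jj m) ≤ 2 * 2 ^ m := by
  have h1 := jj_le m hm
  have h2 := yy_le (jj m)
  have h3 : (m:ℝ) ≤ 2 * Real.exp (m / 2) := by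
    have := Real.add_one_le_exp ((m:ℝ) / 2)
    linarith
  have h4 : Real.exp (m / 2) * Real.exp (xx (jj m)) ≤ 2 ^ m := by
    rw [← Real.exp_add, ← Real.exp_log (show (0:ℝ) < 2 ^ m by positivity), Real.log_pow]
    apply Real.exp_le_exp.2
    have := Real.log_two_gt_d9
    have : (0:ℝ) ≤ m := Nat.cast_nonneg m
    nlinarith
  calc (m:ℝ) * yy (jj m) ≤ (2 * Real.exp (m / 2)) * Real.exp (xx (jj m)) := by gcongr
    _ ≤ _ := by linarith

lemma MF_large : ∃ C : ℝ, 0 < C ∧ ∀ m : ℕ, 200 ≤ m → ∀ N : ℕ, N ≤ 2 ^ m → 2 ^ m ≤ 2 * N →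
    ∀ F : ℤ → ℝ, (∀ x, 0 ≤ F x) → ∀ x : ℤ, MF N F x ≤
      C * ((∑ n ∈ Icc 1 (yy (jj m)), F (x + n)) / (yy (jj m) : ℕ)) +
      C * ((NN m : ℝ)⁻¹ * ∑ n ∈ Icc 1 (NN m), gg (bb (jj m)) (jj m) n * F (x + n)) := by
  obtain ⟨c, hc, hth⟩ := theta_lower
  obtain ⟨c', hc', hgg⟩ := gg_prime_ge
  refine ⟨4 / c + 1200 / (c * c'), by positivity, fun m hm N hN hN2 F hF x => ?_⟩
  set J := jj m with hJ
  have h2m : (0:ℝ) < 2 ^ m := by positivity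
  have hNge2 : 2 ≤ N := by
    have : 2 ^ 2 ≤ 2 ^ m := Nat.pow_le_pow_right (by norm_num) (by omega)
    omega
  have hNr : (2:ℝ) ^ m ≤ 2 * N := by exact_mod_cast hN2
  have hth' := hth N hNge2
  have hthpos := theta_pos N hNge2
  have hmr : (200:ℝ) ≤ m := by exact_mod_cast hm
  set S1 := ∑ n ∈ Icc 1 (yy J), F (x + n) with hS1
  set S2 := ∑ n ∈ Icc 1 (NN m), gg (bb J) J n * F (x + n) with hS2
  have hg0 : ∀ n, 0 ≤ gg (bb J) J n := fun n => gg_nonneg _ (bb_even J) J n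
  have hS10 : 0 ≤ S1 := sum_nonneg fun _ _ => hF _
  have hS20 : 0 ≤ S2 := sum_nonneg fun n _ => mul_nonneg (hg0 n) (hF _)
  have hy := yy_pos J
  have hNNp : (0:ℝ) < NN m := by exact_mod_cast NN_pos m
  have hNNle : (NN m : ℝ) ≤ 2 * 2 ^ m := by exact_mod_cast NN_le m hm
  have hmx := jj_lt m hm
  have e1 : ∑ p ∈ primesUpTo N, F (x + p) * Real.log p ≤ m * S1 + 300 / c' * S2 := by
    have hterm : ∀ p ∈ primesUpTo N, F (x + p) * Real.log p ≤
        (if p ≤ yy J then m * F (x + p) else 0) + (if p ≤ yy J then 0 else 300 / c' * (gg (bb J) J p * F (x + p))) := by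
      intro p hp
      rw [mem_pU] at hp
      have hlog : Real.log p ≤ m := by
        have hp0 : (0:ℝ) < p := by exact_mod_cast hp.2.pos
        have : (p:ℝ) ≤ 2 ^ m := by exact_mod_cast hp.1.trans hN
        have h3 := Real.log_le_log hp0 this
        rw [Real.log_pow] at h3
        have := Real.log_two_lt_d9
        nlinarith
      split_ifs with h
      · rw [add_zero, mul_comm]
        exact mul_le_mul_of_nonneg_right hlog (hF _)
      · rw [zero_add, ← mul_assoc, mul_comm]
        apply mul_le_mul_of_nonneg_right _ (hF _)
        have h4 := hgg J p hp.2 (not_le.1 h)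
        have h5 : xx J ≤ gg (bb J) J p / c' := by
          rw [le_div_iff₀ hc']; linarith
        calc Real.log p ≤ 300 * xx J := by linarith
          _ ≤ 300 * (gg (bb J) J p / c') := by linarith
          _ = _ := by ring
    refine (sum_le_sum hterm).trans ?_
    rw [sum_add_distrib]
    apply add_le_add
    · rw [← sum_filter, hS1, mul_sum]
      apply sum_le_sum_of_subset_of_nonneg
      · intro p hp
        rw [mem_filter, mem_pU] at hp
        rw [mem_Icc]
        exact ⟨hp.1.2.one_le, hp.2⟩
      · intros; exact mul_nonneg (by positivity) (hF _)
    · have : ∀ p, (if p ≤ yy J then 0 else 300 / c' * (gg (bb J) J p * F (x + p))) ≤ 300 / c' * (gg (bb J) J p * F (x + p)) := by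
        intro p
        have : 0 ≤ 300 / c' * (gg (bb J) J p * F (x + p)) := mul_nonneg (by positivity) (mul_nonneg (hg0 p) (hF _))
        split_ifs
        · exact this
        · exact le_rfl
      refine (sum_le_sum fun p _ => this p).trans ?_
      rw [hS2, mul_sum]
      apply sum_le_sum_of_subset_of_nonneg
      · intro p hp
        rw [mem_pU] at hp
        rw [mem_Icc]
        exact ⟨hp.2.one_le, hp.1.trans (hN.trans (NN_ge m))⟩
      · intro p _ _
        exact mul_nonneg (by positivity) (mul_nonneg (hg0 p) (hF _))
  have e2 : (theta N)⁻¹ ≤ 2 / c * (2 ^ m)⁻¹ := by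
    rw [inv_le_iff_one_le_mul₀ hthpos, ← div_eq_mul_inv, div_mul_eq_mul_div, le_div_iff₀ h2m, one_mul,
      div_mul_eq_mul_div, le_div_iff₀ hc]
    nlinarith
  have e3 : ((2:ℝ) ^ m)⁻¹ ≤ 2 * (NN m : ℝ)⁻¹ := by
    rw [← div_eq_mul_inv, le_div_iff₀ hNNp, inv_mul_le_iff₀ h2m]; linarith
  have e4 : (2 ^ m : ℝ)⁻¹ * m ≤ 2 / yy J := by
    rw [le_div_iff₀ hy, mul_assoc, inv_mul_le_iff₀ h2m]
    linarith [m_yy m hm]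
  have hcc : 0 < c * c' := by positivity
  calc MF N F x ≤ (2 / c * (2 ^ m)⁻¹) * (m * S1 + 300 / c' * S2) := by
        unfold MF
        have : 0 ≤ ∑ p ∈ primesUpTo N, F (x + p) * Real.log p :=
          sum_nonneg fun p _ => mul_nonneg (hF _) (Real.log_natCast_nonneg p)
        gcongr
    _ = 2 / c * ((2 ^ m : ℝ)⁻¹ * m) * S1 + 600 / (c * c') * (2 ^ m : ℝ)⁻¹ * S2 := by
        field_simp; ring
    _ ≤ 2 / c * (2 / yy J) * S1 + 600 / (c * c') * (2 * (NN m : ℝ)⁻¹) * S2 := by gcongr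
    _ = (4 / c) * (S1 / yy J) + (1200 / (c * c')) * ((NN m : ℝ)⁻¹ * S2) := by ring
    _ ≤ _ := by
        have a1 : 0 < 4 / c := by positivity
        have a2 : 0 < 1200 / (c * c') := by positivity
        gcongr <;> linarith

/-- scales used for level `j` -/
noncomputable def sc (m0 j : ℕ) : Finset ℕ := (Icc 200 m0).filter (fun m => j < jj m)

lemma ptw : ∃ C : ℝ, 0 < C ∧ ∀ (m0 : ℕ) (F : ℤ → ℝ), (∀ x, 0 ≤ F x) → ∀ N : ℕ, 2 ≤ N → N ≤ 2 ^ m0 → ∀ x : ℤ,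
    ENNReal.ofReal (MF N F x) ≤ ENNReal.ofReal C * HLM 1 (2 ^ (m0 + 1)) F (x + 1) +
      ENNReal.ofReal C * ∑ j ∈ range (∑ m ∈ Icc 200 m0, jj m),
        ⨆ m ∈ sc m0 j, ‖AV (hh (bb (jj m)) j) (NN m) (fun y => (F y : ℂ)) x‖ₑ := by
  obtain ⟨C, hC, hl⟩ := MF_large
  refine ⟨2 ^ 200 + 2 * C, by positivity, fun m0 F hF N hN hNm x => ?_⟩
  set H := HLM 1 (2 ^ (m0 + 1)) F (x + 1) with hH
  have hpow : 2 ^ (m0 + 1) = 2 * 2 ^ m0 := by ring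
  by_cases hs : N ≤ 2 ^ 200
  · refine le_add_of_le_of_nonneg ?_ zero_le
    have h1 := avg_le_HLM N (2 ^ (m0 + 1)) (by omega) (by omega) F x
    refine le_trans ?_ (mul_le_mul_right h1 _)
    rw [← ENNReal.ofReal_mul (by positivity)]
    apply ENNReal.ofReal_le_ofReal
    refine (MF_small N hN F hF x).trans ?_
    have : (N:ℝ) ≤ 2 ^ 200 := by exact_mod_cast hs
    apply mul_le_mul_of_nonneg_right (by linarith)
    exact div_nonneg (sum_nonneg fun _ _ => hF _) (Nat.cast_nonneg _)
  · set m := Nat.clog 2 N with hm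
    have hm1 : N ≤ 2 ^ m := Nat.le_pow_clog (by norm_num) N
    have hm2 : 2 ^ (m - 1) < N := Nat.pow_pred_clog_lt_self (by norm_num) (by omega)
    have hm200 : 200 ≤ m := by
      by_contra h
      apply hs
      exact hm1.trans (Nat.pow_le_pow_right (by norm_num) (by omega))
    have hmm0 : m ≤ m0 := Nat.clog_le_of_le_pow hNm
    have hm3 : 2 ^ m ≤ 2 * N := by
      obtain ⟨k, hk⟩ : ∃ k, m = k + 1 := ⟨m - 1, by omega⟩
      rw [hk] at hm2 ⊢
      rw [Nat.add_sub_cancel] at hm2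
      rw [pow_succ]; omega
    have h2m : 2 ^ m ≤ 2 ^ m0 := Nat.pow_le_pow_right (by norm_num) hmm0
    have hNNle := NN_le m hm200
    set J := jj m with hJ
    have hyN : yy J ≤ 2 ^ (m0 + 1) := by
      have h1 := m_yy m hm200
      have h2 : (m:ℝ) * yy J ≤ ((2 * 2 ^ m : ℕ) : ℝ) := by push_cast; exact h1
      have h3 : m * yy J ≤ 2 * 2 ^ m := by exact_mod_cast h2
      nlinarith
    have ha1 := avg_le_HLM (yy J) (2 ^ (m0 + 1)) (by have := two_le_yy J; omega) hyN F x
    have ha2 := avg_le_HLM (NN m) (2 ^ (m0 + 1)) (NN_pos m) (by omega) F x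
    set A1 := (∑ n ∈ Icc 1 (yy J), F (x + n)) / (yy J : ℕ) with hA1
    set A2 := (∑ n ∈ Icc 1 (NN m), F (x + n)) / (NN m : ℕ) with hA2
    have hA10 : 0 ≤ A1 := div_nonneg (sum_nonneg fun _ _ => hF _) (Nat.cast_nonneg _)
    have hA20 : 0 ≤ A2 := div_nonneg (sum_nonneg fun _ _ => hF _) (Nat.cast_nonneg _)
    have e1 : (NN m : ℝ)⁻¹ * ∑ n ∈ Icc 1 (NN m), gg (bb J) J n * F (x + n) ≤
        A2 + ∑ j ∈ range J, ‖AV (hh (bb J) j) (NN m) (fun y => (F y : ℂ)) x‖ := by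
      simp_rw [gg_telescope, add_mul, one_mul, sum_mul]
      rw [sum_add_distrib, mul_add, sum_comm]
      apply add_le_add
      · rw [hA2, inv_mul_eq_div]
      · rw [mul_sum]
        refine sum_le_sum fun j _ => ?_
        rw [AV_apply]
        refine le_trans (Complex.re_le_norm _ |>.trans' (le_of_eq ?_)) le_rfl
        have : ((NN m : ℂ)⁻¹ * ∑ n ∈ Icc 1 (NN m), (hh (bb J) j n : ℂ) * (F (x + n) : ℂ)) =
            (((NN m : ℝ)⁻¹ * ∑ n ∈ Icc 1 (NN m), hh (bb J) j n * F (x + n) : ℝ) : ℂ) := by push_cast; rfl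
        rw [this, Complex.ofReal_re]
    have e2 := hl m hm200 N hm1 hm3 F hF x
    set T := ∑ j ∈ range J, ‖AV (hh (bb J) j) (NN m) (fun y => (F y : ℂ)) x‖ with hT
    have hT0 : 0 ≤ T := sum_nonneg fun _ _ => norm_nonneg _
    have e3 : MF N F x ≤ C * A1 + C * A2 + C * T := by nlinarith
    have e4 : ENNReal.ofReal T ≤ ∑ j ∈ range (∑ m ∈ Icc 200 m0, jj m),
        ⨆ m ∈ sc m0 j, ‖AV (hh (bb (jj m)) j) (NN m) (fun y => (F y : ℂ)) x‖ₑ := by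
      rw [hT, ENNReal.ofReal_sum_of_nonneg fun _ _ => norm_nonneg _]
      have hmm : m ∈ Icc 200 m0 := mem_Icc.2 ⟨hm200, hmm0⟩
      have hsub : range J ⊆ range (∑ m ∈ Icc 200 m0, jj m) :=
        range_subset_range.2 (single_le_sum (f := jj) (fun _ _ => Nat.zero_le _) hmm)
      refine le_trans (sum_le_sum fun j hj => ?_) (sum_le_sum_of_subset hsub)
      rw [ofReal_norm]
      exact le_iSup₂_of_le (f := fun m (_ : m ∈ sc m0 j) => ‖AV (hh (bb (jj m)) j) (NN m) (fun y => (F y : ℂ)) x‖ₑ) m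
        (mem_filter.2 ⟨hmm, mem_range.1 hj⟩) le_rfl
    refine (ENNReal.ofReal_le_ofReal e3).trans ?_
    rw [ENNReal.ofReal_add (by positivity) (by positivity), ENNReal.ofReal_add (by positivity) (by positivity),
      ENNReal.ofReal_mul hC.le, ENNReal.ofReal_mul hC.le, ENNReal.ofReal_mul hC.le]
    apply add_le_add
    · calc _ ≤ ENNReal.ofReal C * H + ENNReal.ofReal C * H := by gcongr
        _ = ENNReal.ofReal (2 * C) * H := by
          rw [← add_mul, ← ENNReal.ofReal_add hC.le hC.le]; congr 2; ring
        _ ≤ _ := by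
          gcongr
          linarith [show (0:ℝ) < 2 ^ 200 by positivity]
    · refine mul_le_mul' (ENNReal.ofReal_le_ofReal ?_) e4
      linarith [show (0:ℝ) < 2 ^ 200 by positivity]

theorem fin_main : ∃ C : ℝ, 0 < C ∧ ∀ p : ℝ, 1 < p → p ≤ 2 → ∀ F : ℤ → ℝ, (∀ x, 0 ≤ F x) → F.support.Finite →
    ∀ m0 : ℕ, nrm p (fun x => ⨆ N ∈ Icc 2 (2 ^ m0), ENNReal.ofReal (MF N F x)) ≤
      ENNReal.ofReal (C * (p - 1)⁻¹ ^ 4) * nrm p (fun x => ENNReal.ofReal (F x)) := by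
  obtain ⟨C, hC, hptw⟩ := ptw
  obtain ⟨C', hC', hbd⟩ := bd_p
  refine ⟨C * 8 + C * (C' * (106 * 512)), by positivity, fun p hp hp2 F hF hfin m0 => ?_⟩
  have hp1 : 0 < p - 1 := by linarith
  set J0 := ∑ m ∈ Icc 200 m0, jj m with hJ0
  set f : ℤ → ℂ := fun y => (F y : ℂ) with hf
  have hfs : f.support.Finite := by
    refine hfin.subset fun x hx h0 => hx ?_
    simp [hf, h0]
  have hfF : (fun x => ‖f x‖ₑ) = fun x => ENNReal.ofReal (F x) := by
    funext x
    rw [← ofReal_norm, hf, Complex.norm_real, Real.norm_of_nonneg (hF x)]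
  set R := nrm p (fun x => ENNReal.ofReal (F x)) with hR
  set w : ℕ → ℝ := fun j => C' / (p - 1) * (xx j ^ 3 * Real.exp (-((p - 1) / 8 * xx j))) with hw
  have hw0 : ∀ j, 0 ≤ w j := fun j => by
    have := xx_pos j
    positivity
  have hb : ∀ j, nrm p (fun x => ⨆ m ∈ sc m0 j, ‖AV (hh (bb (jj m)) j) (NN m) f x‖ₑ) ≤ ENNReal.ofReal (w j) * R := by
    intro j
    have := hbd p hp hp2 j (sc m0 j) (fun m hm => ⟨(mem_Icc.1 (mem_filter.1 hm).1).1, (mem_filter.1 hm).2⟩) f hfs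
    rw [hfF] at this
    exact this
  have hws : ∑ j ∈ range J0, w j ≤ C' * (106 * 512) * (p - 1)⁻¹ ^ 4 := by
    rw [hw, ← mul_sum]
    have h := sum_exp ((p - 1) / 8) (by positivity) J0
    calc _ ≤ C' / (p - 1) * (106 / ((p - 1) / 8) ^ 3) := by gcongr
      _ = _ := by field_simp; ring
  have h1inv : 1 ≤ (p - 1)⁻¹ := (one_le_inv₀ hp1).2 (by linarith)
  calc _ ≤ nrm p (fun x => ENNReal.ofReal C * HLM 1 (2 ^ (m0 + 1)) F (x + 1) +
      ENNReal.ofReal C * ∑ j ∈ range J0, ⨆ m ∈ sc m0 j, ‖AV (hh (bb (jj m)) j) (NN m) f x‖ₑ) := by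
        apply nrm_mono p (by linarith)
        intro x
        refine iSup₂_le fun N hN => ?_
        rw [mem_Icc] at hN
        exact hptw m0 F hF N hN.1 hN.2 x
    _ ≤ ENNReal.ofReal C * (ENNReal.ofReal (8 / (p - 1)) * R) + ENNReal.ofReal C * ∑ j ∈ range J0, ENNReal.ofReal (w j) * R := by
        refine (nrm_add p hp.le _ _).trans ?_
        rw [nrm_const_mul p (by linarith) _ (fun x => HLM 1 (2 ^ (m0 + 1)) F (x + 1)),
          nrm_const_mul p (by linarith) _ (fun x => ∑ j ∈ range J0, ⨆ m ∈ sc m0 j, ‖AV (hh (bb (jj m)) j) (NN m) f x‖ₑ),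
          nrm_shift p (HLM 1 (2 ^ (m0 + 1)) F)]
        gcongr
        · exact nrm_HLM p hp hp2 F hF hfin _ _
        · exact (nrm_sum p hp.le _ _).trans (sum_le_sum fun j _ => hb j)
    _ = ENNReal.ofReal (C * (8 / (p - 1)) + C * ∑ j ∈ range J0, w j) * R := by
        have hs0 : 0 ≤ ∑ j ∈ range J0, w j := sum_nonneg fun j _ => hw0 j
        rw [ENNReal.ofReal_add (mul_nonneg hC.le (div_nonneg (by norm_num) hp1.le)) (mul_nonneg hC.le hs0), ENNReal.ofReal_mul hC.le, ENNReal.ofReal_mul hC.le,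
          ENNReal.ofReal_sum_of_nonneg fun j _ => hw0 j, add_mul, ← sum_mul]
        ring
    _ ≤ _ := by
        refine mul_le_mul_left (ENNReal.ofReal_le_ofReal ?_) _
        have h2 : (p - 1)⁻¹ ≤ (p - 1)⁻¹ ^ 4 := le_self_pow₀ h1inv (by norm_num)
        calc C * (8 / (p - 1)) + C * ∑ j ∈ range J0, w j
            ≤ C * (8 * (p - 1)⁻¹ ^ 4) + C * (C' * (106 * 512) * (p - 1)⁻¹ ^ 4) := by
              rw [div_eq_mul_inv]
              gcongr
          _ = _ := by ring

lemma nrm_iSup (p : ℝ) (hp : 0 < p) (G : ℕ → ℤ → ENNReal) (hG : Monotone G) (B : ENNReal)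
    (h : ∀ R, nrm p (G R) ≤ B) : nrm p (fun x => ⨆ R, G R x) ≤ B := by
  rw [nrm_le_iff p hp]
  intro Y
  rw [one_div, ENNReal.rpow_inv_le_iff hp]
  have h1 : ∀ x, (⨆ R, G R x) ^ p = ⨆ R, G R x ^ p := fun x =>
    (ENNReal.orderIsoRpow p hp).map_iSup (fun R => G R x)
  simp_rw [h1]
  rw [ENNReal.finsetSum_iSup_of_monotone]
  · refine iSup_le fun R => ?_
    rw [← ENNReal.rpow_inv_le_iff hp, ← one_div]
    exact (nrm_finset_le p hp _ Y).trans (h R)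
  · intro x R R' hR
    have := hG hR x
    simp only
    gcongr

lemma MF_mono (N : ℕ) {F G : ℤ → ℝ} (h : ∀ x, F x ≤ G x) (x : ℤ) : MF N F x ≤ MF N G x := by
  unfold MF
  have h0 : 0 ≤ theta N := sum_nonneg fun p _ => Real.log_natCast_nonneg p
  gcongr with p hp
  exact h _

lemma wpa_le (f : ℤ → ℂ) (N : ℕ) (x : ℤ) : ‖weightedPrimeAvg f N x‖ ≤ MF N (fun y => ‖f y‖) x := by
  unfold weightedPrimeAvg MF
  have h0 : 0 ≤ theta N := sum_nonneg fun p _ => Real.log_natCast_nonneg p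
  rw [norm_mul, norm_inv, Complex.norm_real, Real.norm_of_nonneg h0]
  gcongr
  refine (norm_sum_le _ _).trans (le_of_eq (sum_congr rfl fun p _ => ?_))
  rw [norm_mul, Complex.norm_real, Real.norm_of_nonneg (Real.log_natCast_nonneg p)]

theorem main_ennreal : ∃ C : ℝ, 0 < C ∧ ∀ p : ℝ, 1 < p → p ≤ 2 → ∀ F : ℤ → ℝ, (∀ x, 0 ≤ F x) →
    nrm p (fun x => ⨆ (N : ℕ) (_ : 2 ≤ N), ENNReal.ofReal (MF N F x)) ≤
      ENNReal.ofReal (C * (p - 1)⁻¹ ^ 4) * nrm p (fun x => ENNReal.ofReal (F x)) := by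
  obtain ⟨C, hC, hmain⟩ := fin_main
  refine ⟨C, hC, fun p hp hp2 F hF => ?_⟩
  set FR : ℕ → ℤ → ℝ := fun R x => if |x| ≤ R then F x else 0 with hFR
  have hFR0 : ∀ R x, 0 ≤ FR R x := fun R x => by
    simp only [hFR]; split_ifs; exacts [hF x, le_rfl]
  have hFRF : ∀ R x, FR R x ≤ F x := fun R x => by
    simp only [hFR]; split_ifs; exacts [le_rfl, hF x]
  have hFRm : ∀ R R', R ≤ R' → ∀ x, FR R x ≤ FR R' x := fun R R' h x => by
    by_cases hx : |x| ≤ R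
    · have : |x| ≤ R' := hx.trans (by exact_mod_cast h)
      simp [hFR, hx, this]
    · have : FR R x = 0 := by simp [hFR, hx]
      rw [this]; exact hFR0 _ _
  have hFRs : ∀ R, (FR R).support.Finite := fun R => by
    refine (Set.finite_Icc (-(R:ℤ)) R).subset fun x hx => ?_
    by_contra h
    apply hx
    simp only [hFR]
    rw [if_neg]
    rw [abs_le]; exact h
  set G : ℕ → ℤ → ENNReal := fun R x => ⨆ N ∈ Icc 2 (2 ^ R), ENNReal.ofReal (MF N (FR R) x) with hG
  have hGm : Monotone G := by
    intro R R' h x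
    refine iSup₂_le fun N hN => ?_
    refine (ENNReal.ofReal_le_ofReal (MF_mono N (hFRm R R' h) x)).trans ?_
    refine le_iSup₂_of_le (f := fun N (_ : N ∈ Icc 2 (2 ^ R')) => ENNReal.ofReal (MF N (FR R') x)) N ?_ le_rfl
    rw [mem_Icc] at hN ⊢
    exact ⟨hN.1, hN.2.trans (Nat.pow_le_pow_right (by norm_num) h)⟩
  refine le_trans ?_ (nrm_iSup p (by linarith) G hGm _ fun R => (hmain p hp hp2 (FR R) (hFR0 R) (hFRs R) R).trans ?_)
  · apply nrm_mono p (by linarith)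
    intro x
    refine iSup₂_le fun N hN => ?_
    refine le_iSup_of_le (x.natAbs + N) ?_
    have e : MF N F x = MF N (FR (x.natAbs + N)) x := by
      unfold MF
      congr 1
      refine sum_congr rfl fun q hq => ?_
      rw [mem_pU] at hq
      simp only [hFR]
      rw [if_pos]
      have := hq.1
      rw [abs_le]; omega
    rw [e]
    refine le_iSup₂_of_le (f := fun N' (_ : N' ∈ Icc 2 (2 ^ (x.natAbs + N))) => ENNReal.ofReal (MF N' (FR (x.natAbs + N)) x)) N ?_ le_rfl
    rw [mem_Icc]
    refine ⟨hN, ?_⟩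
    exact (Nat.le_add_left N x.natAbs).trans (Nat.lt_two_pow_self).le
  · gcongr
    apply nrm_mono p (by linarith)
    intro x
    exact ENNReal.ofReal_le_ofReal (hFRF R x)

theorem main_real : ∃ C : ℝ, 0 < C ∧
      ∀ (p : ℝ), 1 < p → p ≤ 2 →
        ∀ (f : ℤ → ℂ), Summable (fun x : ℤ => ‖f x‖ ^ p) →
          (∑' x : ℤ, (⨆ (N : ℕ) (_ : 2 ≤ N), ‖weightedPrimeAvg f N x‖) ^ p) ^ (1 / p) ≤
            C * (p - 1)⁻¹ ^ 4 * (∑' x : ℤ, ‖f x‖ ^ p) ^ (1 / p) := by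
  obtain ⟨C, hC, hmain⟩ := main_ennreal
  refine ⟨C, hC, fun p hp hp2 f hf => ?_⟩
  have hp0 : 0 < p := by linarith
  have hp1 : 0 < p - 1 := by linarith
  set S : ℤ → ℝ := fun x => ⨆ (N : ℕ) (_ : 2 ≤ N), ‖weightedPrimeAvg f N x‖ with hS
  have hS0 : ∀ x, 0 ≤ S x := fun x => Real.iSup_nonneg fun N => Real.iSup_nonneg fun _ => norm_nonneg _
  set Sf := ∑' x : ℤ, ‖f x‖ ^ p with hSf
  have hSf0 : 0 ≤ Sf := tsum_nonneg fun x => by positivity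
  set B := C * (p - 1)⁻¹ ^ 4 * Sf ^ (1 / p) with hB
  have hB0 : 0 ≤ B := by positivity
  set E : ℤ → ENNReal := fun x => ⨆ (N : ℕ) (_ : 2 ≤ N), ENNReal.ofReal (MF N (fun y => ‖f y‖) x) with hE
  have hSE : ∀ x, ENNReal.ofReal (S x) ≤ E x := by
    intro x
    by_cases htop : E x = ⊤
    · rw [htop]; exact le_top
    · rw [ENNReal.ofReal_le_iff_le_toReal htop]
      refine Real.iSup_le (fun N => Real.iSup_le (fun hN => ?_) ENNReal.toReal_nonneg) ENNReal.toReal_nonneg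
      rw [← ENNReal.ofReal_le_iff_le_toReal htop]
      refine (ENNReal.ofReal_le_ofReal (wpa_le f N x)).trans ?_
      exact le_iSup₂_of_le (f := fun N (_ : 2 ≤ N) => ENNReal.ofReal (MF N (fun y => ‖f y‖) x)) N hN le_rfl
  have hEn : nrm p E ≤ ENNReal.ofReal B := by
    refine (hmain p hp hp2 (fun y => ‖f y‖) (fun _ => norm_nonneg _)).trans (le_of_eq ?_)
    rw [hB, ENNReal.ofReal_mul (p := C * (p - 1)⁻¹ ^ 4) (by positivity)]
    congr 1
    rw [nrm, ← ENNReal.ofReal_rpow_of_nonneg hSf0 (by positivity), hSf, ENNReal.ofReal_tsum_of_nonneg (fun x => by positivity) hf]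
    congr 2
    funext x
    rw [ENNReal.ofReal_rpow_of_nonneg (norm_nonneg _) hp0.le]
  have hfin : ∀ Y : Finset ℤ, ∑ x ∈ Y, S x ^ p ≤ B ^ p := by
    intro Y
    have h1 : (∑ x ∈ Y, ENNReal.ofReal (S x) ^ p) ^ (1 / p) ≤ ENNReal.ofReal B := by
      refine le_trans ?_ ((nrm_finset_le p hp0 E Y).trans hEn)
      gcongr with x hx
      exact hSE x
    rw [one_div, ENNReal.rpow_inv_le_iff hp0, ENNReal.ofReal_rpow_of_nonneg hB0 hp0.le] at h1
    simp_rw [fun x => ENNReal.ofReal_rpow_of_nonneg (hS0 x) hp0.le] at h1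
    rw [← ENNReal.ofReal_sum_of_nonneg (fun x _ => Real.rpow_nonneg (hS0 x) _)] at h1
    rwa [ENNReal.ofReal_le_ofReal_iff (by positivity)] at h1
  have ht : ∑' x, S x ^ p ≤ B ^ p := Real.tsum_le_of_sum_le (fun x => Real.rpow_nonneg (hS0 x) _) hfin
  calc (∑' x, S x ^ p) ^ (1 / p) ≤ (B ^ p) ^ (1 / p) := by
        have : 0 ≤ ∑' x, S x ^ p := tsum_nonneg fun x => Real.rpow_nonneg (hS0 x) _
        gcongr
    _ = B := by rw [← Real.rpow_mul hB0, mul_one_div_cancel hp0.ne', Real.rpow_one]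

end PM

/-- `ℓ^p` bound, `1 < p ≤ 2`, for the maximal function of the weighted averages along the
primes: `‖sup_{N ≥ 2} |ℳ_N f|‖_{ℓ^p} ≤ C (p−1)⁻⁴ ‖f‖_{ℓ^p}`. -/
theorem stmt_18 :
    ∃ C : ℝ, 0 < C ∧
      ∀ (p : ℝ), 1 < p → p ≤ 2 →
        ∀ (f : ℤ → ℂ), Summable (fun x : ℤ => ‖f x‖ ^ p) →
          (∑' x : ℤ, (⨆ (N : ℕ) (_ : 2 ≤ N), ‖weightedPrimeAvg f N x‖) ^ p) ^ (1 / p) ≤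
            C * (p - 1)⁻¹ ^ 4 * (∑' x : ℤ, ‖f x‖ ^ p) ^ (1 / p) := by
  exact PM.main_real
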